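/- Let n and r be coprime positive integers with n > r, n ≥ 10 and n even, and let ε > 0. Then there exists a constant C, depending only on n and ε, such that for every real H ≥ 1 the number of pairs (a_r, a_n) ∈ ℤ² with |a_r| ≤ H, |a_n| ≤ H and such that the Galois group of the splitting field of X^n + a_rX^{n-r} + a_n over ℚ is not isomorphic to S_n is at most C·H^{1+1/n+ε}. -/

import Mathlib

open Polynomial

namespace CTri

/-- Positive integers at most `Z` all of whose prime factors divide `N`. -/
noncomputable def smoothSet (N Z : ℕ) : Finset ℕ :=
  (Finset.Icc 1 Z).filter (fun m => m.primeFactors ⊆ N.primeFactors)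

lemma prod_rankin_le (ε : ℝ) (hε : 0 < ε) : ∃ C : ℝ, 0 < C ∧ ∀ N : ℕ, 1 ≤ N →
    ∏ p ∈ N.primeFactors, (1 - (p : ℝ) ^ (-ε))⁻¹ ≤ C * (N : ℝ) ^ ε := by
  set K : ℝ := (1 - (2 : ℝ) ^ (-ε))⁻¹ with hK
  have h2 : (2 : ℝ) ^ (-ε) < 1 := Real.rpow_lt_one_of_one_lt_of_neg (by norm_num) (by linarith)
  have h20 : (0 : ℝ) < (2 : ℝ) ^ (-ε) := by positivity
  have hK1 : 1 ≤ K := by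
    rw [hK]; apply (one_le_inv₀ (by linarith)).2; linarith
  set B : ℕ := ⌈(2 : ℝ) ^ (1 / ε)⌉₊ with hB
  refine ⟨K ^ B, by positivity, fun N hN => ?_⟩
  have hfac : ∀ p ∈ N.primeFactors, (1 - (p : ℝ) ^ (-ε))⁻¹ ≤
      (if p < B then K else 1) * (p : ℝ) ^ ε := by
    intro p hp
    have hpp := Nat.prime_of_mem_primeFactors hp
    have hp2 : (2 : ℝ) ≤ p := by exact_mod_cast hpp.two_le
    have hp0 : (0 : ℝ) < p := by linarith
    have hple : (p : ℝ) ^ (-ε) ≤ (2 : ℝ) ^ (-ε) :=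
      Real.rpow_le_rpow_of_nonpos (by norm_num) hp2 (by linarith)
    have hpε1 : 1 ≤ (p : ℝ) ^ ε := Real.one_le_rpow (by linarith) hε.le
    split_ifs with h
    · calc (1 - (p : ℝ) ^ (-ε))⁻¹ ≤ K := by
            rw [hK]; apply inv_anti₀ <;> linarith
        _ ≤ K * (p : ℝ) ^ ε := le_mul_of_one_le_right (by linarith) hpε1
    · push Not at h
      have hpB : (2 : ℝ) ^ (1 / ε) ≤ p := (Nat.le_ceil _).trans (by exact_mod_cast h)
      have h2p : (2 : ℝ) ≤ (p : ℝ) ^ ε := by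
        have := Real.rpow_le_rpow (by positivity) hpB hε.le
        rwa [← Real.rpow_mul (by norm_num), one_div_mul_cancel hε.ne', Real.rpow_one] at this
      rw [Real.rpow_neg hp0.le, one_mul]
      have ht : 0 < (p : ℝ) ^ ε := by linarith
      have : 1 - ((p : ℝ) ^ ε)⁻¹ = ((p : ℝ) ^ ε - 1) / (p : ℝ) ^ ε := by field_simp
      rw [this, inv_div, div_le_iff₀ (by linarith)]
      nlinarith
  have hpos : ∀ p ∈ N.primeFactors, 0 ≤ (1 - (p : ℝ) ^ (-ε))⁻¹ := by
    intro p hp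
    have hpp := Nat.prime_of_mem_primeFactors hp
    have hp2 : (2 : ℝ) ≤ p := by exact_mod_cast hpp.two_le
    have : (p : ℝ) ^ (-ε) ≤ 1 :=
      Real.rpow_le_one_of_one_le_of_nonpos (by linarith) (by linarith)
    exact inv_nonneg.2 (by linarith)
  refine (Finset.prod_le_prod hpos hfac).trans ?_
  rw [Finset.prod_mul_distrib]
  gcongr
  · rw [Finset.prod_ite, Finset.prod_const_one, mul_one, Finset.prod_const]
    apply pow_le_pow_right₀ hK1
    calc _ ≤ (Finset.range B).card := Finset.card_le_card (by
            intro p hp; simp at hp ⊢; exact hp.2)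
      _ = B := by simp
  · rw [Real.finsetProd_rpow _ _ (by intros; positivity)]
    apply Real.rpow_le_rpow (Finset.prod_nonneg (by intros; positivity)) _ hε.le
    rw [← Nat.cast_prod]
    exact_mod_cast Nat.le_of_dvd (by omega) (Nat.prod_primeFactors_dvd N)

lemma smooth_card_le (ε : ℝ) (hε : 0 < ε) : ∃ C : ℝ, 0 < C ∧ ∀ N Z : ℕ, 1 ≤ N →
    ((smoothSet N Z).card : ℝ) ≤ C * (N : ℝ) ^ ε * (Z : ℝ) ^ ε := by
  obtain ⟨C, hC, h⟩ := prod_rankin_le ε hε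
  refine ⟨C, hC, fun N Z hN => ?_⟩
  let f : ℕ → ℝ := fun m => (m : ℝ) ^ (-ε)
  have hf1 : f 1 = 1 := by simp [f]
  have hmul : ∀ {m n : ℕ}, Nat.Coprime m n → f (m * n) = f m * f n := by
    intro m n _
    simp only [f]; push_cast
    exact Real.mul_rpow (by positivity) (by positivity)
  have hpow : ∀ p : ℕ, ∀ n : ℕ, f (p ^ n) = (f p) ^ n := by
    intro p n; simp only [f]; push_cast
    rw [← Real.rpow_natCast, ← Real.rpow_mul (by positivity), mul_comm, Real.rpow_mul (by positivity),
      Real.rpow_natCast]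
  have hfl : ∀ {p : ℕ}, p.Prime → 0 ≤ f p ∧ f p < 1 := by
    intro p hp
    exact ⟨by simp only [f]; positivity, Real.rpow_lt_one_of_one_lt_of_neg (by exact_mod_cast hp.one_lt) (by linarith)⟩
  have hs : ∀ {p : ℕ}, p.Prime → Summable (fun n : ℕ ↦ ‖f (p ^ n)‖) := by
    intro p hp
    simp_rw [hpow, norm_pow]
    apply summable_geometric_of_lt_one (by positivity)
    rw [Real.norm_of_nonneg (hfl hp).1]; exact (hfl hp).2
  obtain ⟨-, hsum⟩ := EulerProduct.summable_and_hasSum_factoredNumbers_prod_filter_prime_tsum hf1 hmul hs N.primeFactors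
  have hval : (∏ p ∈ N.primeFactors with p.Prime, ∑' n : ℕ, f (p ^ n)) =
      ∏ p ∈ N.primeFactors, (1 - (p : ℝ) ^ (-ε))⁻¹ := by
    rw [Finset.filter_true_of_mem (fun p hp => Nat.prime_of_mem_primeFactors hp)]
    apply Finset.prod_congr rfl
    intro p hp
    have := hfl (Nat.prime_of_mem_primeFactors hp)
    simp_rw [hpow]
    rw [tsum_geometric_of_lt_one this.1 this.2]
  rw [hval] at hsum
  rcases Nat.eq_zero_or_pos Z with rfl | hZ
  · simp [smoothSet]; positivity
  have hmem : ∀ m ∈ smoothSet N Z, m ∈ Nat.factoredNumbers N.primeFactors := by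
    intro m hm
    simp only [smoothSet, Finset.mem_filter, Finset.mem_Icc] at hm
    exact Nat.mem_factoredNumbers_of_primeFactors_subset (by omega) hm.2
  let S' : Finset (Nat.factoredNumbers N.primeFactors) := (smoothSet N Z).attach.map
    ⟨fun m : smoothSet N Z => ⟨m.1, hmem m.1 m.2⟩, fun (a b : smoothSet N Z) hab => Subtype.ext (congrArg (fun z : Nat.factoredNumbers N.primeFactors => (z : ℕ)) hab)⟩
  have hle : ∑ m ∈ S', f m ≤ ∏ p ∈ N.primeFactors, (1 - (p : ℝ) ^ (-ε))⁻¹ :=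
    sum_le_hasSum S' (fun m _ => by simp only [f]; positivity) hsum
  have hge : ((smoothSet N Z).card : ℝ) * (Z : ℝ) ^ (-ε) ≤ ∑ m ∈ S', f m := by
    have hcard : S'.card = (smoothSet N Z).card := by simp [S']
    rw [← hcard, ← nsmul_eq_mul]
    apply Finset.card_nsmul_le_sum
    intro m hm
    simp only [S', Finset.mem_map, Finset.mem_attach, true_and] at hm
    obtain ⟨a, rfl⟩ := hm
    have ha := a.2
    simp only [smoothSet, Finset.mem_filter, Finset.mem_Icc] at ha
    simp only [f]
    apply Real.rpow_le_rpow_of_nonpos (by exact_mod_cast ha.1.1) (by exact_mod_cast ha.1.2) (by linarith)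
  have hZ' : (0 : ℝ) < Z := by exact_mod_cast hZ
  have := (hge.trans hle).trans (h N hN)
  rw [Real.rpow_neg hZ'.le, ← div_eq_mul_inv, div_le_iff₀ (by positivity)] at this
  exact this

lemma divisors_card_le (ε : ℝ) (hε : 0 < ε) : ∃ C : ℝ, 0 < C ∧ ∀ N : ℕ, 1 ≤ N →
    (N.divisors.card : ℝ) ≤ C * (N : ℝ) ^ ε := by
  obtain ⟨C, hC, h⟩ := smooth_card_le (ε / 2) (by linarith)
  refine ⟨C, hC, fun N hN => ?_⟩
  have hsub : N.divisors ⊆ smoothSet N N := by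
    intro d hd
    have hd' := Nat.dvd_of_mem_divisors hd
    simp only [smoothSet, Finset.mem_filter, Finset.mem_Icc]
    exact ⟨⟨Nat.pos_of_mem_divisors hd, Nat.le_of_dvd hN hd'⟩, Nat.primeFactors_mono hd' (by omega)⟩
  calc (N.divisors.card : ℝ) ≤ (smoothSet N N).card := by exact_mod_cast Finset.card_le_card hsub
    _ ≤ _ := h N N hN
    _ = C * (N : ℝ) ^ ε := by
      rw [mul_assoc, ← Real.rpow_add (by exact_mod_cast hN)]; ring_nf

end CTri

namespace CTri

section Val
variable {K : Type*} [Field K]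

lemma val_int_le_one (A : ValuationSubring K) (z : ℤ) : A.valuation (z : K) ≤ 1 :=
  (A.valuation_le_one_iff _).2 (intCast_mem A z)

lemma exists_val [CharZero K] (p : ℕ) (hp : p.Prime) :
    ∃ A : ValuationSubring K, A.valuation (p : K) < 1 := by
  let R : Subring K := (Int.castRingHom K).range
  let q : R := ⟨(p : K), ⟨(p : ℤ), by simp⟩⟩
  have hI : Ideal.span {q} ≠ ⊤ := by
    intro h
    rw [Ideal.span_singleton_eq_top] at h
    obtain ⟨u, hu⟩ := h.exists_right_inv
    obtain ⟨z, hz⟩ := u.2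
    have h1 : (p : K) * u.1 = 1 := congrArg (fun t : R => (t : K)) hu
    rw [← hz] at h1
    have h2 : (p : ℤ) * z = 1 := by
      have : (((p : ℤ) * z : ℤ) : K) = ((1 : ℤ) : K) := by push_cast; simpa using h1
      exact_mod_cast this
    have := Int.isUnit_iff.1 (IsUnit.of_mul_eq_one _ h2)
    have := hp.two_le
    omega
  obtain ⟨A, hA, h⟩ := Ideal.image_subset_nonunits_valuationSubring (Ideal.span {q}) hI
  refine ⟨A, ?_⟩
  have : (p : K) ∈ A.nonunits := h ⟨q, Ideal.mem_span_singleton_self q, rfl⟩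
  exact (A.mem_nonunits_iff).1 this

lemma val_coprime (A : ValuationSubring K) (p : ℕ) (hp : p.Prime)
    (hA : A.valuation (p : K) < 1) (z : ℤ) (hz : ¬ (p : ℤ) ∣ z) : A.valuation (z : K) = 1 := by
  refine le_antisymm (val_int_le_one A z) ?_
  by_contra hlt
  push Not at hlt
  have hc : IsCoprime (p : ℤ) z := (Prime.coprime_iff_not_dvd (Nat.prime_iff_prime_int.1 hp)).2 hz
  obtain ⟨u, w, h⟩ := hc
  have h1 : ((u : K) * (p : K) + (w : K) * (z : K)) = 1 := by exact_mod_cast congrArg (Int.cast : ℤ → K) h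
  have h2 : A.valuation ((u : K) * (p : K) + (w : K) * (z : K)) < 1 := by
    apply Valuation.map_add_lt
    · rw [map_mul]; exact mul_lt_one_of_nonneg_of_lt_one_right (val_int_le_one A u) zero_le hA
    · rw [map_mul]; exact mul_lt_one_of_nonneg_of_lt_one_right (val_int_le_one A w) zero_le hlt
  rw [h1, map_one] at h2
  exact lt_irrefl _ h2

lemma val_int [CharZero K] (A : ValuationSubring K) (p : ℕ) (hp : p.Prime)
    (hA : A.valuation (p : K) < 1) (z : ℤ) (hz : z ≠ 0) :
    A.valuation (z : K) = A.valuation (p : K) ^ (z.natAbs.factorization p) := by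
  have hz' : z.natAbs ≠ 0 := by simpa
  obtain ⟨w, hw⟩ : (((p ^ (z.natAbs.factorization p) : ℕ) : ℤ)) ∣ z := by
    rw [Int.natCast_dvd]; exact Nat.ordProj_dvd _ _
  have hw' : ¬ (p : ℤ) ∣ w := by
    rintro ⟨t, rfl⟩
    have : p ^ (z.natAbs.factorization p + 1) ∣ z.natAbs := by
      rw [← Int.natCast_dvd]; exact ⟨t, by rw [pow_succ, Nat.cast_mul, mul_assoc]; exact hw⟩
    exact Nat.pow_succ_factorization_not_dvd hz' hp this
  conv_lhs => rw [hw]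
  push_cast
  rw [map_mul, map_pow, val_coprime A p hp hA w hw', mul_one]

lemma val_p_pos [CharZero K] (A : ValuationSubring K) (p : ℕ) (hp : p.Prime) :
    0 < A.valuation (p : K) := by
  rw [zero_lt_iff, Valuation.ne_zero_iff]; exact_mod_cast hp.ne_zero

lemma fact_le_of_val_le [CharZero K] (A : ValuationSubring K) (p : ℕ) (hp : p.Prime)
    (hA : A.valuation (p : K) < 1) (z w : ℤ) (hz : z ≠ 0) (hw : w ≠ 0)
    (h : A.valuation (z : K) ≤ A.valuation (w : K)) :
    w.natAbs.factorization p ≤ z.natAbs.factorization p := by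
  rw [val_int A p hp hA z hz, val_int A p hp hA w hw] at h
  by_contra hlt
  push Not at hlt
  exact absurd (pow_lt_pow_right_of_lt_one₀ (val_p_pos A p hp) hA hlt) (not_lt.2 h)

lemma dvd_of_val_le [CharZero K] (M z : ℤ) (hM : M ≠ 0)
    (h : ∀ p : ℕ, p.Prime → p ∣ M.natAbs → ∃ A : ValuationSubring K, A.valuation (p : K) < 1 ∧
      A.valuation (z : K) ≤ A.valuation (M : K)) : M ∣ z := by
  rcases eq_or_ne z 0 with rfl | hz
  · exact dvd_zero _
  rw [← Int.natAbs_dvd_natAbs, ← Nat.factorization_le_iff_dvd (by simpa) (by simpa)]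
  intro p
  by_cases hp : p.Prime ∧ p ∣ M.natAbs
  · obtain ⟨A, hA, h'⟩ := h p hp.1 hp.2
    exact fact_le_of_val_le A p hp.1 hA z M hz hM h'
  · rw [not_and] at hp
    by_cases hp1 : p.Prime
    · rw [Nat.factorization_eq_zero_of_not_dvd (hp hp1)]; exact Nat.zero_le _
    · rw [Nat.factorization_eq_zero_of_not_prime _ hp1]; exact Nat.zero_le _

end Val

end CTri

namespace CTri

/-- local code of a solution of a Pell type equation at a prime -/
lemma pell_code (N M : ℤ) (hM : M ≠ 0) (s : ℂ) (hs : s ^ 2 = (N : ℂ)) (p : ℕ) (hp : p.Prime)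
    (A : ValuationSubring ℂ) (hA : A.valuation (p : ℂ) < 1) (X m : ℤ) (h : X ^ 2 - N * m ^ 2 = M) :
    ∃ j < M.natAbs.factorization p + 2,
      (j = 0 ∧ A.valuation ((X : ℂ) + m * s) ^ 2 = A.valuation (M : ℂ)) ∨
      (∃ i, j = i + 1 ∧ A.valuation ((X : ℂ) + m * s) = A.valuation (p : ℂ) ^ i) := by
  set v := A.valuation with hv
  have hprod : ((X : ℂ) + m * s) * (X - m * s) = (M : ℂ) := by
    rw [← h]; push_cast; rw [← hs]; ring
  have hvp : v ((X : ℂ) + m * s) * v ((X : ℂ) - m * s) = v (M : ℂ) := by rw [← map_mul, hprod]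
  have hvs : v s ≤ 1 := by
    have : v s ^ 2 ≤ 1 := by rw [← map_pow, hs]; exact val_int_le_one A N
    exact (pow_le_one_iff_of_nonneg zero_le (by norm_num)).1 this
  have hms : v ((m : ℂ) * s) ≤ 1 := by
    rw [map_mul]; exact mul_le_one₀ (val_int_le_one A m) zero_le hvs
  have h1 : v ((X : ℂ) + m * s) ≤ 1 := Valuation.map_add_le _ (val_int_le_one A X) hms
  have h2 : v ((X : ℂ) - m * s) ≤ 1 := Valuation.map_sub_le _ (val_int_le_one A X) hms
  have hMv : v (M : ℂ) = v (p : ℂ) ^ (M.natAbs.factorization p) := val_int A p hp hA M hM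
  have hMv0 : v (M : ℂ) ≠ 0 := by rw [Valuation.ne_zero_iff]; exact_mod_cast hM
  have hsum : ((X : ℂ) + m * s) + (X - m * s) = ((2 * X : ℤ) : ℂ) := by push_cast; ring
  have hp0 := val_p_pos A p hp
  by_cases heq : v ((X : ℂ) + m * s) = v ((X : ℂ) - m * s)
  · refine ⟨0, by omega, Or.inl ⟨rfl, ?_⟩⟩
    rw [← hvp, ← heq, sq]
  · have hmax := Valuation.map_add_of_distinct_val v heq
    rw [hsum] at hmax
    have hX : (2 * X : ℤ) ≠ 0 := by
      rintro h0
      rw [h0] at hmax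
      simp only [Int.cast_zero, map_zero] at hmax
      have hle : v ((X : ℂ) + m * s) ≤ 0 := by rw [hmax]; exact le_max_left _ _
      have h0' : v ((X : ℂ) + m * s) = 0 := le_antisymm hle zero_le
      rw [h0', zero_mul] at hvp
      exact hMv0 hvp.symm
    rw [val_int A p hp hA _ hX] at hmax
    have key : ∃ i, v ((X : ℂ) + m * s) = v (p : ℂ) ^ i := by
      rcases le_total (v ((X : ℂ) + m * s)) (v ((X : ℂ) - m * s)) with hle | hle
      · rw [max_eq_right hle] at hmax
        have hi : (2 * X).natAbs.factorization p ≤ M.natAbs.factorization p := by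
          by_contra hlt
          push Not at hlt
          have := pow_lt_pow_right_of_lt_one₀ hp0 hA hlt
          have h3 : v (M : ℂ) ≤ v ((X : ℂ) - m * s) := by
            rw [← hvp]; exact mul_le_of_le_one_left zero_le h1
          rw [hMv, ← hmax] at h3
          exact absurd this (not_lt.2 h3)
        refine ⟨M.natAbs.factorization p - (2 * X).natAbs.factorization p, ?_⟩
        have hne : v (p : ℂ) ^ (2 * X).natAbs.factorization p ≠ 0 := pow_ne_zero _ hp0.ne'
        apply mul_right_cancel₀ hne
        rw [← pow_add, Nat.sub_add_cancel hi, ← hMv, ← hvp]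
        exact congrArg _ hmax
      · rw [max_eq_left hle] at hmax
        exact ⟨_, hmax.symm⟩
    obtain ⟨i, hi⟩ := key
    refine ⟨i + 1, ?_, Or.inr ⟨i, rfl, hi⟩⟩
    have : i ≤ M.natAbs.factorization p := by
      by_contra hlt
      push Not at hlt
      have := pow_lt_pow_right_of_lt_one₀ hp0 hA hlt
      have h3 : v (M : ℂ) ≤ v ((X : ℂ) + m * s) := by
        rw [← hvp]; exact mul_le_of_le_one_right zero_le h2
      rw [hMv, hi] at h3
      exact absurd this (not_lt.2 h3)
    omega

/-- There is a classification of the solutions such that solutions of the same class have an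
integral quotient. -/
lemma pell_class (N M : ℤ) (hM : M ≠ 0) : ∃ c : ℤ × ℤ → (∀ p ∈ M.natAbs.primeFactors, ℕ),
    (∀ q : ℤ × ℤ, q.1 ^ 2 - N * q.2 ^ 2 = M →
      c q ∈ M.natAbs.primeFactors.pi (fun p => Finset.range (M.natAbs.factorization p + 2))) ∧
    ∀ q q' : ℤ × ℤ, q.1 ^ 2 - N * q.2 ^ 2 = M → q'.1 ^ 2 - N * q'.2 ^ 2 = M → c q = c q' →
      M ∣ 2 * (q.1 * q'.1 - N * q.2 * q'.2) := by
  obtain ⟨s, hs⟩ : ∃ s : ℂ, s ^ 2 = (N : ℂ) := IsAlgClosed.exists_pow_nat_eq _ (by norm_num)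
  have hex : ∀ p : ℕ, ∃ A : ValuationSubring ℂ, p.Prime → A.valuation (p : ℂ) < 1 := by
    intro p
    by_cases hp : p.Prime
    · obtain ⟨A, hA⟩ := exists_val (K := ℂ) p hp
      exact ⟨A, fun _ => hA⟩
    · exact ⟨⊤, fun h => absurd h hp⟩
  choose A hA using hex
  have hcode : ∀ (q : ℤ × ℤ) (p : ℕ), ∃ j : ℕ, q.1 ^ 2 - N * q.2 ^ 2 = M → p.Prime →
      j < M.natAbs.factorization p + 2 ∧
      ((j = 0 ∧ (A p).valuation ((q.1 : ℂ) + q.2 * s) ^ 2 = (A p).valuation (M : ℂ)) ∨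
      (∃ i, j = i + 1 ∧ (A p).valuation ((q.1 : ℂ) + q.2 * s) = (A p).valuation (p : ℂ) ^ i)) := by
    intro q p
    by_cases h : q.1 ^ 2 - N * q.2 ^ 2 = M ∧ p.Prime
    · obtain ⟨j, hj, hj'⟩ := pell_code N M hM s hs p h.2 (A p) (hA p h.2) q.1 q.2 h.1
      exact ⟨j, fun _ _ => ⟨hj, hj'⟩⟩
    · exact ⟨0, fun h1 h2 => absurd ⟨h1, h2⟩ h⟩
  choose c hc using hcode
  refine ⟨fun q p _ => c q p, ?_, ?_⟩
  · intro q hq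
    rw [Finset.mem_pi]
    intro p hp
    exact Finset.mem_range.2 (hc q p hq (Nat.prime_of_mem_primeFactors hp)).1
  · intro q q' hq hq' hcc
    apply dvd_of_val_le (K := ℂ) M _ hM
    intro p hp hpM
    refine ⟨A p, hA p hp, ?_⟩
    set v := (A p).valuation with hv
    have hpm : p ∈ M.natAbs.primeFactors := by simp [hp, hpM, hM]
    have hcp : c q p = c q' p := congrFun (congrFun hcc p) hpm
    have hprod : ∀ q : ℤ × ℤ, q.1 ^ 2 - N * q.2 ^ 2 = M →
        v ((q.1 : ℂ) + q.2 * s) * v ((q.1 : ℂ) - q.2 * s) = v (M : ℂ) := by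
      intro q hq
      rw [← map_mul, ← hq]; push_cast; rw [← hs]; ring_nf
    have h1 := (hc q p hq hp).2
    have h2 := (hc q' p hq' hp).2
    have hMv0 : v (M : ℂ) ≠ 0 := by rw [Valuation.ne_zero_iff]; exact_mod_cast hM
    have heq : v ((q.1 : ℂ) + q.2 * s) = v ((q'.1 : ℂ) + q'.2 * s) := by
      rcases h1 with ⟨h10, h1⟩ | ⟨i, h10, h1⟩ <;> rcases h2 with ⟨h20, h2⟩ | ⟨i', h20, h2⟩
      · exact (pow_left_inj₀ zero_le zero_le (by norm_num)).1 (h1.trans h2.symm)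
      · omega
      · omega
      · have : i = i' := by omega
        rw [h1, h2, this]
    have heq2 : v ((q.1 : ℂ) - q.2 * s) = v ((q'.1 : ℂ) - q'.2 * s) := by
      have e1 := hprod q hq
      have e2 := hprod q' hq'
      have hne : v ((q'.1 : ℂ) + q'.2 * s) ≠ 0 := by
        intro h; rw [h, zero_mul] at e2; exact hMv0 e2.symm
      rw [heq, ← e2] at e1
      exact mul_left_cancel₀ hne e1
    have hτ : ((2 * (q.1 * q'.1 - N * q.2 * q'.2) : ℤ) : ℂ) =
        ((q.1 : ℂ) + q.2 * s) * (q'.1 - q'.2 * s) + (q.1 - q.2 * s) * (q'.1 + q'.2 * s) := by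
      push_cast; rw [← hs]; ring
    rw [hτ]
    apply Valuation.map_add_le
    · rw [map_mul, heq, hprod q' hq']
    · rw [map_mul, heq2, mul_comm, hprod q' hq']

lemma pell_neg (n M : ℤ) (hn : 0 < n) (X m X' m' : ℤ) (h : X ^ 2 + n * m ^ 2 = M)
    (h' : X' ^ 2 + n * m' ^ 2 = M) (hM : M ≠ 0) (hX : 0 ≤ X * X') (hm : 0 ≤ m * m')
    (hd : (M ≤ 2 * X ^ 2 ∧ M ≤ 2 * X' ^ 2) ∨ (2 * X ^ 2 < M ∧ 2 * X' ^ 2 < M))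
    (hdvd : M ∣ 2 * (X * X' + n * (m * m'))) : X = X' ∧ m = m' := by
  have hM0 : 0 < M := lt_of_le_of_ne (by rw [← h]; positivity) hM.symm
  obtain ⟨t, ht⟩ := hdvd
  have hnm : 0 ≤ n * (m * m') := by positivity
  have hsq : (X - X') ^ 2 + n * (m - m') ^ 2 = 2 * M - M * t := by rw [← ht]; linear_combination h + h'
  have ht1 : 1 < t := by
    have hgt : M < 2 * (X * X' + n * (m * m')) := by
      rcases hd with ⟨h1, h2⟩ | ⟨h1, h2⟩
      · have h3 : M ≤ 2 * (X * X') := by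
          have : M ^ 2 ≤ (2 * (X * X')) ^ 2 := by
            calc M ^ 2 = M * M := sq M
              _ ≤ (2 * X ^ 2) * (2 * X' ^ 2) := by gcongr
              _ = _ := by ring
          exact le_of_sq_le_sq this (by positivity)
        by_contra hle
        push Not at hle
        have h4 : n * (m * m') = 0 := by linarith
        have h5 : 2 * (X * X') = M := by linarith
        have h6 : m * m' = 0 := by
          rcases mul_eq_zero.1 h4 with h | h
          · omega
          · exact h
        have h7 : 4 * X ^ 2 * X' ^ 2 = M * M := by rw [← h5]; ring
        rcases mul_eq_zero.1 h6 with h8 | h8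
        · subst h8; nlinarith
        · subst h8; nlinarith
      · have h1' : M < 2 * (n * m ^ 2) := by linarith
        have h2' : M < 2 * (n * m' ^ 2) := by linarith
        have : M ^ 2 < (2 * (n * (m * m'))) ^ 2 := by
          calc M ^ 2 = M * M := sq M
            _ < (2 * (n * m ^ 2)) * (2 * (n * m' ^ 2)) := by gcongr
            _ = _ := by ring
        have := lt_of_pow_lt_pow_left₀ 2 (by positivity) this
        linarith
    rw [ht] at hgt
    by_contra hle
    push Not at hle
    nlinarith
  have hz : (X - X') ^ 2 + n * (m - m') ^ 2 ≤ 0 := by rw [hsq]; nlinarith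
  have h1 : (X - X') ^ 2 = 0 := by nlinarith [sq_nonneg (X - X'), mul_nonneg hn.le (sq_nonneg (m - m'))]
  have h2 : (m - m') ^ 2 = 0 := by nlinarith [sq_nonneg (X - X'), mul_nonneg hn.le (sq_nonneg (m - m')), sq_nonneg (m - m')]
  have := pow_eq_zero_iff (n := 2) (by norm_num) |>.1 h1
  have := pow_eq_zero_iff (n := 2) (by norm_num) |>.1 h2
  omega

lemma pell_pos (N M : ℤ) (hN : 0 < N) (hM : M ≠ 0) (X m X' m' : ℤ) (h : X ^ 2 - N * m ^ 2 = M)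
    (h' : X' ^ 2 - N * m' ^ 2 = M)
    (hs : 0 < (X + m * √(N : ℝ)) / (X' + m' * √(N : ℝ)))
    (h1 : 1 / 2 < (X + m * √(N : ℝ)) / (X' + m' * √(N : ℝ)))
    (h2 : (X + m * √(N : ℝ)) / (X' + m' * √(N : ℝ)) < 2)
    (hdvd : M ∣ 2 * (X * X' - N * m * m')) : X = X' ∧ m = m' := by
  obtain ⟨t, ht⟩ := hdvd
  have hNr : (0 : ℝ) < N := by exact_mod_cast hN
  set s := √(N : ℝ) with hs_def
  have hs2 : s ^ 2 = N := Real.sq_sqrt hNr.le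
  have hs0 : 0 < s := Real.sqrt_pos.2 hNr
  have hMr : (M : ℝ) ≠ 0 := by exact_mod_cast hM
  have e1 : ((X : ℝ) + m * s) * (X - m * s) = M := by rw [← h]; push_cast; rw [← hs2]; ring
  have e2 : ((X' : ℝ) + m' * s) * (X' - m' * s) = M := by rw [← h']; push_cast; rw [← hs2]; ring
  have n1 : (X : ℝ) + m * s ≠ 0 := fun h => hMr (by rw [← e1, h, zero_mul])
  have n2 : (X' : ℝ) + m' * s ≠ 0 := fun h => hMr (by rw [← e2, h, zero_mul])
  have htr : (2 : ℝ) * (X * X' - N * m * m') = M * t := by exact_mod_cast congrArg (Int.cast : ℤ → ℝ) ht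
  set η := ((X : ℝ) + m * s) / (X' + m' * s) with hη
  have hα : (X : ℝ) + m * s = η * (X' + m' * s) := by rw [hη, div_mul_cancel₀ _ n2]
  have hsum : η + η⁻¹ = t := by
    have e3 : ((X : ℝ) + m * s) * (X' - m' * s) + (X - m * s) * (X' + m' * s) = M * t := by
      rw [← htr, ← hs2]; ring
    have e4 : (X : ℝ) - m * s = η⁻¹ * (X' - m' * s) := by
      apply mul_left_cancel₀ n1
      rw [e1, hα]
      have : η ≠ 0 := hs.ne'
      field_simp
      linarith [e2]
    rw [e4, hα] at e3
    have : (M : ℝ) * (η + η⁻¹) = M * t := by rw [← e3, ← e2]; ring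
    exact mul_left_cancel₀ hMr this
  have hη1 : η = 1 := by
    have hge : 2 ≤ η + η⁻¹ := by
      rw [ge_iff_le.symm, ge_iff_le, ← sub_nonneg]
      have : η + η⁻¹ - 2 = (η - 1) ^ 2 / η := by field_simp; ring
      rw [this]; positivity
    have hlt : η + η⁻¹ < 3 := by
      have : η + η⁻¹ - 3 = ((η - 1/2) * (η - 2) - η / 2) / η := by field_simp; ring
      have : ((η - 1/2) * (η - 2) - η / 2) / η < 0 := div_neg_of_neg_of_pos (by nlinarith) hs
      linarith
    rw [hsum] at hge hlt
    have ht2 : t = 2 := by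
      have a1 : (2 : ℤ) ≤ t := by exact_mod_cast hge
      have a2 : t < 3 := by exact_mod_cast hlt
      omega
    rw [ht2] at hsum
    have : (η - 1) ^ 2 = 0 := by
      have : η * (η + η⁻¹) = η * 2 := by rw [hsum]; norm_num
      rw [mul_add, mul_inv_cancel₀ hs.ne'] at this
      linarith
    have := pow_eq_zero_iff (n := 2) (by norm_num) |>.1 this
    linarith
  rw [hη1, one_mul] at hα
  have hβ : (X : ℝ) - m * s = X' - m' * s := by
    apply mul_left_cancel₀ n1
    rw [e1, hα, e2]
  have hXX : (X : ℝ) = X' := by linarith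
  have hmm : (m : ℝ) * s = m' * s := by linarith
  exact ⟨by exact_mod_cast hXX, by exact_mod_cast mul_right_cancel₀ hs0.ne' hmm⟩

lemma pell_count (N M : ℤ) (hN : N ≠ 0) (hM : M ≠ 0) (L : ℕ) (S : Finset (ℤ × ℤ))
    (hS : ∀ q ∈ S, q.1 ^ 2 - N * q.2 ^ 2 = M ∧ |q.1| + (|N| + 1) * |q.2| ≤ 2 ^ L) :
    S.card ≤ (4 * L + 16) * M.natAbs.divisors.card ^ 2 := by
  obtain ⟨c, hc1, hc2⟩ := pell_class N M hM
  set P := M.natAbs.primeFactors.pi (fun p => Finset.range (M.natAbs.factorization p + 2)) with hP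
  have hPcard : P.card ≤ M.natAbs.divisors.card ^ 2 := by
    rw [hP, Finset.card_pi, Nat.card_divisors (by simpa), ← Finset.prod_pow]
    apply Finset.prod_le_prod' 
    intro p hp
    rw [Finset.card_range]
    have : 1 ≤ M.natAbs.factorization p := by
      have := (Nat.prime_of_mem_primeFactors hp).factorization_pos_of_dvd (by simpa) (Nat.dvd_of_mem_primeFactors hp)
      omega
    nlinarith
  rcases lt_or_gt_of_ne hN with hneg | hpos
  · let code : ℤ × ℤ → Bool × Bool × Bool := fun q =>
      (decide (0 ≤ q.1), decide (0 ≤ q.2), decide (M ≤ 2 * q.1 ^ 2))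
    have hinj : Set.InjOn (fun q => (code q, c q)) (S : Set (ℤ × ℤ)) := by
      intro q hq q' hq' heq
      simp only [code, Prod.mk.injEq, decide_eq_decide] at heq
      obtain ⟨⟨g1, g2, g3⟩, g4⟩ := heq
      have k1 := (hS q hq).1
      have k2 := (hS q' hq').1
      have hd := hc2 q q' k1 k2 g4
      have hsgn : ∀ a b : ℤ, (0 ≤ a ↔ 0 ≤ b) → 0 ≤ a * b := by
        intro a b hab
        by_cases ha : 0 ≤ a
        · exact mul_nonneg ha (hab.1 ha)
        · exact mul_nonneg_of_nonpos_of_nonpos (by omega) (by have := mt hab.2 ha; omega)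
      have := pell_neg (-N) M (by omega) q.1 q.2 q'.1 q'.2 (by linarith) (by linarith) hM
        (hsgn _ _ g1) (hsgn _ _ g2)
        (by by_cases hx : M ≤ 2 * q.1 ^ 2
            · exact Or.inl ⟨hx, g3.1 hx⟩
            · exact Or.inr ⟨not_le.1 hx, not_le.1 (mt g3.2 hx)⟩)
        (by convert hd using 1; ring)
      exact Prod.ext this.1 this.2
    have hmaps : Set.MapsTo (fun q => (code q, c q)) (S : Set (ℤ × ℤ))
        ((Finset.univ : Finset (Bool × Bool × Bool)) ×ˢ P : Finset _) := by
      intro q hq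
      simp only [Finset.coe_product, Set.mem_prod, Finset.mem_coe, Finset.mem_univ, true_and]
      exact hc1 q (hS q hq).1
    have := Finset.card_le_card_of_injOn _ hmaps hinj
    rw [Finset.card_product] at this
    have h8 : (Finset.univ : Finset (Bool × Bool × Bool)).card = 8 := by decide
    rw [h8] at this
    calc S.card ≤ 8 * P.card := this
      _ ≤ (4 * L + 16) * M.natAbs.divisors.card ^ 2 := by gcongr; omega
  · set s := √(N : ℝ) with hs_def
    have hNr : (0 : ℝ) < N := by exact_mod_cast hpos
    have hs2 : s ^ 2 = N := Real.sq_sqrt hNr.le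
    have hs0 : 0 < s := Real.sqrt_pos.2 hNr
    let α : ℤ × ℤ → ℝ := fun q => q.1 + q.2 * s
    let code : ℤ × ℤ → Bool × ℤ := fun q => (decide (0 ≤ α q), Int.log 2 |α q|)
    have hMr : (M : ℝ) ≠ 0 := by exact_mod_cast hM
    have hα : ∀ q ∈ S, α q ≠ 0 ∧ |α q| ≤ 2 ^ L ∧ 1 ≤ |α q| * 2 ^ L := by
      intro q hq
      obtain ⟨k1, k2⟩ := hS q hq
      have e1 : ((q.1 : ℝ) + q.2 * s) * (q.1 - q.2 * s) = M := by
        rw [← k1]; push_cast; rw [← hs2]; ring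
      have hsle : s ≤ N + 1 := by nlinarith
      have k2r : |(q.1 : ℝ)| + (N + 1) * |(q.2 : ℝ)| ≤ 2 ^ L := by
        rw [abs_of_pos hpos] at k2; exact_mod_cast k2
      have hqs : |(q.2 : ℝ) * s| ≤ (N + 1) * |(q.2 : ℝ)| := by
        rw [abs_mul, abs_of_pos hs0, mul_comm]; gcongr
      have b1 : |(q.1 : ℝ) + q.2 * s| ≤ 2 ^ L := (abs_add_le _ _).trans (by linarith)
      have b2 : |(q.1 : ℝ) - q.2 * s| ≤ 2 ^ L := (abs_sub _ _).trans (by linarith)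
      refine ⟨fun h0 => hMr (by rw [← e1]; simp only [α] at h0; rw [h0, zero_mul]), b1, ?_⟩
      have hM1 : (1 : ℝ) ≤ |(M : ℝ)| := by exact_mod_cast Int.one_le_abs hM
      rw [← e1, abs_mul] at hM1
      exact hM1.trans (by simp only [α]; gcongr)
    have hinj : Set.InjOn (fun q => (code q, c q)) (S : Set (ℤ × ℤ)) := by
      intro q hq q' hq' heq
      simp only [code, Prod.mk.injEq, decide_eq_decide] at heq
      obtain ⟨⟨g1, g2⟩, g4⟩ := heq
      have k1 := (hS q hq).1
      have k2 := (hS q' hq').1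
      have hd := hc2 q q' k1 k2 g4
      have a1 := (hα q hq).1
      have a2 := (hα q' hq').1
      have hpos' : 0 < α q / α q' := by
        rcases lt_or_gt_of_ne a1 with h | h
        · exact div_pos_of_neg_of_neg h (not_le.1 (mt g1.2 (not_le.2 h)))
        · exact div_pos h (lt_of_le_of_ne (g1.1 h.le) a2.symm)
      have habs : α q / α q' = |α q| / |α q'| := by rw [← abs_div, abs_of_pos hpos']
      have l1 := Int.zpow_log_le_self (b := 2) (by norm_num) (abs_pos.2 a1)
      have l2 := Int.lt_zpow_succ_log_self (b := 2) (by norm_num) |α q|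
      have l1' := Int.zpow_log_le_self (b := 2) (by norm_num) (abs_pos.2 a2)
      have l2' := Int.lt_zpow_succ_log_self (b := 2) (by norm_num) |α q'|
      rw [g2] at l1 l2
      rw [zpow_add_one₀ (by norm_num)] at l2 l2'
      set w : ℝ := ((2 : ℕ) : ℝ) ^ Int.log 2 |α q'|
      have hp' := abs_pos.2 a2
      have hcast : ((2 : ℕ) : ℝ) = 2 := by norm_num
      rw [hcast] at l2 l2'
      have := pell_pos N M hpos hM q.1 q.2 q'.1 q'.2 k1 k2 hpos'
        (by change 1 / 2 < α q / α q'; rw [habs, lt_div_iff₀ hp']; linarith)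
        (by change α q / α q' < 2; rw [habs, div_lt_iff₀ hp']; linarith) hd
      exact Prod.ext this.1 this.2
    have hmaps : Set.MapsTo (fun q => (code q, c q)) (S : Set (ℤ × ℤ))
        (((Finset.univ : Finset Bool) ×ˢ Finset.Icc (-(L : ℤ)) L) ×ˢ P : Finset _) := by
      intro q hq
      simp only [Finset.coe_product, Set.mem_prod, Finset.mem_coe, Finset.mem_univ, true_and]
      refine ⟨?_, hc1 q (hS q hq).1⟩
      obtain ⟨a0, a1, a2⟩ := hα q hq
      simp only [code, Finset.mem_Icc]
      constructor
      · rw [← Int.zpow_le_iff_le_log (by norm_num) (abs_pos.2 a0), zpow_neg, zpow_natCast]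
        push_cast
        rw [inv_le_iff_one_le_mul₀ (by positivity)]
        exact a2
      · have l1 := Int.zpow_log_le_self (b := 2) (by norm_num) (abs_pos.2 a0)
        have h3 : ((2 : ℕ) : ℝ) ^ Int.log 2 |α q| ≤ ((2 : ℕ) : ℝ) ^ (L : ℤ) := by
          rw [zpow_natCast]; push_cast; push_cast at l1; linarith
        exact (zpow_le_zpow_iff_right₀ (by norm_num)).1 h3
    have := Finset.card_le_card_of_injOn _ hmaps hinj
    rw [Finset.card_product, Finset.card_product] at this
    have h8 : (Finset.univ : Finset Bool).card = 2 := by decide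
    rw [h8, Int.card_Icc] at this
    calc S.card ≤ 2 * ((L : ℤ) + 1 - -(L : ℤ)).toNat * P.card := this
      _ ≤ (4 * L + 16) * M.natAbs.divisors.card ^ 2 := by gcongr; omega

end CTri

namespace CTri

/-- the trinomial over a commutative ring -/
noncomputable def tri {R : Type*} [CommRing R] (n k : ℕ) (A B : R) : R[X] :=
  X ^ n + C A * X ^ k + C B

lemma tri_map {R S : Type*} [CommRing R] [CommRing S] (φ : R →+* S) (n k : ℕ) (A B : R) :
    (tri n k A B).map φ = tri n k (φ A) (φ B) := by
  simp [tri]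

lemma tri_natDegree {R : Type*} [CommRing R] [Nontrivial R] (n k : ℕ) (hkn : k < n) (A B : R) :
    (tri n k A B).natDegree = n := by
  unfold tri
  rw [natDegree_add_C]
  rw [natDegree_add_eq_left_of_natDegree_lt]
  · simp
  · rw [natDegree_X_pow]
    exact (natDegree_C_mul_X_pow_le _ _).trans_lt hkn

lemma tri_monic {R : Type*} [CommRing R] [Nontrivial R] (n k : ℕ) (hkn : k < n) (A B : R) :
    (tri n k A B).Monic := by
  rw [Monic, leadingCoeff, tri_natDegree n k hkn]
  unfold tri
  simp [coeff_X_pow, coeff_C, hkn.ne', (show n ≠ 0 by omega)]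

/-- `x` lists the complex roots of the trinomial with multiplicity -/
def IsRoots {K : Type*} [Field K] (n k : ℕ) (a b : ℚ) (x : Fin n → K) : Prop :=
  (∏ i, (X - C (x i)) : K[X]) = tri n k ((a : ℚ) : K) ((b : ℚ) : K)

/-- evaluation of a resolvent with parameter `e` -/
noncomputable def evR {n : ℕ} (P : MvPolynomial (Fin n) ℚ[X]) (e : ℚ) (x : Fin n → ℂ) : ℂ :=
  MvPolynomial.eval₂ ((algebraMap ℚ ℂ).comp (evalRingHom e)) x P

lemma natDegree_eval2_le {n : ℕ} {R : Type*} [CommRing R] (Q : MvPolynomial (Fin n) R)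
    (φ : R →+* ℚ) (c : Fin n → ℚ[X]) (hc : ∀ i, (c i).natDegree ≤ 1) :
    (MvPolynomial.eval₂ (C.comp φ) c Q).natDegree ≤ Q.totalDegree := by
  rw [MvPolynomial.eval₂_eq']
  apply natDegree_sum_le_of_forall_le
  intro d hd
  simp only [RingHom.comp_apply]
  refine (natDegree_C_mul_le _ _).trans ?_
  refine (natDegree_prod_le _ _).trans ?_
  refine le_trans ?_ (MvPolynomial.le_totalDegree hd)
  rw [Finsupp.sum_fintype _ _ (by simp)]
  apply Finset.sum_le_sum
  intro i _
  refine natDegree_pow_le.trans ?_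
  have := hc i
  nlinarith

lemma esymm_eq {n k : ℕ} {a b : ℚ} {x : Fin n → ℂ} (hx : IsRoots n k a b x) (i : Fin n) :
    (Multiset.map x Finset.univ.val).esymm (i + 1)
      = (-1) ^ ((i : ℕ) + 1) * (tri n k (a : ℂ) (b : ℂ)).coeff (n - (i + 1)) := by
  have h := Multiset.prod_X_sub_C_coeff (Multiset.map x Finset.univ.val) (k := n - (i + 1)) (by simp)
  have hp : (Multiset.map (fun t => X - C t) (Multiset.map x Finset.univ.val)).prod
      = tri n k (a : ℂ) (b : ℂ) := by
    rw [← hx, Multiset.map_map]; rfl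
  rw [hp] at h
  have hcard : (Multiset.map x Finset.univ.val).card = n := by simp
  rw [hcard, show n - (n - ((i : ℕ) + 1)) = i + 1 by omega] at h
  rw [h, ← mul_assoc, ← mul_pow]; simp

lemma tri_coeff_natDegree (n k : ℕ) (A B : ℚ[X]) (hA : A.natDegree ≤ 1) (hB : B.natDegree ≤ 1) (j : ℕ) :
    ((tri n k A B).coeff j).natDegree ≤ 1 := by
  unfold tri
  simp only [coeff_add, coeff_X_pow, coeff_C_mul, coeff_C]
  refine (natDegree_add_le _ _).trans (max_le ((natDegree_add_le _ _).trans (max_le ?_ ?_)) ?_)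
  · split_ifs <;> simp
  · split_ifs <;> simp [hA]
  · split_ifs <;> simp [hB]

lemma resolvent_poly {n : ℕ} (k : ℕ) (P : MvPolynomial (Fin n) ℚ[X]) (hP : P.IsSymmetric) :
    ∃ D : ℕ, ∀ (e : ℚ) (A B : ℚ[X]), A.natDegree ≤ 1 → B.natDegree ≤ 1 →
      ∃ g : ℚ[X], g.natDegree ≤ D ∧ ∀ (y : ℚ) (x : Fin n → ℂ),
        IsRoots n k (A.eval y) (B.eval y) x → evR P e x = ((g.eval y : ℚ) : ℂ) := by
  obtain ⟨Q, hQ⟩ := MvPolynomial.esymmAlgHom_fin_surjective ℚ[X] (le_refl n) ⟨P, hP⟩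
  have hQ' : MvPolynomial.aeval (fun i : Fin n => MvPolynomial.esymm (Fin n) ℚ[X] (i + 1)) Q = P := by
    rw [← MvPolynomial.esymmAlgHom_apply, hQ]
  refine ⟨Q.totalDegree, fun e A B hA hB => ?_⟩
  refine ⟨MvPolynomial.eval₂ (C.comp (evalRingHom e))
    (fun i : Fin n => (-1) ^ ((i : ℕ) + 1) * (tri n k A B).coeff (n - (i + 1))) Q, ?_, ?_⟩
  · apply natDegree_eval2_le
    intro i
    have : ((-1) ^ ((i : ℕ) + 1) : ℚ[X]) = C ((-1) ^ ((i : ℕ) + 1)) := by simp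
    rw [this]
    exact (natDegree_C_mul_le _ _).trans (tri_coeff_natDegree n k A B hA hB _)
  · intro y x hx
    unfold evR
    let _ : Algebra ℚ[X] ℂ := ((algebraMap ℚ ℂ).comp (evalRingHom e)).toAlgebra
    have h1 : MvPolynomial.eval₂ ((algebraMap ℚ ℂ).comp (evalRingHom e)) x P
        = MvPolynomial.aeval x P := rfl
    rw [h1, ← hQ', ← AlgHom.comp_apply, MvPolynomial.comp_aeval]
    simp only [MvPolynomial.aeval_esymm_eq_multiset_esymm]
    have h2 : ((eval y (MvPolynomial.eval₂ (C.comp (evalRingHom e))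
      (fun i : Fin n => (-1) ^ ((i : ℕ) + 1) * (tri n k A B).coeff (n - (i + 1))) Q) : ℚ) : ℂ)
      = ((algebraMap ℚ ℂ).comp (evalRingHom y)) (MvPolynomial.eval₂ (C.comp (evalRingHom e))
      (fun i : Fin n => (-1) ^ ((i : ℕ) + 1) * (tri n k A B).coeff (n - (i + 1))) Q) := by
      simp
    rw [h2, MvPolynomial.eval₂_comp_left]
    rw [MvPolynomial.aeval_def]
    have h3 : (algebraMap ℚ[X] ℂ) = (((algebraMap ℚ ℂ).comp (evalRingHom y)).comp (C.comp (evalRingHom e))) := by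
      ext z
      · simp
      · change ((algebraMap ℚ ℂ).comp (evalRingHom e)) X = _
        simp
    rw [← h3]
    congr 1
    funext i
    rw [esymm_eq hx i]
    simp only [Function.comp_apply, map_mul, map_pow, map_neg, map_one]
    congr 1
    have := congrArg (fun f => coeff f (n - (i + 1)))
      (tri_map ((algebraMap ℚ ℂ).comp (evalRingHom y)) n k A B)
    simp only [coeff_map] at this
    rw [this]
    simp

lemma exists_isRoots (n k : ℕ) (hk : 0 < k) (hkn : k < n) (a b : ℚ) :
    ∃ x : Fin n → ℂ, IsRoots n k a b x := by
  have hm : (tri n k (a : ℂ) (b : ℂ)).Monic := by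
    exact tri_monic _ _ hkn _ _
  have hd : (tri n k (a : ℂ) (b : ℂ)).natDegree = n := by
    exact tri_natDegree _ _ hkn _ _
  have hs := IsAlgClosed.splits (tri n k (a : ℂ) (b : ℂ))
  have hcard : (tri n k (a : ℂ) (b : ℂ)).roots.card = n := by
    rw [← hs.natDegree_eq_card_roots, hd]
  set l := (tri n k (a : ℂ) (b : ℂ)).roots.toList with hl
  have hll : l.length = n := by rw [hl, Multiset.length_toList, hcard]
  refine ⟨fun i => l.get (i.cast hll.symm), ?_⟩
  unfold IsRoots
  have h1 := hs.eq_prod_roots_of_monic hm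
  rw [h1, ← Multiset.coe_toList (tri n k (a : ℂ) (b : ℂ)).roots, ← hl, Multiset.map_coe,
    Multiset.prod_coe]
  rw [← List.prod_ofFn]
  congr 1
  apply List.ext_get
  · simp [hll]
  · intro i h1 h2
    simp

/-- counting zeros of a resolvent along a line -/
lemma resolvent_count {n : ℕ} (k : ℕ) (hk : 0 < k) (hkn : k < n) (P : MvPolynomial (Fin n) ℚ[X]) (hP : P.IsSymmetric) :
    ∃ D : ℕ, ∀ (e : ℚ) (A B : ℚ[X]), A.natDegree ≤ 1 → B.natDegree ≤ 1 →
      (∃ y0 : ℚ, ∀ x : Fin n → ℂ, IsRoots n k (A.eval y0) (B.eval y0) x → evR P e x ≠ 0) →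
      ∀ S : Finset ℤ, (∀ y ∈ S, ∃ x : Fin n → ℂ, IsRoots n k (A.eval (y : ℚ)) (B.eval (y : ℚ)) x ∧
        evR P e x = 0) → S.card ≤ D := by
  obtain ⟨D, hD⟩ := resolvent_poly k P hP
  refine ⟨D, fun e A B hA hB ⟨y0, hy0⟩ S hS => ?_⟩
  obtain ⟨g, hg, hgx⟩ := hD e A B hA hB
  have hg0 : g ≠ 0 := by
    rintro rfl
    obtain ⟨x, hx⟩ := exists_isRoots n k hk hkn (A.eval y0) (B.eval y0)
    apply hy0 x hx
    rw [hgx y0 x hx]; simp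
  have hsub : S.image (Int.cast : ℤ → ℚ) ⊆ g.roots.toFinset := by
    intro q hq
    obtain ⟨y, hy, rfl⟩ := Finset.mem_image.1 hq
    obtain ⟨x, hx, h0⟩ := hS y hy
    rw [hgx _ x hx] at h0
    rw [Multiset.mem_toFinset, mem_roots hg0]
    exact_mod_cast h0
  calc S.card = (S.image (Int.cast : ℤ → ℚ)).card := by
        rw [Finset.card_image_of_injective _ Int.cast_injective]
    _ ≤ g.roots.toFinset.card := Finset.card_le_card hsub
    _ ≤ g.roots.card := Multiset.toFinset_card_le _
    _ ≤ g.natDegree := card_roots' g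
    _ ≤ D := hg

end CTri

namespace CTri

section roots
variable {K : Type*} [Field K] {n k : ℕ} {a b : ℚ} {x : Fin n → K}

lemma IsRoots.root (hx : IsRoots n k a b x) (i : Fin n) :
    x i ^ n + (a : K) * x i ^ k + (b : K) = 0 := by
  have h := congrArg (eval (x i)) hx
  rw [eval_prod, Finset.prod_eq_zero (Finset.mem_univ i) (by simp)] at h
  simpa [tri] using h.symm

lemma IsRoots.prod (hx : IsRoots n k a b x) (hk : 0 < k) (hkn : k < n) (hn : Even n) :
    ∏ i, x i = (b : K) := by
  have h := congrArg (eval 0) hx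
  rw [eval_prod] at h
  simp only [eval_sub, eval_X, eval_C, zero_sub, tri, eval_add, eval_mul, eval_pow] at h
  rw [Finset.prod_neg, zero_pow (by omega), zero_pow (by omega)] at h
  simpa [hn.neg_one_pow] using h

lemma IsRoots.deriv (hx : IsRoots n k a b x) (i : Fin n) :
    ∏ j ∈ Finset.univ.erase i, (x i - x j) = n * x i ^ (n - 1) + k * (a : K) * x i ^ (k - 1) := by
  have h := congrArg (fun f => eval (x i) (derivative f)) hx
  beta_reduce at h
  rw [derivative_prod_finset, eval_finsetSum, Finset.sum_eq_single i] at h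
  · simp only [derivative_sub, derivative_X, derivative_C, sub_zero, mul_one, eval_prod, eval_sub,
      eval_X, eval_C] at h
    rw [h]
    simp [tri, derivative_X_pow]
    ring
  · intro j _ hj
    simp only [derivative_sub, derivative_X, derivative_C, sub_zero, mul_one, eval_prod]
    apply Finset.prod_eq_zero (i := i)
    · simp [hj.symm]
    · simp
  · simp

end roots

section res
variable {K : Type*} [Field K] (A : ValuationSubring K)

lemma res_eq_zero (z : A) : IsLocalRing.residue A z = 0 ↔ A.valuation (z : K) < 1 := by
  rw [IsLocalRing.residue_eq_zero_iff, ValuationSubring.valuation_lt_one_iff]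

lemma res_ne_zero (z : A) : IsLocalRing.residue A z ≠ 0 ↔ A.valuation (z : K) = 1 := by
  rw [Ne, res_eq_zero, not_lt]
  exact ⟨fun h => le_antisymm (A.valuation_le_one z) h, fun h => h.ge⟩

lemma eq_one_of_coprime {F : Type*} [Field F] {w : F} {k m : ℕ} (h : Nat.Coprime k m)
    (h1 : w ^ k = 1) (h2 : w ^ m = 1) : w = 1 := by
  have := Nat.dvd_gcd (orderOf_dvd_of_pow_eq_one h1) (orderOf_dvd_of_pow_eq_one h2)
  rw [h.gcd_eq_one, Nat.dvd_one] at this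
  exact orderOf_eq_one_iff.1 this

lemma eq_of_coprime {F : Type*} [Field F] {x y : F} (hy : y ≠ 0) {k m : ℕ} (h : Nat.Coprime k m)
    (h1 : x ^ k = y ^ k) (h2 : x ^ m = y ^ m) : x = y := by
  have := eq_one_of_coprime (w := x / y) h (by rw [div_pow, h1, div_self (pow_ne_zero _ hy)])
    (by rw [div_pow, h2, div_self (pow_ne_zero _ hy)])
  rwa [div_eq_one_iff_eq hy] at this

/-- the homogeneous geometric sum -/
def hs {R : Type*} [CommRing R] (k : ℕ) (x y : R) : R := ∑ l ∈ Finset.range k, x ^ l * y ^ (k - 1 - l)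

lemma hs_mul {R : Type*} [CommRing R] (k : ℕ) (x y : R) : hs k x y * (x - y) = x ^ k - y ^ k :=
  Commute.geom_sum₂_mul (Commute.all x y) k

lemma hs_self {R : Type*} [CommRing R] (k : ℕ) (x : R) : hs k x x = k * x ^ (k - 1) := by
  unfold hs
  rw [Finset.sum_congr rfl (g := fun _ => x ^ (k - 1))]
  · simp
  · intro l hl
    rw [Finset.mem_range] at hl
    rw [← pow_add]; congr 1; omega

lemma hs_zero_right {R : Type*} [CommRing R] (k : ℕ) (hk : 0 < k) (x : R) :
    hs k x 0 = x ^ (k - 1) := by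
  unfold hs
  rw [Finset.sum_eq_single (k - 1)]
  · simp
  · intro l hl h
    rw [Finset.mem_range] at hl
    rw [zero_pow (by omega), mul_zero]
  · intro h; exact absurd (Finset.mem_range.2 (by omega)) h

lemma hs_comm {R : Type*} [CommRing R] (k : ℕ) (x y : R) : hs k x y = hs k y x := by
  unfold hs
  rw [← Finset.sum_range_reflect]
  apply Finset.sum_congr rfl
  intro l hl
  rw [Finset.mem_range] at hl
  rw [mul_comm]; congr 2; omega

lemma hs_map {R S : Type*} [CommRing R] [CommRing S] (φ : R →+* S) (k : ℕ) (x y : R) :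
    φ (hs k x y) = hs k (φ x) (φ y) := by
  simp [hs]

lemma hs_smul {R : Type*} [CommRing R] (k : ℕ) (w y : R) :
    hs k (w * y) y = y ^ (k - 1) * hs k w 1 := by
  unfold hs
  rw [Finset.mul_sum]
  apply Finset.sum_congr rfl
  intro l hl
  rw [Finset.mem_range] at hl
  rw [mul_pow, mul_assoc, ← pow_add, show l + (k - 1 - l) = k - 1 by omega]
  simp [mul_comm]

/-- In a field, `hs k x y ≠ 0` if some coprime power agrees. -/
lemma hs_ne_zero {F : Type*} [Field F] {x y : F} (hy : y ≠ 0) {k m : ℕ} (h : Nat.Coprime k m)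
    (hk : (k : F) ≠ 0) (h2 : x ^ k = y ^ k → x ^ m = y ^ m) : hs k x y ≠ 0 := by
  intro h0
  have h1 : x ^ k = y ^ k := by
    rw [← sub_eq_zero, ← hs_mul, h0, zero_mul]
  have := eq_of_coprime hy h h1 (h2 h1)
  subst this
  rw [hs_self] at h0
  exact (mul_ne_zero hk (pow_ne_zero _ hy)) h0

/-- the local comparison away from bad primes -/
lemma local_unit {n k r : ℕ} (hk : 0 < k) (hr : 0 < r) (hkr : n = k + r) (hko : Odd k) (hro : Odd r)
    (hc : Nat.Coprime k r) (a b : ℤ) (hb : b ≠ 0) [CharZero K]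
    (h2 : A.valuation (2 : K) = 1) (hkv : A.valuation (k : K) = 1) (hrv : A.valuation (r : K) = 1)
    (hav : A.valuation (a : K) = 1) (x y : K) (hxy : x ≠ y)
    (hx : x ^ n + (a : K) * x ^ k + b = 0) (hy : y ^ n + (a : K) * y ^ k + b = 0) :
    A.valuation ((x + y) ^ (n - 1)) = A.valuation (hs k x y) := by
  set v := A.valuation with hv
  have hint : ∀ z : K, z ^ n + (a : K) * z ^ k + b = 0 → v z ≤ 1 := by
    intro z hz
    by_contra hlt
    rw [not_le] at hlt
    have e1 : v (z ^ n) ≤ max (v (z ^ k)) 1 := by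
      have : z ^ n = -((a : K) * z ^ k + b) := by linear_combination hz
      rw [this, Valuation.map_neg]
      refine (Valuation.map_add _ _ _).trans (max_le_max ?_ (val_int_le_one A b))
      rw [map_mul, hav, one_mul]
    have e2 : (1 : A.ValueGroup) < v z ^ n := one_lt_pow₀ hlt (by omega)
    have e3 : v z ^ k < v z ^ n := pow_lt_pow_right₀ hlt (by omega)
    rw [map_pow, map_pow] at e1
    exact absurd e1 (not_le.2 (max_lt e3 e2))
  have hx1 := hint x hx
  have hy1 := hint y hy
  have hb' : (b : K) ≠ 0 := by exact_mod_cast hb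
  have hx0 : x ≠ 0 := by
    rintro rfl
    rw [zero_pow (by omega), zero_pow (by omega)] at hx; simp at hx; exact hb hx
  have hy0 : y ≠ 0 := by
    rintro rfl
    rw [zero_pow (by omega), zero_pow (by omega)] at hy; simp at hy; exact hb hy
  obtain ⟨X, rfl⟩ : ∃ X : A, (X : K) = x := ⟨⟨x, (A.valuation_le_one_iff x).1 hx1⟩, rfl⟩
  obtain ⟨Y, rfl⟩ : ∃ Y : A, (Y : K) = y := ⟨⟨y, (A.valuation_le_one_iff y).1 hy1⟩, rfl⟩
  have hX : X ^ n + (a : A) * X ^ k + b = 0 := by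
    apply Subtype.ext; push_cast; exact hx
  have hY : Y ^ n + (a : A) * Y ^ k + b = 0 := by
    apply Subtype.ext; push_cast; exact hy
  set ρ := IsLocalRing.residue A with hρ
  have hXr : ρ X ^ n + (a : _) * ρ X ^ k + (b : _) = 0 := by
    have := congrArg ρ hX; simpa using this
  have hYr : ρ Y ^ n + (a : _) * ρ Y ^ k + (b : _) = 0 := by
    have := congrArg ρ hY; simpa using this
  have h2r : (2 : IsLocalRing.ResidueField A) ≠ 0 := by
    have h3 : A.valuation ((((2 : ℕ) : A)) : K) = 1 := by push_cast; exact h2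
    have := (res_ne_zero A ((2 : ℕ) : A)).2 h3
    rw [map_natCast] at this
    exact_mod_cast this
  have hkr' : (k : IsLocalRing.ResidueField A) ≠ 0 := by
    have := (res_ne_zero A (k : A)).2 (by simpa using hkv); simpa using this
  have hrr' : (r : IsLocalRing.ResidueField A) ≠ 0 := by
    have := (res_ne_zero A (r : A)).2 (by simpa using hrv); simpa using this
  have har : (a : IsLocalRing.ResidueField A) ≠ 0 := by
    have := (res_ne_zero A (a : A)).2 (by simpa using hav); simpa using this
  have hcn : Nat.Coprime k n := by rw [hkr]; simpa using hc
  have hne : Even n := by rw [hkr]; exact hko.add_odd hro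
  -- conclusion from residues
  have concl : ρ X + ρ Y ≠ 0 → hs k (ρ X) (ρ Y) ≠ 0 →
      v (((X : K) + Y) ^ (n - 1)) = v (hs k (X : K) Y) := by
    intro e1 e2
    rw [← map_add, res_ne_zero] at e1
    rw [← hs_map, res_ne_zero] at e2
    have e3 : ((hs k X Y : A) : K) = hs k (X : K) Y := hs_map A.subtype k X Y
    rw [e3] at e2
    push_cast at e1
    rw [map_pow, e1, one_pow, e2]
  by_cases hbr : (b : IsLocalRing.ResidueField A) = 0
  swap
  · have hX0 : ρ X ≠ 0 := by
      intro h; rw [h, zero_pow (by omega), zero_pow (by omega)] at hXr; simp at hXr; exact hbr hXr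
    have hY0 : ρ Y ≠ 0 := by
      intro h; rw [h, zero_pow (by omega), zero_pow (by omega)] at hYr; simp at hYr; exact hbr hYr
    apply concl
    · intro h
      have : ρ Y = - ρ X := by linear_combination h
      rw [this, hne.neg_pow, hko.neg_pow] at hYr
      have : (2 * a : IsLocalRing.ResidueField A) * ρ X ^ k = 0 := by linear_combination hXr - hYr
      exact mul_ne_zero (mul_ne_zero h2r har) (pow_ne_zero _ hX0) this
    · apply hs_ne_zero hY0 hcn hkr'
      intro h
      rw [h] at hXr
      linear_combination hXr - hYr
  · have hXr' : ρ X ^ k * (ρ X ^ r + a) = 0 := by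
      rw [hkr, pow_add, hbr] at hXr; linear_combination hXr
    have hYr' : ρ Y ^ k * (ρ Y ^ r + a) = 0 := by
      rw [hkr, pow_add, hbr] at hYr; linear_combination hYr
    by_cases hX0 : ρ X = 0
    · by_cases hY0 : ρ Y = 0
      · -- both small
        have hXa : v ((X : K) ^ r + a) = 1 := by
          have := (res_ne_zero A (X ^ r + a)).1 (by simp [← hρ, hX0, hr.ne', har])
          simpa using this
        have hYa : v ((Y : K) ^ r + a) = 1 := by
          have := (res_ne_zero A (Y ^ r + a)).1 (by simp [← hρ, hY0, hr.ne', har])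
          simpa using this
        have eX : (X : K) ^ k * ((X : K) ^ r + a) = - b := by
          rw [hkr, pow_add] at hx; linear_combination hx
        have eY : (Y : K) ^ k * ((Y : K) ^ r + a) = - b := by
          rw [hkr, pow_add] at hy; linear_combination hy
        have vX : v (X : K) ^ k = v (b : K) := by
          have := congrArg v eX
          rwa [map_mul, hXa, mul_one, Valuation.map_neg, map_pow] at this
        have vY : v (Y : K) ^ k = v (b : K) := by
          have := congrArg v eY
          rwa [map_mul, hYa, mul_one, Valuation.map_neg, map_pow] at this
        have vXY : v (X : K) = v (Y : K) :=
          (pow_left_inj₀ zero_le zero_le hk.ne').1 (vX.trans vY.symm)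
        have vY0 : v (Y : K) ≠ 0 := (Valuation.ne_zero_iff _).2 hy0
        set w := (X : K) / Y with hw
        have vw : v w = 1 := by rw [hw, map_div₀, vXY, div_self vY0]
        have hwY : (X : K) = w * Y := by rw [hw, div_mul_cancel₀ _ hy0]
        obtain ⟨W, hW⟩ : ∃ W : A, (W : K) = w := ⟨⟨w, (A.valuation_le_one_iff w).1 vw.le⟩, rfl⟩
        have hWk : ρ W ^ k = 1 := by
          have e : (W ^ k * (X ^ r + a) : A) = Y ^ r + a := by
            apply Subtype.ext
            push_cast
            rw [hW]
            apply mul_left_cancel₀ (pow_ne_zero k hy0)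
            rw [eY, ← eX, hwY]; ring
          have := congrArg ρ e
          simp only [map_mul, map_add, map_pow, map_intCast, hX0, hY0, zero_pow hr.ne', zero_add] at this
          exact mul_right_cancel₀ har (by rw [this, one_mul])
        have v1 : v ((X : K) + Y) = v (Y : K) := by
          have : (X : K) + Y = (w + 1) * Y := by rw [hwY]; ring
          rw [this, map_mul]
          have : ρ (W + 1) ≠ 0 := by
            intro h
            have : ρ W = -1 := by rw [map_add, map_one] at h; linear_combination h
            rw [this, hko.neg_one_pow] at hWk
            apply h2r; linear_combination -hWk
          rw [res_ne_zero] at this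
          push_cast at this
          rw [← hW, this, one_mul]
        have key : hs k (X : K) Y * (((X : K) ^ r + a) * ((Y : K) ^ r + a)) = b * hs r (X : K) Y := by
          have hsub : (X : K) - Y ≠ 0 := sub_ne_zero.2 hxy
          apply mul_right_cancel₀ hsub
          have e1 := hs_mul k (X : K) Y
          have e2 := hs_mul r (X : K) Y
          linear_combination ((X : K) ^ r + a) * ((Y : K) ^ r + a) * e1 - b * e2 +
            ((Y : K) ^ r + a) * eX - ((X : K) ^ r + a) * eY
        have vh : v (hs r (X : K) Y) = v (Y : K) ^ (r - 1) := by
          rw [hwY, hs_smul, map_mul, map_pow]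
          have : hs r (ρ W) 1 ≠ 0 := by
            apply hs_ne_zero one_ne_zero hc.symm hrr'
            intro _; rw [hWk, one_pow]
          rw [← map_one ρ, ← hs_map, res_ne_zero] at this
          have e3 : ((hs r W 1 : A) : K) = hs r w 1 := by rw [← hW]; exact hs_map A.subtype r W 1
          rw [← e3, this, mul_one]
        have := congrArg v key
        rw [map_mul, map_mul, hXa, hYa, mul_one, mul_one, map_mul, vh, ← vY, ← pow_add] at this
        rw [this, map_pow, v1]
        congr 1; omega
      · apply concl
        · rw [hX0, zero_add]; exact hY0
        · rw [hX0, hs_comm, hs_zero_right k hk]; exact pow_ne_zero _ hY0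
    · by_cases hY0 : ρ Y = 0
      · apply concl
        · rw [hY0, add_zero]; exact hX0
        · rw [hY0, hs_zero_right k hk]; exact pow_ne_zero _ hX0
      · have e1 : ρ X ^ r + a = 0 := (mul_eq_zero.1 hXr').resolve_left (pow_ne_zero _ hX0)
        have e2 : ρ Y ^ r + a = 0 := (mul_eq_zero.1 hYr').resolve_left (pow_ne_zero _ hY0)
        apply concl
        · intro h
          have : ρ Y = - ρ X := by linear_combination h
          rw [this, hro.neg_pow] at e2
          apply mul_ne_zero h2r har
          linear_combination e1 + e2
        · apply hs_ne_zero hY0 hc hkr'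
          intro _; linear_combination e1 - e2

end res

end CTri

namespace CTri

lemma exists_prime_val (N : ℤ) (hN : N ≠ 0) : ∃ (p : ℕ) (A : ValuationSubring ℂ), p.Prime ∧
    A.valuation (p : ℂ) < 1 ∧ ∀ z : ℤ, z ∣ N → A.valuation (z : ℂ) = 1 := by
  obtain ⟨p, hpN, hp⟩ := Nat.exists_infinite_primes (N.natAbs + 1)
  obtain ⟨A, hA⟩ := exists_val (K := ℂ) p hp
  refine ⟨p, A, hp, hA, fun z hz => val_coprime A p hp hA z fun h => ?_⟩
  have h1 : (p : ℤ) ∣ N := h.trans hz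
  have h2 := Nat.le_of_dvd (Int.natAbs_pos.2 hN) (Int.natCast_dvd.1 h1)
  omega

lemma r1_nonvanish {n k r : ℕ} (hk : 0 < k) (hr : 0 < r) (hkr : n = k + r) (hne : Even n)
    (hc : Nat.Coprime k r) (b c : ℤ) (hb : b ≠ 0) (hc0 : c ≠ 0) :
    ∃ y0 : ℚ, ∀ x : Fin n → ℂ, IsRoots n k y0 (b : ℚ) x → ∀ S : Finset (Fin n), S.Nonempty →
      S ≠ Finset.univ → (c : ℂ) ≠ ∏ i ∈ S, x i := by
  obtain ⟨p, A, hp, hA, hz⟩ := exists_prime_val (b * c) (mul_ne_zero hb hc0)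
  have hvb : A.valuation (b : ℂ) = 1 := hz b (dvd_mul_right _ _)
  have hvc : A.valuation (c : ℂ) = 1 := hz c (dvd_mul_left _ _)
  set v := A.valuation with hv
  refine ⟨(p : ℚ)⁻¹, fun x hx S hS hSu hcS => ?_⟩
  have hp0 : v (p : ℂ) ≠ 0 := (Valuation.ne_zero_iff _).2 (by exact_mod_cast hp.ne_zero)
  set α := (v (p : ℂ))⁻¹ with hα
  have hα1 : 1 < α := (one_lt_inv₀ (zero_lt_iff.2 hp0)).2 hA
  have hα0 : α ≠ 0 := (zero_lt_one.trans hα1).ne'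
  have hroot : ∀ i, v (x i) ^ r = α ∨ v (x i) ^ k * α = 1 := by
    intro i
    have h := hx.root i
    push_cast at h
    have e : x i ^ k * (x i ^ r + (p : ℂ)⁻¹) = - b := by
      rw [hkr, pow_add] at h; linear_combination h
    have e1 := congrArg v e
    rw [map_mul, Valuation.map_neg, hvb, map_pow] at e1
    have va : v ((p : ℂ)⁻¹) = α := by rw [map_inv₀]
    rcases lt_trichotomy (v (x i) ^ r) α with h1 | h1 | h1
    · right
      rwa [Valuation.map_add_eq_of_lt_right _ (by rw [map_pow, va]; exact h1), va] at e1
    · exact Or.inl h1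
    · exfalso
      rw [Valuation.map_add_eq_of_lt_left _ (by rw [map_pow, va]; exact h1), map_pow, ← pow_add] at e1
      have h2 : 1 < v (x i) ^ r := hα1.trans h1
      have h3 : 1 < v (x i) := by
        by_contra h4
        exact absurd (pow_le_one₀ zero_le (not_lt.1 h4)) (not_le.2 h2)
      exact absurd e1 (one_lt_pow₀ h3 (by omega)).ne'
  classical
  have hprod : ∀ T : Finset (Fin n), v (∏ i ∈ T, x i) ^ (k * r) *
      α ^ (r * (T.filter (fun i => ¬ v (x i) ^ r = α)).card)
        = α ^ (k * (T.filter (fun i => v (x i) ^ r = α)).card) := by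
    intro T
    have h1 : ∀ i, v (x i) ^ (k * r) * (if v (x i) ^ r = α then 1 else α ^ r)
        = if v (x i) ^ r = α then α ^ k else 1 := by
      intro i
      by_cases h : v (x i) ^ r = α
      · rw [if_pos h, if_pos h, mul_one, mul_comm, pow_mul, h]
      · rw [if_neg h, if_neg h, pow_mul, ← mul_pow, (hroot i).resolve_left h, one_pow]
    have h2 := Finset.prod_congr (rfl : T = T) (fun i _ => h1 i)
    rw [Finset.prod_mul_distrib, Finset.prod_ite, Finset.prod_ite] at h2
    simp only [Finset.prod_const, one_pow, one_mul, mul_one] at h2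
    rw [map_prod, ← Finset.prod_pow, pow_mul, pow_mul]
    exact h2
  have hcount : ∀ T : Finset (Fin n), v (∏ i ∈ T, x i) = 1 →
      r * (T.filter (fun i => ¬ v (x i) ^ r = α)).card = k * (T.filter (fun i => v (x i) ^ r = α)).card := by
    intro T hT
    have h1 := hprod T
    rw [hT, one_pow, one_mul] at h1
    exact pow_right_injective₀ (zero_lt_one.trans hα1) hα1.ne' h1
  have h1 := hcount S (by rw [← hcS, hvc])
  have h2 := hcount Finset.univ (by
    rw [hx.prod hk (by omega) hne]; push_cast; exact hvb)
  have c1 := Finset.card_filter_add_card_filter_not (s := S) (fun i => v (x i) ^ r = α)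
  have c2 := Finset.card_filter_add_card_filter_not (s := (Finset.univ : Finset (Fin n))) (fun i => v (x i) ^ r = α)
  rw [Finset.card_univ, Fintype.card_fin] at c2
  set l := (S.filter (fun i => v (x i) ^ r = α)).card
  set s := (S.filter (fun i => ¬ v (x i) ^ r = α)).card
  set l' := (Finset.univ.filter (fun i => v (x i) ^ r = α)).card
  set s' := (Finset.univ.filter (fun i => ¬ v (x i) ^ r = α)).card
  have hSn : S.card < n := by
    have := Finset.card_lt_univ_of_notMem (s := S) (x := (by
      exact (Finset.exists_mem_notMem_of_card_lt_card (s := S) (t := Finset.univ)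
        (Finset.card_lt_card (Finset.ssubset_univ_iff.2 hSu))).choose)) (Finset.exists_mem_notMem_of_card_lt_card (s := S) (t := Finset.univ)
        (Finset.card_lt_card (Finset.ssubset_univ_iff.2 hSu))).choose_spec.2
    simpa using this
  have hSp : 0 < S.card := hS.card_pos
  have d1 : r ∣ l := hc.symm.dvd_of_dvd_mul_left ⟨s, h1.symm⟩
  obtain ⟨t, ht⟩ := d1
  have d2 : s = k * t := by
    apply Nat.eq_of_mul_eq_mul_left hr
    rw [h1, ht]; ring
  have : S.card = n * t := by rw [← c1, ht, d2, hkr]; ring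
  rw [this] at hSn hSp
  have : t = 0 := by
    by_contra h
    have : 1 ≤ t := Nat.pos_of_ne_zero h
    nlinarith
  subst this
  omega

/-- out-regular off-diagonal relation -/
def OutReg (n : ℕ) (O : Finset (Fin n × Fin n)) : Prop :=
  (∀ q ∈ O, q.1 ≠ q.2) ∧ ∃ δ : ℕ, 0 < δ ∧ δ < n - 1 ∧ ∀ i, (O.filter (fun q => q.1 = i)).card = δ

lemma OutReg.card {n : ℕ} {O : Finset (Fin n × Fin n)} (h : OutReg n O) :
    ∃ δ : ℕ, 0 < δ ∧ δ < n - 1 ∧ O.card = n * δ := by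
  obtain ⟨_, δ, h1, h2, h3⟩ := h
  refine ⟨δ, h1, h2, ?_⟩
  rw [Finset.card_eq_sum_card_fiberwise (f := fun q => q.1) (t := Finset.univ) (by simp)]
  simp [h3]

lemma r3_nonvanish {n k r : ℕ} (hk : 0 < k) (hr : 0 < r) (hkr : n = k + r) (hne : Even n)
    (hc : Nat.Coprime k r) (a : ℤ) (ha : a ≠ 0) (e : ℚ) :
    ∃ y0 : ℚ, ∀ x : Fin n → ℂ, IsRoots n k (a : ℚ) y0 x → ∀ O : Finset (Fin n × Fin n), OutReg n O →
      ∏ q ∈ O, (x q.1 + x q.2) ^ (n - 1) ≠ (e : ℂ) * ∏ q ∈ O, hs k (x q.1) (x q.2) := by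
  obtain ⟨p, A, hp, hA, hz⟩ := exists_prime_val (n * a * (if e = 0 then 1 else e.num * e.den)) (by
    refine mul_ne_zero (mul_ne_zero (by exact_mod_cast (show n ≠ 0 by omega)) ha) ?_
    split_ifs with h
    · exact one_ne_zero
    · exact mul_ne_zero (by simpa using h) (by exact_mod_cast e.den_nz))
  have hvn : A.valuation (n : ℂ) = 1 := by
    have := hz n ⟨_, mul_assoc _ _ _⟩
    exact_mod_cast this
  have hva : A.valuation (a : ℂ) = 1 := hz a (Dvd.dvd.mul_right (dvd_mul_left _ _) _)
  have hve : e ≠ 0 → A.valuation (e : ℂ) = 1 := by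
    intro h
    simp only [if_neg h] at hz
    have h1 := hz e.num (Dvd.dvd.mul_left (dvd_mul_right _ _) _)
    have h2 := hz e.den (Dvd.dvd.mul_left (dvd_mul_left _ _) _)
    rw [Rat.cast_def, map_div₀, h1]
    rw [Int.cast_natCast] at h2
    rw [h2, div_one]
  set v := A.valuation with hv
  refine ⟨(p : ℚ)⁻¹, fun x hx O hO hUV => ?_⟩
  have hp0 : v (p : ℂ) ≠ 0 := (Valuation.ne_zero_iff _).2 (by exact_mod_cast hp.ne_zero)
  set β := (v (p : ℂ))⁻¹ with hβ
  have hβ1 : 1 < β := (one_lt_inv₀ (zero_lt_iff.2 hp0)).2 hA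
  have hroot : ∀ i, v (x i) ^ n = β := by
    intro i
    have h := hx.root i
    push_cast at h
    have vb : v ((p : ℂ)⁻¹) = β := by rw [map_inv₀]
    have h1 : 1 < v (x i) := by
      by_contra h4
      have h5 := not_lt.1 h4
      have e1 : (p : ℂ)⁻¹ = -(x i ^ n + a * x i ^ k) := by linear_combination h
      have e2 := congrArg v e1
      rw [vb, Valuation.map_neg] at e2
      have : v (x i ^ n + a * x i ^ k) ≤ 1 := by
        apply Valuation.map_add_le
        · rw [map_pow]; exact pow_le_one₀ zero_le h5
        · rw [map_mul, hva, one_mul, map_pow]; exact pow_le_one₀ zero_le h5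
      rw [← e2] at this
      exact absurd this (not_le.2 hβ1)
    have e1 : (x i ^ n + a * x i ^ k) = -(p : ℂ)⁻¹ := by linear_combination h
    have e2 := congrArg v e1
    rw [Valuation.map_neg, vb, Valuation.map_add_eq_of_lt_left] at e2
    · rwa [map_pow] at e2
    · rw [map_mul, hva, one_mul, map_pow, map_pow]
      exact pow_lt_pow_right₀ h1 (by omega)
  obtain ⟨i0⟩ : Nonempty (Fin n) := ⟨⟨0, by omega⟩⟩
  set ρ := v (x i0) with hρ
  have hvx : ∀ i, v (x i) = ρ := fun i =>
    (pow_left_inj₀ zero_le zero_le (by omega)).1 ((hroot i).trans (hroot i0).symm)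
  have hρ1 : 1 < ρ := by
    by_contra h4
    exact absurd (pow_le_one₀ (n := n) zero_le (not_lt.1 h4)) (not_le.2 (by rw [hρ, hroot]; exact hβ1))
  have hρ0 : 0 < ρ := zero_lt_one.trans hρ1
  have hx0 : ∀ i, x i ≠ 0 := fun i => (Valuation.ne_zero_iff v).1 (by rw [hvx]; exact hρ0.ne')
  -- distances
  have hdist : ∀ i j, i ≠ j → v (x i - x j) = ρ := by
    have hle : ∀ i j, v (x i - x j) ≤ ρ := fun i j =>
      Valuation.map_sub_le _ (hvx i).le (hvx j).le
    intro i j hij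
    refine le_antisymm (hle i j) ?_
    by_contra hlt
    rw [not_le] at hlt
    have h1 := congrArg v (hx.deriv i)
    have h2 : v ((n : ℂ) * x i ^ (n - 1) + k * ((a : ℚ) : ℂ) * x i ^ (k - 1)) = ρ ^ (n - 1) := by
      rw [Valuation.map_add_eq_of_lt_left]
      · rw [map_mul, hvn, one_mul, map_pow, hvx]
      · rw [map_mul, map_mul, map_mul, hvn, one_mul, map_pow, map_pow, hvx]
        push_cast
        rw [hva, mul_one]
        have : v (k : ℂ) ≤ 1 := by exact_mod_cast val_int_le_one A k
        calc v (k : ℂ) * ρ ^ (k - 1) ≤ 1 * ρ ^ (k - 1) := mul_le_mul_left this _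
          _ < ρ ^ (n - 1) := by rw [one_mul]; exact pow_lt_pow_right₀ hρ1 (by omega)
    rw [h2, map_prod] at h1
    have hmem : j ∈ Finset.univ.erase i := by simp [hij.symm]
    rw [← Finset.mul_prod_erase _ _ hmem] at h1
    have h3 : ∏ l ∈ (Finset.univ.erase i).erase j, v (x i - x l) ≤ ρ ^ (n - 2) := by
      refine (Finset.prod_le_prod' (fun l _ => hle i l)).trans ?_
      rw [Finset.prod_const, Finset.card_erase_of_mem hmem, Finset.card_erase_of_mem (Finset.mem_univ _)]
      simp only [Finset.card_univ, Fintype.card_fin]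
      exact le_of_eq (by congr 1)
    have h4 : v (x i - x j) * ∏ l ∈ (Finset.univ.erase i).erase j, v (x i - x l) < ρ ^ (n - 1) := by
      calc _ ≤ v (x i - x j) * ρ ^ (n - 2) := by gcongr
        _ < ρ * ρ ^ (n - 2) := by
            apply mul_lt_mul_of_pos_right hlt (pow_pos hρ0 _)
        _ = ρ ^ (n - 1) := by rw [← pow_succ']; congr 1; omega
    rw [h1] at h4
    exact lt_irrefl _ h4
  -- ratios
  have hratio : ∀ i j, ∃ W : A, (W : ℂ) = x i / x j ∧ IsLocalRing.residue A W ^ n = 1 := by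
    intro i j
    have vw : v (x i / x j) = 1 := by rw [map_div₀, hvx, hvx, div_self hρ0.ne']
    refine ⟨⟨x i / x j, (A.valuation_le_one_iff _).1 vw.le⟩, rfl, ?_⟩
    rw [← sub_eq_zero, ← map_one (IsLocalRing.residue A), ← map_pow, ← map_sub, res_eq_zero]
    push_cast
    rw [div_pow, div_sub_one (pow_ne_zero _ (hx0 j)), map_div₀, map_pow, hvx,
      div_lt_one₀ (pow_pos hρ0 _)]
    have e1 : x i ^ n - x j ^ n = a * (x j ^ k - x i ^ k) := by
      have h1 := hx.root i
      have h2 := hx.root j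
      push_cast at h1 h2
      linear_combination h1 - h2
    rw [e1, map_mul, hva, one_mul]
    refine lt_of_le_of_lt (Valuation.map_sub_le _ (g := ρ ^ k) ?_ ?_) (pow_lt_pow_right₀ hρ1 (by omega))
    · rw [map_pow, hvx]
    · rw [map_pow, hvx]
  have hcn : Nat.Coprime k n := by rw [hkr]; simpa using hc
  have hpk : ∀ i j, i ≠ j → v (x i ^ k - x j ^ k) = ρ ^ k := by
    intro i j hij
    obtain ⟨W, hW, hWn⟩ := hratio i j
    have h1 : IsLocalRing.residue A (W ^ k - 1) ≠ 0 := by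
      intro h
      rw [map_sub, map_pow, map_one, sub_eq_zero] at h
      have h2 := eq_one_of_coprime hcn h hWn
      rw [← sub_eq_zero, ← map_one (IsLocalRing.residue A), ← map_sub, res_eq_zero] at h2
      push_cast at h2
      rw [hW, div_sub_one (hx0 j), map_div₀, hdist i j hij, hvx, div_self hρ0.ne'] at h2
      exact lt_irrefl _ h2
    rw [res_ne_zero] at h1
    push_cast at h1
    have : x i ^ k - x j ^ k = ((W : ℂ) ^ k - 1) * x j ^ k := by
      rw [hW, div_pow, sub_mul, div_mul_cancel₀ _ (pow_ne_zero _ (hx0 j)), one_mul]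
    rw [this, map_mul, h1, one_mul, map_pow, hvx]
  have hu : ∀ i j, i ≠ j → v (hs k (x i) (x j)) = ρ ^ (k - 1) := by
    intro i j hij
    have h1 := congrArg v (hs_mul k (x i) (x j))
    rw [map_mul, hdist i j hij, hpk i j hij] at h1
    apply mul_right_cancel₀ hρ0.ne'
    rw [h1, ← pow_succ]; congr 1; omega
  have hanti : ∀ i j, i ≠ j → v (x i + x j) ≠ ρ → v (x i + x j) * ρ ^ r = ρ := by
    intro i j hij hlt
    have hle : v (x i + x j) ≤ ρ := Valuation.map_add_le _ (hvx i).le (hvx j).le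
    have hlt := lt_of_le_of_ne hle hlt
    obtain ⟨W, hW, hWn⟩ := hratio i j
    have h1 : IsLocalRing.residue A W = -1 := by
      rw [← sub_eq_zero, sub_neg_eq_add, ← map_one (IsLocalRing.residue A), ← map_add, res_eq_zero]
      push_cast
      rw [hW, div_add_one (hx0 j), map_div₀, hvx, div_lt_one₀ hρ0]
      exact hlt
    have h2 : v (hs n (x i) (- x j)) = ρ ^ (n - 1) := by
      have e1 : x i = (-(W : ℂ)) * (- x j) := by rw [hW, neg_mul_neg, div_mul_cancel₀ _ (hx0 j)]
      rw [e1, hs_smul, map_mul, map_pow, Valuation.map_neg, hvx]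
      have e3 : ((hs n (-W) 1 : A) : ℂ) = hs n (-(W : ℂ)) 1 := hs_map A.subtype n (-W) 1
      have e4 : IsLocalRing.residue A (hs n (-W) 1) ≠ 0 := by
        rw [hs_map, map_neg, h1, neg_neg, map_one, hs_self, one_pow, mul_one]
        have := (res_ne_zero A (n : A)).2 (by simpa using hvn)
        simpa using this
      rw [res_ne_zero, e3] at e4
      rw [e4, mul_one]
    have h3 := hs_mul n (x i) (- x j)
    rw [hne.neg_pow, sub_neg_eq_add] at h3
    have e1 : x i ^ n - x j ^ n = - (a * (x i ^ k - x j ^ k)) := by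
      have h1 := hx.root i
      have h2 := hx.root j
      push_cast at h1 h2
      linear_combination h1 - h2
    have h4 := congrArg v (h3.trans e1)
    rw [map_mul, h2, Valuation.map_neg, map_mul, hva, one_mul, hpk i j hij] at h4
    apply mul_right_cancel₀ (pow_ne_zero (k - 1) hρ0.ne')
    rw [mul_assoc, ← pow_add, ← pow_succ', show r + (k - 1) = n - 1 by omega, mul_comm, h4]
    congr 1; omega
  -- final count
  classical
  obtain ⟨δ, hδ0, hδ1, hcard⟩ := hO.card
  have hU0 : ∏ q ∈ O, (x q.1 + x q.2) ^ (n - 1) ≠ 0 := by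
    rw [Finset.prod_ne_zero_iff]
    intro q hq
    apply pow_ne_zero
    rw [← Valuation.ne_zero_iff v]
    by_cases h : v (x q.1 + x q.2) = ρ
    · rw [h]; exact hρ0.ne'
    · have := hanti _ _ (hO.1 q hq) h
      intro h0
      rw [h0, zero_mul] at this
      exact hρ0.ne this
  have he : e ≠ 0 := by
    rintro rfl
    apply hU0
    rw [hUV]; simp
  have h1 := congrArg v hUV
  rw [map_mul, hve he, one_mul, map_prod, map_prod, Finset.prod_congr rfl (fun q hq => hu q.1 q.2 (hO.1 q hq)),
    Finset.prod_const] at h1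
  set t := (O.filter (fun q => ¬ v (x q.1 + x q.2) = ρ)).card with ht
  have h2 : (∏ q ∈ O, v ((x q.1 + x q.2) ^ (n - 1))) * (ρ ^ (r * (n - 1))) ^ t
      = (ρ ^ (n - 1)) ^ O.card := by
    have h3 : ∀ q ∈ O, v ((x q.1 + x q.2) ^ (n - 1)) *
        (if v (x q.1 + x q.2) = ρ then 1 else ρ ^ (r * (n - 1))) = ρ ^ (n - 1) := by
      intro q hq
      by_cases h : v (x q.1 + x q.2) = ρ
      · rw [if_pos h, mul_one, map_pow, h]
      · rw [if_neg h, map_pow, pow_mul, ← mul_pow, hanti _ _ (hO.1 q hq) h]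
    have h4 := Finset.prod_congr (rfl : O = O) h3
    rw [Finset.prod_mul_distrib, Finset.prod_ite] at h4
    simpa only [Finset.prod_const, one_pow, one_mul] using h4
  rw [h1, ← pow_mul, ← pow_mul, ← pow_mul, ← pow_add] at h2
  have h3 := pow_right_injective₀ hρ0 hρ1.ne' h2
  rw [hcard] at h3
  -- (k-1) n δ + r (n-1) t = (n-1) n δ
  have h5 : (n - 1) * t = n * δ := by
    obtain ⟨m, rfl⟩ : ∃ m, k = m + 1 := ⟨k - 1, by omega⟩
    have : n - 1 = m + r := by omega
    rw [this] at h3 ⊢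
    simp only [Nat.add_sub_cancel] at h3
    apply Nat.eq_of_mul_eq_mul_left hr
    nlinarith
  have h6 : (n - 1) ∣ δ := by
    have : Nat.Coprime (n - 1) n := by
      have := Nat.coprime_self_add_right (m := n - 1) (n := 1)
      rw [show n - 1 + 1 = n by omega] at this
      rw [this]; exact Nat.coprime_one_right _
    exact this.dvd_of_dvd_mul_left ⟨t, h5.symm⟩
  have := Nat.le_of_dvd hδ0 h6
  omega

end CTri

namespace CTri

lemma exists_isRoots' {K : Type*} [Field K] [Algebra ℚ K] (n k : ℕ) (hkn : k < n) (a b : ℚ)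
    (hs : (tri n k (a : K) (b : K)).Splits) :
    ∃ x : Fin n → K, IsRoots n k a b x := by
  have hm : (tri n k (a : K) (b : K)).Monic := tri_monic _ _ hkn _ _
  have hd : (tri n k (a : K) (b : K)).natDegree = n := tri_natDegree _ _ hkn _ _
  have hcard : (tri n k (a : K) (b : K)).roots.card = n := by
    rw [← hs.natDegree_eq_card_roots, hd]
  set l := (tri n k (a : K) (b : K)).roots.toList with hl
  have hll : l.length = n := by rw [hl, Multiset.length_toList, hcard]
  refine ⟨fun i => l.get (i.cast hll.symm), ?_⟩
  unfold IsRoots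
  have h1 := hs.eq_prod_roots_of_monic hm
  rw [h1, ← Multiset.coe_toList (tri n k (a : K) (b : K)).roots, ← hl, Multiset.map_coe,
    Multiset.prod_coe]
  rw [← List.prod_ofFn]
  congr 1
  apply List.ext_get
  · simp [hll]
  · intro i h1 h2
    simp

section gal
variable {K : Type*} [Field K] [Algebra ℚ K] {n k : ℕ} {a b : ℤ} {x : Fin n → K}

lemma IsRoots.mem_range {a b : ℚ} (hx : IsRoots n k a b x) {z : K}
    (hz : z ^ n + (a : K) * z ^ k + (b : K) = 0) : ∃ i, x i = z := by
  have h := congrArg (eval z) hx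
  rw [eval_prod] at h
  have h0 : ∏ i, eval z (X - C (x i)) = 0 := by rw [h]; simpa [tri] using hz
  obtain ⟨i, _, hi⟩ := Finset.prod_eq_zero_iff.1 h0
  refine ⟨i, ?_⟩
  simp at hi
  exact (sub_eq_zero.1 hi).symm

lemma IsRoots.exists_perm {a b : ℚ} (hx : IsRoots n k a b x) (hinj : Function.Injective x) :
    ∃ φ : (K ≃ₐ[ℚ] K) →* Equiv.Perm (Fin n), ∀ σ i, x (φ σ i) = σ (x i) := by
  have h : ∀ (σ : K ≃ₐ[ℚ] K) (i : Fin n), ∃ j, x j = σ (x i) := by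
    intro σ i
    apply hx.mem_range
    have := congrArg σ (hx.root i)
    simpa using this
  choose j hj using h
  let ψ : (K ≃ₐ[ℚ] K) →* Function.End (Fin n) :=
    { toFun := fun σ => j σ
      map_one' := by
        funext i; apply hinj; rw [hj]; rfl
      map_mul' := by
        intro σ τ
        funext i
        apply hinj
        rw [hj]
        change σ (τ (x i)) = x (j σ (j τ i))
        rw [hj, hj] }
  refine ⟨ψ.toHomPerm, fun σ i => ?_⟩
  exact hj σ i

lemma IsRoots.integral (hx : IsRoots n k (a : ℚ) (b : ℚ) x) (hkn : k < n) (i : Fin n) : IsIntegral ℤ (x i) := by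
  refine ⟨tri n k a b, tri_monic _ _ hkn _ _, ?_⟩
  have := hx.root i
  push_cast at this
  unfold tri
  simp only [eval₂_add, eval₂_mul, eval₂_pow, eval₂_X, eval₂_C, algebraMap_int_eq, Int.coe_castRingHom]
  exact this

lemma int_of_fixed [FiniteDimensional ℚ K] [IsGalois ℚ K] (z : K) (hz : IsIntegral ℤ z)
    (h : ∀ σ : K ≃ₐ[ℚ] K, σ z = z) : ∃ m : ℤ, z = m := by
  have h1 := (IsGalois.mem_bot_iff_fixed (F := ℚ) (E := K) z).2 h
  obtain ⟨q, rfl⟩ := IntermediateField.mem_bot.1 h1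
  have h2 : IsIntegral ℤ q := by
    rwa [isIntegral_algebraMap_iff (algebraMap ℚ K).injective] at hz
  obtain ⟨m, hm⟩ := IsIntegrallyClosed.isIntegral_iff.1 h2
  refine ⟨m, ?_⟩
  rw [← hm]; simp

end gal

/-- group theoretic trichotomy -/
lemma trichotomy {G : Type*} [Group G] {n : ℕ} (φ : G →* Equiv.Perm (Fin n))
    (hφ : ¬ Function.Surjective φ) :
    (∃ S : Finset (Fin n), S.Nonempty ∧ S ≠ Finset.univ ∧ ∀ σ, ∀ i ∈ S, φ σ i ∈ S) ∨
    (∃ O : Finset (Fin n × Fin n), OutReg n O ∧ ∀ σ, ∀ q ∈ O, (φ σ q.1, φ σ q.2) ∈ O) ∨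
    (∀ σ, ¬ (φ σ).IsSwap) := by
  classical
  by_cases ht : ∀ i j, ∃ σ, φ σ i = j
  swap
  · left
    push Not at ht
    obtain ⟨i, j, hij⟩ := ht
    refine ⟨Finset.univ.filter (fun l => ∃ σ, φ σ i = l), ⟨i, ?_⟩, ?_, ?_⟩
    · simp only [Finset.mem_filter, Finset.mem_univ, true_and]
      exact ⟨1, by simp⟩
    · intro h
      have := Finset.mem_univ j
      rw [← h] at this
      simp only [Finset.mem_filter, Finset.mem_univ, true_and] at this
      obtain ⟨σ, hσ⟩ := this
      exact hij σ hσ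
    · intro σ l hl
      simp only [Finset.mem_filter, Finset.mem_univ, true_and] at hl ⊢
      obtain ⟨τ, rfl⟩ := hl
      exact ⟨σ * τ, by simp⟩
  right
  by_cases h2 : ∀ i j i' j', i ≠ j → i' ≠ j' → ∃ σ, φ σ i = i' ∧ φ σ j = j'
  · right
    intro σ hσ
    apply hφ
    obtain ⟨i, j, hij, hs⟩ := hσ
    rw [← MonoidHom.range_eq_top, eq_top_iff, ← Equiv.Perm.closure_isSwap, Subgroup.closure_le]
    rintro τ ⟨i', j', hij', rfl⟩
    obtain ⟨g, rfl, rfl⟩ := h2 i j i' j' hij hij'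
    refine ⟨g * σ * g⁻¹, ?_⟩
    rw [map_mul, map_mul, map_inv, hs, Equiv.swap_apply_apply]
  · left
    push Not at h2
    obtain ⟨i, j, i', j', hij, hij', hn⟩ := h2
    set O : Finset (Fin n × Fin n) := Finset.univ.filter (fun q => ∃ σ, φ σ i = q.1 ∧ φ σ j = q.2) with hO
    have memO : ∀ q, q ∈ O ↔ ∃ σ, φ σ i = q.1 ∧ φ σ j = q.2 := fun q => by simp [hO]
    have hinv : ∀ σ, ∀ q ∈ O, (φ σ q.1, φ σ q.2) ∈ O := by
      intro σ q hq
      rw [memO] at hq ⊢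
      obtain ⟨τ, h1, h2⟩ := hq
      exact ⟨σ * τ, by simp [h1], by simp [h2]⟩
    have hoff : ∀ q ∈ O, q.1 ≠ q.2 := by
      intro q hq
      rw [memO] at hq
      obtain ⟨τ, h1, h2⟩ := hq
      rw [← h1, ← h2]
      exact fun h => hij ((φ τ).injective h)
    have hfib : ∀ l l', (O.filter (fun q => q.1 = l)).card ≤ (O.filter (fun q => q.1 = l')).card := by
      intro l l'
      obtain ⟨σ, hσ⟩ := ht l l'
      apply Finset.card_le_card_of_injOn (fun q => (φ σ q.1, φ σ q.2))
      · intro q hq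
        simp only [Finset.coe_filter, Set.mem_ofPred_eq] at hq ⊢
        exact ⟨hinv σ q hq.1, by rw [hq.2, hσ]⟩
      · intro q _ q' _ h
        simp only [Prod.mk.injEq, EmbeddingLike.apply_eq_iff_eq] at h
        exact Prod.ext h.1 h.2
    refine ⟨O, ⟨hoff, (O.filter (fun q => q.1 = i')).card, ?_, ?_, fun l => le_antisymm (hfib _ _) (hfib _ _)⟩, hinv⟩
    · refine lt_of_lt_of_le ?_ (hfib i i')
      rw [Finset.card_pos]
      exact ⟨(i, j), by simp only [Finset.mem_filter, memO]; exact ⟨⟨1, by simp⟩, trivial⟩⟩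
    · have hsub : O.filter (fun q => q.1 = i') ⊆
          ((Finset.univ.erase i').erase j').image (fun l => (i', l)) := by
        intro q hq
        simp only [Finset.mem_filter] at hq
        have h1 := hoff q hq.1
        rw [memO] at hq
        obtain ⟨⟨σ, h2, h3⟩, h4⟩ := hq
        simp only [Finset.mem_image, Finset.mem_erase, Finset.mem_univ, and_true]
        refine ⟨q.2, ⟨?_, ?_⟩, ?_⟩
        · intro h5
          exact hn σ (h2.trans h4) (h3.trans h5)
        · rw [← h4]; exact h1.symm
        · rw [← h4]
      have h1 := (Finset.card_le_card hsub).trans Finset.card_image_le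
      rw [Finset.card_erase_of_mem (by simp [hij'.symm]), Finset.card_erase_of_mem (Finset.mem_univ _),
        Finset.card_univ, Fintype.card_fin] at h1
      have hn2 : 2 ≤ n := by
        have a1 := i.2
        have a2 := j.2
        have : (i : ℕ) ≠ j := fun h => hij (Fin.ext h)
        omega
      omega

end CTri

namespace CTri

open NumberField in
lemma ram_dichotomy (K : Type*) [Field K] [NumberField K] [IsGalois ℚ K] (p : ℕ) (hp : p.Prime) :
    ∃ P : Ideal (𝓞 K), P.IsPrime ∧ P ≠ ⊥ ∧ ((p : ℕ) : 𝓞 K) ∈ P ∧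
      ((∃ σ : K ≃ₐ[ℚ] K, σ ≠ 1 ∧ ∀ z : 𝓞 K, σ • z - z ∈ P) ∨ ((p : ℕ) : 𝓞 K) ∉ P ^ 2) := by
  have hpI : Prime (p : ℤ) := Nat.prime_iff_prime_int.1 hp
  have hp0 : (p : ℤ) ≠ 0 := hpI.ne_zero
  set I : Ideal ℤ := Ideal.span {(p : ℤ)} with hI
  have : I.IsPrime := (Ideal.span_singleton_prime hp0).2 hpI
  have : I.IsMaximal := Ideal.IsPrime.isMaximal inferInstance (by simpa [hI] using hp.ne_zero)
  obtain ⟨P, hP, hPI⟩ := Ideal.exists_ideal_over_prime_of_isIntegral (S := 𝓞 K) I ⊥ (by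
    intro z hz
    have : (algebraMap ℤ (𝓞 K)) z = 0 := hz
    have hz0 : z = 0 := by
      have := (FaithfulSMul.algebraMap_injective ℤ (𝓞 K)) (this.trans (map_zero _).symm)
      exact this
    rw [hz0]; exact I.zero_mem)
  have : P.IsPrime := hPI.1
  have : P.LiesOver I := ⟨hPI.2.symm⟩
  have hpP : ((p : ℕ) : 𝓞 K) ∈ P := by
    have : (p : ℤ) ∈ P.comap (algebraMap ℤ (𝓞 K)) := by rw [hPI.2, hI]; exact Ideal.mem_span_singleton_self _
    simpa using this
  have hPb : P ≠ ⊥ := by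
    rintro rfl
    rw [Ideal.mem_bot] at hpP
    exact hp.ne_zero (by exact_mod_cast hpP)
  refine ⟨P, inferInstance, hPb, hpP, ?_⟩
  by_contra hcon
  push Not at hcon
  obtain ⟨h1, h2⟩ := hcon
  have : Finite (K ≃ₐ[ℚ] K) := inferInstance
  have hc := Ideal.card_inertia_eq_ramificationIdxIn (G := K ≃ₐ[ℚ] K) I P
  have hone : Nat.card (P.inertia (K ≃ₐ[ℚ] K)) = 1 := by
    have : P.inertia (K ≃ₐ[ℚ] K) = ⊥ := by
      rw [eq_bot_iff]
      intro σ hσ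
      rw [Subgroup.mem_bot]
      by_contra hne
      obtain ⟨z, hz⟩ := h1 σ hne
      exact hz (hσ z)
    rw [this]; simp
  rw [hone, Ideal.ramificationIdxIn_eq_ramificationIdx I P (K ≃ₐ[ℚ] K)] at hc
  have hmap : I.map (algebraMap ℤ (𝓞 K)) ≠ ⊥ := by
    rw [hI, Ideal.map_span, Set.image_singleton, Ne, Ideal.span_singleton_eq_bot]
    simpa using hp.ne_zero
  rw [← Ideal.ramificationIdx'_eq_ramificationIdx' I P hmap] at hc
  have hle : I.map (algebraMap ℤ (𝓞 K)) ≤ P ^ 2 := by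
    rw [hI, Ideal.map_span, Set.image_singleton, Ideal.span_singleton_le_iff_mem]
    simpa using h2
  have hdvd : P ^ 2 ∣ I.map (algebraMap ℤ (𝓞 K)) := Ideal.dvd_iff_le.2 hle
  rw [Ideal.IsDedekindDomain.ramificationIdx'_eq_multiplicity hmap inferInstance] at hc
  have hfin : FiniteMultiplicity P (I.map (algebraMap ℤ (𝓞 K))) :=
    FiniteMultiplicity.of_prime_left (Ideal.prime_of_isPrime hPb inferInstance) hmap
  have := hfin.le_multiplicity_of_pow_dvd hdvd
  omega

open NumberField in
lemma even_of_unram (K : Type*) [Field K] [NumberField K] (p : ℕ) (hp : p.Prime) (P : Ideal (𝓞 K))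
    (hP : P.IsPrime) (hPb : P ≠ ⊥) (hpP : ((p : ℕ) : 𝓞 K) ∈ P) (hp2 : ((p : ℕ) : 𝓞 K) ∉ P ^ 2)
    (z : 𝓞 K) (D : ℤ) (hD : D ≠ 0) (h : z ^ 2 = D ∨ z ^ 2 = - D) : Even (D.natAbs.factorization p) := by
  let V : IsDedekindDomain.HeightOneSpectrum (𝓞 K) := ⟨P, hP, hPb⟩
  set v := V.intValuation
  have hz0 : z ≠ 0 := by
    rintro rfl
    rcases h with h | h
    · apply hD; have : (D : 𝓞 K) = 0 := by rw [← h]; ring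
      exact_mod_cast this
    · apply hD; have : (D : 𝓞 K) = 0 := by linear_combination h
      exact_mod_cast this
  have hp0 : ((p : ℕ) : 𝓞 K) ≠ 0 := by exact_mod_cast hp.ne_zero
  have hvz := V.intValuation_eq_exp_neg_multiplicity hz0
  have hvp := V.intValuation_eq_exp_neg_multiplicity hp0
  have hm : multiplicity V.asIdeal (Ideal.span {((p : ℕ) : 𝓞 K)}) = 1 := by
    apply multiplicity_eq_of_dvd_of_not_dvd
    · rw [pow_one, Ideal.dvd_span_singleton]; exact hpP
    · rw [Ideal.dvd_span_singleton]; exact hp2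
  rw [hm] at hvp
  obtain ⟨w, hw⟩ : (((p ^ (D.natAbs.factorization p) : ℕ) : ℤ)) ∣ D := by
    rw [Int.natCast_dvd]; exact Nat.ordProj_dvd _ _
  have hwp : ¬ (p : ℤ) ∣ w := by
    rintro ⟨u, hu⟩
    have : (((p ^ (D.natAbs.factorization p + 1) : ℕ) : ℤ)) ∣ D := by
      refine ⟨u, ?_⟩
      rw [hu] at hw
      refine hw.trans ?_
      push_cast; ring
    rw [Int.natCast_dvd] at this
    exact Nat.pow_succ_factorization_not_dvd (by simpa using hD) hp this
  have hvw : v (w : 𝓞 K) = 1 := by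
    rw [V.intValuation_eq_one_iff_mem_primeCompl]
    intro hmem
    have hcop : IsCoprime (p : ℤ) w := (Nat.prime_iff_prime_int.1 hp).coprime_iff_not_dvd.2 hwp
    obtain ⟨s, t, hst⟩ := hcop
    apply hP.ne_top
    rw [Ideal.eq_top_iff_one]
    have e : (1 : 𝓞 K) = s * (p : 𝓞 K) + t * w := by exact_mod_cast (congrArg (Int.cast : ℤ → 𝓞 K) hst).symm
    rw [e]
    exact P.add_mem (P.mul_mem_left _ hpP) (P.mul_mem_left _ hmem)
  have hvD : v (D : 𝓞 K) = v ((p : ℕ) : 𝓞 K) ^ (D.natAbs.factorization p) := by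
    conv_lhs => rw [hw]
    push_cast
    rw [map_mul, hvw, mul_one, map_pow]
  have h2 : v z ^ 2 = v (D : 𝓞 K) := by
    rw [← map_pow]
    rcases h with h | h
    · rw [h]
    · rw [h, Valuation.map_neg]
  rw [hvD, hvz, hvp, ← WithZero.exp_nsmul, ← WithZero.exp_nsmul, WithZero.exp_inj] at h2
  simp only [nsmul_eq_mul] at h2
  push_cast at h2
  refine ⟨multiplicity V.asIdeal (Ideal.span {z}), ?_⟩
  omega

end CTri

namespace CTri

/-- the trinomial discriminant factor -/
def dd (k r : ℕ) (a b : ℤ) : ℤ := ((k + r : ℕ) : ℤ) ^ (k + r) * b ^ r - (r : ℤ) ^ r * (k : ℤ) ^ k * a ^ (k + r)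

section field
variable {K : Type*} [Field K] {n k r : ℕ} {a b : ℤ} {x : Fin n → K}

lemma IsRoots.root_int (hx : IsRoots n k (a : ℚ) (b : ℚ) x) (i : Fin n) :
    x i ^ n + (a : K) * x i ^ k + (b : K) = 0 := by
  have := hx.root i
  simpa using this

lemma IsRoots.ne_zero (hx : IsRoots n k (a : ℚ) (b : ℚ) x) (hk : 0 < k) (hkn : k < n)
    (hb : (b : K) ≠ 0) (i : Fin n) : x i ≠ 0 := by
  intro h0
  have := hx.root_int i
  rw [h0, zero_pow (by omega), zero_pow (by omega)] at this
  exact hb (by simpa using this)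

lemma IsRoots.double (hx : IsRoots n k (a : ℚ) (b : ℚ) x) (hk : 0 < k) (hr : 0 < r) (hkr : n = k + r)
    (hb : (b : K) ≠ 0) {i j : Fin n} (hij : i ≠ j) (he : x i = x j) :
    (n : K) * x i ^ r = - (k * a) ∧ x i ^ k * (r * a) = - (n * b) := by
  have h0 := hx.ne_zero hk (by omega) hb i
  have h1 := hx.deriv i
  rw [Finset.prod_eq_zero (i := j) (by simp [hij.symm]) (by rw [he, sub_self])] at h1
  have h2 : x i ^ (k - 1) * ((n : K) * x i ^ r + k * a) = 0 := by
    rw [show n - 1 = (k - 1) + r by omega, pow_add] at h1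
    rw [Rat.cast_intCast] at h1
    linear_combination -h1
  have h3 := (mul_eq_zero.1 h2).resolve_left (pow_ne_zero _ h0)
  have h4 : (n : K) * x i ^ r = - (k * a) := by linear_combination h3
  refine ⟨h4, ?_⟩
  have h5 := hx.root_int i
  have h6 : x i ^ n = x i ^ k * x i ^ r := by rw [hkr, pow_add]
  rw [h6] at h5
  have h7 : (n : K) = k + r := by rw [hkr]; push_cast; ring
  linear_combination (n : K) * h5 - x i ^ k * h4 - x i ^ k * a * h7

lemma IsRoots.inj [CharZero K] (hx : IsRoots n k (a : ℚ) (b : ℚ) x) (hk : 0 < k) (hr : 0 < r) (hkr : n = k + r)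
    (hko : Odd k) (hro : Odd r)
    (hb : b ≠ 0) (hD : dd k r a b ≠ 0) : Function.Injective x := by
  intro i j he
  by_contra hij
  obtain ⟨h1, h2⟩ := hx.double hk hr hkr (by exact_mod_cast hb) hij he
  apply hD
  have h3 : (n : K) ^ k * x i ^ (k * r) = - ((k : K) ^ k * a ^ k) := by
    have := congrArg (· ^ k) h1
    simp only [mul_pow, hko.neg_pow] at this
    rw [← this, ← pow_mul, mul_comm r k]
  have h4 : x i ^ (k * r) * ((r : K) ^ r * a ^ r) = - ((n : K) ^ r * b ^ r) := by
    have := congrArg (· ^ r) h2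
    simp only [mul_pow, hro.neg_pow] at this
    rw [← this, ← pow_mul]
  have h5 : ((dd k r a b : ℤ) : K) = 0 := by
    unfold dd
    push_cast
    have h7 : (k : K) + r = n := by rw [hkr]; push_cast; ring
    rw [h7, pow_add, pow_add]
    linear_combination ((n : K) ^ k) * h4 - (r : K) ^ r * a ^ r * h3
  exact_mod_cast h5

lemma IsRoots.prod_disc [CharZero K] (hx : IsRoots n k (a : ℚ) (b : ℚ) x) (hk : 0 < k) (hr : 0 < r) (hkr : n = k + r)
    (hko : Odd k) (hro : Odd r) (hc : Nat.Coprime k r)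
    (hb : b ≠ 0) (hinj : Function.Injective x) :
    ∏ i, ((n : K) * x i ^ r + k * a) = dd k r a b := by
  have hbK : (b : K) ≠ 0 := by exact_mod_cast hb
  have hn0 : (n : K) ≠ 0 := by exact_mod_cast (show n ≠ 0 by omega)
  have hne : Even n := hkr ▸ hko.add_odd hro
  have hroot : ∀ i, x i ^ k * (x i ^ r + a) = - b := by
    intro i
    have := hx.root_int i
    have h6 : x i ^ n = x i ^ k * x i ^ r := by rw [hkr, pow_add]
    rw [h6] at this
    linear_combination this
  have hyinj : Function.Injective (fun i => x i ^ r) := by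
    intro i j hij
    simp only at hij
    apply hinj
    refine eq_of_coprime (hx.ne_zero hk (by omega) hbK j) hc ?_ hij
    have h1 := hroot i
    have h2 := hroot j
    rw [hij] at h1
    have h3 : x j ^ r + a ≠ 0 := by
      intro h; rw [h, mul_zero] at h2; exact hbK (by linear_combination h2)
    exact mul_right_cancel₀ h3 (h1.trans h2.symm)
  set q : K[X] := X ^ k * (X + C (a : K)) ^ r with hq
  have hqm : q.Monic := (monic_X_pow k).mul ((monic_X_add_C _).pow r)
  have hqd : q.natDegree = n := by
    rw [hq, (monic_X_pow k).natDegree_mul ((monic_X_add_C _).pow r), (monic_X_add_C _).natDegree_pow,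
      natDegree_X_pow, natDegree_X_add_C, mul_one, hkr]
  set g : K[X] := q + C ((b : K) ^ r) with hg
  have hgd : g.natDegree = n := by rw [hg, natDegree_add_C, hqd]
  have hgm : g.Monic := by
    rw [hg]; apply hqm.add_of_left
    refine lt_of_le_of_lt degree_C_le ?_
    rw [← natDegree_pos_iff_degree_pos, hqd]; omega
  have hpd : (∏ i, (X - C (x i ^ r)) : K[X]).natDegree = n := by
    rw [natDegree_prod_of_monic _ _ (fun i _ => monic_X_sub_C _)]; simp only [natDegree_X_sub_C]; simp
  have hpm : (∏ i, (X - C (x i ^ r)) : K[X]).Monic := monic_prod_of_monic _ _ (fun i _ => monic_X_sub_C _)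
  have hdeg : (n : WithBot ℕ) = g.degree := by rw [degree_eq_natDegree hgm.ne_zero, hgd]
  have hpg : (∏ i, (X - C (x i ^ r)) : K[X]) = g := by
    refine Polynomial.eq_of_degree_le_of_eval_index_eq (s := Finset.univ) (v := fun i => x i ^ r)
      hyinj.injOn ?_ ?_ ?_ ?_
    · rw [degree_eq_natDegree hpm.ne_zero, hpd]; simp
    · rw [degree_eq_natDegree hpm.ne_zero, hpd, hdeg]
    · rw [hpm.leadingCoeff, hgm.leadingCoeff]
    · intro i _
      rw [eval_prod, Finset.prod_eq_zero (Finset.mem_univ i) (by simp)]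
      simp only [hg, hq, eval_add, eval_mul, eval_pow, eval_X, eval_C]
      have := congrArg (· ^ r) (hroot i)
      simp only [mul_pow, hro.neg_pow] at this
      rw [← pow_mul, mul_comm r k, pow_mul, this]; ring
  have h := congrArg (fun f : K[X] => (n : K) ^ n * eval (-((k : K) * (a : K)) / n) f) hpg
  simp only [eval_prod, eval_sub, eval_X, eval_C] at h
  have hl : (n : K) ^ n * ∏ i, (-(k * a) / n - x i ^ r) = ∏ i, ((n : K) * x i ^ r + k * a) := by
    have hpw : (n : K) ^ n = ∏ _i : Fin n, (n : K) := by simp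
    rw [hpw, ← Finset.prod_mul_distrib]
    have : ∀ i, (n : K) * (-(k * a) / n - x i ^ r) = - ((n : K) * x i ^ r + k * a) := by
      intro i; field_simp; ring
    simp only [this]
    rw [Finset.prod_neg]; simp [hne.neg_one_pow]
  rw [← hl, h]
  simp only [hg, hq, eval_add, eval_mul, eval_pow, eval_X, eval_C]
  have h7 : (k : K) + r = n := by rw [hkr]; push_cast; ring
  have h8 : -((k : K) * a) / n + a = (r * a) / n := by field_simp; linear_combination (a : K) * (- h7)
  rw [h8, div_pow, div_pow, hko.neg_pow, mul_pow, mul_pow]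
  unfold dd
  push_cast
  rw [h7]
  have h10 : (n : K) ^ n = n ^ k * n ^ r := by conv_lhs => rw [hkr, pow_add, ← hkr]
  rw [pow_add, pow_add, h10]
  field_simp
  ring

lemma IsRoots.disc_full [CharZero K] (hx : IsRoots n k (a : ℚ) (b : ℚ) x) (hk : 0 < k) (hr : 0 < r) (hkr : n = k + r)
    (hko : Odd k) (hro : Odd r) (hc : Nat.Coprime k r)
    (hb : b ≠ 0) (hinj : Function.Injective x) :
    ∏ i, ∏ j ∈ Finset.univ.erase i, (x i - x j) = (b : K) ^ (k - 1) * dd k r a b := by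
  rw [← hx.prod_disc hk hr hkr hko hro hc hb hinj]
  have := hx.prod hk (by omega) (hkr ▸ hko.add_odd hro)
  rw [Rat.cast_intCast] at this
  rw [← this, ← Finset.prod_pow, ← Finset.prod_mul_distrib]
  apply Finset.prod_congr rfl
  intro i _
  rw [hx.deriv i, show n - 1 = (k - 1) + r by omega, pow_add, Rat.cast_intCast]
  ring

lemma IsRoots.double_unique (hx : IsRoots n k (a : ℚ) (b : ℚ) x) (hk : 0 < k) (hr : 0 < r) (hkr : n = k + r)
    (hc : Nat.Coprime k r) (hb : (b : K) ≠ 0) (ha : (a : K) ≠ 0) (hn0 : (n : K) ≠ 0) (hr0 : (r : K) ≠ 0)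
    {i j i' j' : Fin n} (hij : i ≠ j) (he : x i = x j) (hij' : i' ≠ j') (he' : x i' = x j') :
    x i = x i' := by
  obtain ⟨h1, h2⟩ := hx.double hk hr hkr hb hij he
  obtain ⟨h3, h4⟩ := hx.double hk hr hkr hb hij' he'
  exact eq_of_coprime (hx.ne_zero hk (by omega) hb i') hc
    (mul_right_cancel₀ (mul_ne_zero hr0 ha) (h2.trans h4.symm)) (mul_left_cancel₀ hn0 (h1.trans h3.symm))

lemma IsRoots.no_triple (hx : IsRoots n k (a : ℚ) (b : ℚ) x) (hk : 0 < k) (hr : 0 < r) (hkr : n = k + r)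
    (hb : (b : K) ≠ 0) (ha : (a : K) ≠ 0) (hk0 : (k : K) ≠ 0) (hr0 : (r : K) ≠ 0)
    {i j l : Fin n} (hij : i ≠ j) (hil : i ≠ l) (hjl : j ≠ l) (h1 : x j = x i) (h2 : x l = x i) : False := by
  obtain ⟨h3, h4⟩ := hx.double hk hr hkr hb hij h1.symm
  have h0 := hx.ne_zero hk (by omega) hb i
  set w := x i with hw
  have hdvd : (X - C w) ^ 3 ∣ tri n k (a : K) (b : K) := by
    have hx' : (∏ i, (X - C (x i)) : K[X]) = tri n k (a : K) (b : K) := by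
      have := hx
      unfold IsRoots at this
      simpa using this
    rw [← hx']
    have h5 : ∏ m ∈ ({i, j, l} : Finset (Fin n)), (X - C (x m)) = (X - C w) ^ 3 := by
      rw [Finset.prod_congr rfl (g := fun _ => X - C w), Finset.prod_const,
        Finset.card_eq_three.2 ⟨i, j, l, hij, hil, hjl, rfl⟩]
      intro m hm
      simp only [Finset.mem_insert, Finset.mem_singleton] at hm
      rcases hm with rfl | rfl | rfl
      · rfl
      · rw [h1]
      · rw [h2]
    rw [← h5]
    exact Finset.prod_dvd_prod_of_subset _ _ _ (Finset.subset_univ _)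
  obtain ⟨g, hg⟩ := hdvd
  have h6 := congrArg (fun f => eval w (X * derivative (X * derivative f))) hg
  have h7 : eval w (X * derivative (X * derivative ((X - C w) ^ 3 * g))) = 0 := by
    simp [derivative_mul, derivative_pow]
  simp only [h7] at h6
  have hXd : ∀ m : ℕ, 0 < m → (X : K[X]) * derivative (X ^ m) = C (m : K) * X ^ m := by
    intro m hm
    rw [derivative_X_pow]
    obtain ⟨m, rfl⟩ : ∃ m', m = m' + 1 := ⟨m - 1, by omega⟩
    simp only [Nat.add_sub_cancel]; ring
  have h8 : (X : K[X]) * derivative (tri n k (a : K) (b : K)) = C (n : K) * X ^ n + C ((a : K) * k) * X ^ k := by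
    unfold tri
    rw [derivative_add, derivative_add, derivative_C, derivative_C_mul, add_zero, mul_add, hXd n (by omega),
      mul_left_comm, hXd k hk, C_mul]
    ring
  rw [h8, derivative_add, derivative_C_mul, derivative_C_mul, mul_add, mul_left_comm, mul_left_comm X,
    hXd n (by omega), hXd k hk] at h6
  simp only [eval_add, eval_mul, eval_C, eval_pow, eval_X] at h6
  have h9 : w ^ n = w ^ k * w ^ r := by rw [hkr, pow_add]
  rw [h9] at h6
  have h7 : (n : K) = k + r := by rw [hkr]; push_cast; ring
  have : w ^ k * (a * k * r) = 0 := by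
    linear_combination -h6 + w ^ k * n * h3 - w ^ k * k * a * h7
  refine mul_ne_zero (pow_ne_zero _ h0) (mul_ne_zero (mul_ne_zero ha hk0) hr0) this

end field

lemma prod_offdiag {R : Type*} [CommRing R] {n : ℕ} (x : Fin n → R) :
    ∃ z : R, z ^ 2 = ∏ i, ∏ j ∈ Finset.univ.erase i, (x i - x j) ∨
      z ^ 2 = - ∏ i, ∏ j ∈ Finset.univ.erase i, (x i - x j) := by
  have h : ∏ i, ∏ j ∈ Finset.univ.erase i, (x i - x j) =
      (∏ i, ∏ j ∈ Finset.Ioi i, (x i - x j)) * ∏ i, ∏ j ∈ Finset.Iio i, (x i - x j) := by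
    rw [← Finset.prod_mul_distrib]
    apply Finset.prod_congr rfl
    intro i _
    rw [← Finset.prod_union]
    · apply Finset.prod_congr _ (fun _ _ => rfl)
      ext j; simp only [Finset.mem_erase, Finset.mem_univ, Finset.mem_union, Finset.mem_Ioi, Finset.mem_Iio]
      constructor
      · intro h; exact (lt_or_gt_of_ne h.1).symm
      · rintro (h | h)
        · exact ⟨h.ne', trivial⟩
        · exact ⟨h.ne, trivial⟩
    · rw [Finset.disjoint_left]; intro j h1 h2
      simp only [Finset.mem_Ioi, Finset.mem_Iio] at h1 h2
      exact absurd h1 (not_lt.2 h2.le)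
  have h2 : ∏ i, ∏ j ∈ Finset.Iio i, (x i - x j) = ∏ i, ∏ j ∈ Finset.Ioi i, -(x i - x j) := by
    rw [Finset.prod_comm' (t' := Finset.univ) (s' := fun j => Finset.Ioi j)]
    · apply Finset.prod_congr rfl; intro i _; apply Finset.prod_congr rfl; intro j _; ring
    · intro i j; simp
  have h3 : ∏ i, ∏ j ∈ Finset.Ioi i, -(x i - x j) = (∏ i : Fin n, (-1) ^ (Finset.Ioi i).card) * ∏ i, ∏ j ∈ Finset.Ioi i, (x i - x j) := by
    rw [← Finset.prod_mul_distrib]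
    apply Finset.prod_congr rfl; intro i _; rw [Finset.prod_neg]
  refine ⟨∏ i, ∏ j ∈ Finset.Ioi i, (x i - x j), ?_⟩
  rw [h, h2, h3, Finset.prod_pow_eq_pow_sum]
  rcases neg_one_pow_eq_or R (∑ i : Fin n, (Finset.Ioi i).card) with h | h
  · left; rw [h]; ring
  · right; rw [h]; ring

lemma isSwap_of {n : ℕ} {F : Type*} (y : Fin n → F) (τ : Equiv.Perm (Fin n)) (hτ : τ ≠ 1)
    (hy : ∀ i, y (τ i) = y i)
    (h2 : ∀ i j i' j', i ≠ j → y i = y j → i' ≠ j' → y i' = y j' → y i = y i')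
    (h3 : ∀ i j l, i ≠ j → i ≠ l → j ≠ l → y j = y i → y l = y i → False) : τ.IsSwap := by
  obtain ⟨i, hi⟩ : ∃ i, τ i ≠ i := by
    by_contra h; push Not at h; exact hτ (Equiv.ext h)
  refine ⟨i, τ i, hi.symm, ?_⟩
  have htt : τ (τ i) = i := by
    by_contra h
    exact h3 i (τ i) (τ (τ i)) hi.symm (Ne.symm h) (fun h => hi (τ.injective h.symm)) (hy i) ((hy _).trans (hy i))
  ext l
  congr 1
  rw [Equiv.swap_apply_def]
  split_ifs with h4 h5
  · rw [h4]
  · rw [h5, htt]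
  · by_contra hl
    have := h2 i (τ i) l (τ l) hi.symm (hy i).symm (Ne.symm hl) (hy l).symm
    exact h3 i (τ i) l hi.symm (Ne.symm h4) (Ne.symm h5) (hy i) this.symm

open NumberField in
lemma swap_of_odd {K : Type*} [Field K] [NumberField K] [IsGalois ℚ K] {n k r : ℕ} {a b : ℤ} {x : Fin n → K}
    (hx : IsRoots n k (a : ℚ) (b : ℚ) x) (hk : 0 < k) (hr : 0 < r) (hkr : n = k + r)
    (hko : Odd k) (hro : Odd r) (hc : Nat.Coprime k r)
    (hb : b ≠ 0) (hD : dd k r a b ≠ 0) (φ : (K ≃ₐ[ℚ] K) →* Equiv.Perm (Fin n))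
    (hφ : ∀ σ i, x (φ σ i) = σ (x i)) (hφi : Function.Injective φ)
    (p : ℕ) (hp : p.Prime) (hpn : ¬ (p : ℤ) ∣ n * k * r * b)
    (hodd : ¬ Even ((dd k r a b).natAbs.factorization p)) : ∃ σ, (φ σ).IsSwap := by
  have hinj := hx.inj hk hr hkr hko hro hb hD
  choose y hy using fun i => (⟨⟨x i, hx.integral (by omega) i⟩, rfl⟩ : ∃ y : 𝓞 K, (y : K) = x i)
  have hpI : Prime (p : ℤ) := Nat.prime_iff_prime_int.1 hp
  obtain ⟨P, hP, hPb, hpP, hdich⟩ := ram_dichotomy K p hp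
  have hpD : (p : ℤ) ∣ dd k r a b := by
    by_contra h
    apply hodd
    rw [Nat.factorization_eq_zero_of_not_dvd (fun h' => h (Int.natCast_dvd.2 h'))]
    exact Even.zero
  have hpb : ¬ (p : ℤ) ∣ b := fun h => hpn (h.mul_left _)
  have hpnn : ¬ (p : ℤ) ∣ n := fun h => hpn (((h.mul_right _).mul_right _).mul_right _)
  have hpk : ¬ (p : ℤ) ∣ k := fun h => hpn (((h.mul_left _).mul_right _).mul_right _)
  have hpr : ¬ (p : ℤ) ∣ r := fun h => hpn ((h.mul_left _).mul_right _)
  have hpa : ¬ (p : ℤ) ∣ a := by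
    intro h
    have h1 : (p : ℤ) ∣ (r : ℤ) ^ r * (k : ℤ) ^ k * a ^ (k + r) := (dvd_pow h (by omega)).mul_left _
    have h2 : (p : ℤ) ∣ ((k + r : ℕ) : ℤ) ^ (k + r) * b ^ r := by
      have := dvd_add hpD h1
      unfold dd at this
      simpa using this
    rcases hpI.dvd_or_dvd h2 with h | h
    · rw [← hkr] at h; exact hpnn (hpI.dvd_of_dvd_pow h)
    · exact hpb (hpI.dvd_of_dvd_pow h)
  rcases hdich with ⟨σ, hσ, hσP⟩ | hp2
  · refine ⟨σ, ?_⟩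
    have : P.IsMaximal := hP.isMaximal hPb
    let _ := Ideal.Quotient.field P
    set ψ := Ideal.Quotient.mk P with hψ
    have hnz : ∀ z : ℤ, ¬ (p : ℤ) ∣ z → ((z : ℤ) : 𝓞 K ⧸ P) ≠ 0 := by
      intro z hz h0
      have hmem : (z : 𝓞 K) ∈ P := by
        rw [← Ideal.Quotient.eq_zero_iff_mem]; simpa using h0
      have hcop : IsCoprime (p : ℤ) z := hpI.coprime_iff_not_dvd.2 hz
      obtain ⟨s, t, hst⟩ := hcop
      apply hP.ne_top
      rw [Ideal.eq_top_iff_one]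
      have e : (1 : 𝓞 K) = s * (p : 𝓞 K) + t * z := by exact_mod_cast (congrArg (Int.cast : ℤ → 𝓞 K) hst).symm
      rw [e]
      exact P.add_mem (P.mul_mem_left _ hpP) (P.mul_mem_left _ hmem)
    have hyr : (∏ i, (X - C (y i)) : (𝓞 K)[X]) = tri n k (a : 𝓞 K) (b : 𝓞 K) := by
      apply Polynomial.map_injective (algebraMap (𝓞 K) K) (FaithfulSMul.algebraMap_injective _ _)
      rw [tri_map, Polynomial.map_prod]
      have h1 := hx
      unfold IsRoots at h1
      simp only [Rat.cast_intCast] at h1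
      simp only [map_intCast, ← h1]
      apply Finset.prod_congr rfl
      intro i _
      rw [Polynomial.map_sub, Polynomial.map_X, Polynomial.map_C, ← hy i]
    have hxr : IsRoots n k (a : ℚ) (b : ℚ) (fun i => ψ (y i)) := by
      unfold IsRoots
      have := congrArg (Polynomial.map ψ) hyr
      rw [tri_map, Polynomial.map_prod] at this
      simp only [Polynomial.map_sub, Polynomial.map_X, Polynomial.map_C, map_intCast] at this
      simp only [Rat.cast_intCast]
      exact this
    have h1 := hnz b hpb
    have h2 := hnz a hpa
    have h3 := hnz n hpnn
    have h4 := hnz k hpk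
    have h5 := hnz r hpr
    rw [Int.cast_natCast] at h3 h4 h5
    refine isSwap_of (fun i => ψ (y i)) (φ σ) (fun h => hσ (hφi (h.trans (map_one φ).symm))) ?_ ?_ ?_
    · intro i
      rw [hψ, Ideal.Quotient.eq]
      have : y (φ σ i) = σ • y i := by
        apply RingOfIntegers.ext
        rw [hy, hφ, ← hy i]; rfl
      rw [this]; exact hσP _
    · intro i j i' j' q1 q2 q3 q4
      exact hxr.double_unique hk hr hkr hc h1 h2 h3 h5 q1 q2 q3 q4
    · intro i j l q1 q2 q3 q4 q5
      exact hxr.no_triple hk hr hkr h1 h2 h4 h5 q1 q2 q3 q4 q5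
  · exfalso
    apply hodd
    obtain ⟨z, hz⟩ := prod_offdiag y
    have hdisc : ∏ i, ∏ j ∈ Finset.univ.erase i, (y i - y j) = ((b ^ (k - 1) * dd k r a b : ℤ) : 𝓞 K) := by
      apply FaithfulSMul.algebraMap_injective (𝓞 K) K
      have := hx.disc_full hk hr hkr hko hro hc hb hinj
      have hy' : ∀ i, algebraMap (𝓞 K) K (y i) = x i := hy
      simp only [map_prod, map_sub, hy']
      rw [this]; simp
    rw [hdisc] at hz
    have := even_of_unram K p hp P hP hPb hpP hp2 z _ (mul_ne_zero (pow_ne_zero _ hb) hD) hz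
    rw [Int.natAbs_mul, Nat.factorization_mul (by simp [hb]) (by simpa using hD), Finsupp.add_apply,
      Nat.factorization_eq_zero_of_not_dvd, zero_add] at this
    · exact this
    · intro h
      exact hpb (hpI.dvd_of_dvd_pow (Int.natCast_dvd.2 h))

end CTri

namespace CTri

lemma prod_invariant {α M : Type*} [CommMonoid M] (S : Finset α) (f : α → M) (τ : α → α)
    (hτ : Function.Injective τ) (h : ∀ i ∈ S, τ i ∈ S) : ∏ i ∈ S, f (τ i) = ∏ i ∈ S, f i := by
  classical
  rw [← Finset.prod_image (f := f) (g := τ) hτ.injOn]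
  congr 1
  apply Finset.eq_of_subset_of_card_le
  · intro i hi
    obtain ⟨j, hj, rfl⟩ := Finset.mem_image.1 hi
    exact h j hj
  · rw [Finset.card_image_of_injective _ hτ]

/-- the three ways in which the Galois group can fail to be symmetric -/
def BadData (n k r : ℕ) (a b : ℤ) : Prop :=
  (∀ p : ℕ, p.Prime → ¬ (p : ℤ) ∣ n * k * r * b → Even ((dd k r a b).natAbs.factorization p)) ∨
  (∃ x : Fin n → ℂ, IsRoots n k (a : ℚ) (b : ℚ) x ∧ ∃ S : Finset (Fin n), S.Nonempty ∧ S ≠ Finset.univ ∧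
    ∃ c : ℤ, c ∣ b ∧ (c : ℂ) = ∏ i ∈ S, x i) ∨
  (∃ x : Fin n → ℂ, IsRoots n k (a : ℚ) (b : ℚ) x ∧ ∃ O : Finset (Fin n × Fin n), OutReg n O ∧
    ∃ U V : ℤ, U ≠ 0 ∧ V ≠ 0 ∧ (U : ℂ) = ∏ q ∈ O, (x q.1 + x q.2) ^ (n - 1) ∧
      (V : ℂ) = ∏ q ∈ O, hs k (x q.1) (x q.2) ∧
      ∀ p : ℕ, p.Prime → ¬ (p : ℤ) ∣ 2 * k * r * a → U.natAbs.factorization p = V.natAbs.factorization p)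

lemma bad_core {K : Type*} [Field K] [NumberField K] [IsGalois ℚ K] {n k r : ℕ} {a b : ℤ} {x : Fin n → K}
    (hx : IsRoots n k (a : ℚ) (b : ℚ) x) (hk : 0 < k) (hr : 0 < r) (hkr : n = k + r)
    (hko : Odd k) (hro : Odd r) (hc : Nat.Coprime k r) (ha : a ≠ 0)
    (hb : b ≠ 0) (hD : dd k r a b ≠ 0) (φ : (K ≃ₐ[ℚ] K) →* Equiv.Perm (Fin n))
    (hφ : ∀ σ i, x (φ σ i) = σ (x i)) (hφi : Function.Injective φ) (hφs : ¬ Function.Surjective φ) :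
    BadData n k r a b := by
  have hinj := hx.inj hk hr hkr hko hro hb hD
  have hne : Even n := hkr ▸ hko.add_odd hro
  have hbK : (b : K) ≠ 0 := by exact_mod_cast hb
  have haK : (a : K) ≠ 0 := by exact_mod_cast ha
  obtain ⟨ι⟩ : Nonempty (K →+* ℂ) := inferInstance
  have hxι : IsRoots n k (a : ℚ) (b : ℚ) (fun i => ι (x i)) := by
    have := congrArg (Polynomial.map ι) hx
    rw [tri_map, Polynomial.map_prod] at this
    unfold IsRoots
    simpa using this
  have hint := fun i => hx.integral (by omega) i
  rcases trichotomy φ hφs with ⟨S, hS, hSu, hinv⟩ | ⟨O, hO, hinv⟩ | hsw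
  · right; left
    refine ⟨_, hxι, S, hS, hSu, ?_⟩
    have hfix : ∀ σ : K ≃ₐ[ℚ] K, σ (∏ i ∈ S, x i) = ∏ i ∈ S, x i := by
      intro σ
      rw [map_prod, ← prod_invariant S x (φ σ) (φ σ).injective (hinv σ)]
      exact Finset.prod_congr rfl fun i _ => (hφ σ i).symm
    obtain ⟨c, hcc⟩ := int_of_fixed (∏ i ∈ S, x i) (IsIntegral.prod _ fun i _ => hint i) hfix
    have hprod : (∏ i ∈ S, x i) * ∏ i ∈ Sᶜ, x i = (b : K) := by
      rw [Finset.prod_mul_prod_compl, hx.prod hk (by omega) hne]; simp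
    have hfix' : ∀ σ : K ≃ₐ[ℚ] K, σ (∏ i ∈ Sᶜ, x i) = ∏ i ∈ Sᶜ, x i := by
      intro σ
      have h1 := congrArg σ hprod
      rw [map_mul, hfix σ, map_intCast, ← hprod] at h1
      refine mul_left_cancel₀ ?_ h1
      exact Finset.prod_ne_zero_iff.2 fun i _ => hx.ne_zero hk (by omega) hbK i
    obtain ⟨d, hdd⟩ := int_of_fixed (∏ i ∈ Sᶜ, x i) (IsIntegral.prod _ fun i _ => hint i) hfix'
    refine ⟨c, ⟨d, ?_⟩, ?_⟩
    · rw [hcc, hdd] at hprod; exact_mod_cast hprod.symm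
    · rw [← map_prod, hcc, map_intCast]
  · right; right
    refine ⟨_, hxι, O, hO, ?_⟩
    have hinj2 : ∀ σ : K ≃ₐ[ℚ] K, Function.Injective (fun q : Fin n × Fin n => (φ σ q.1, φ σ q.2)) := by
      intro σ q q' h
      simp only [Prod.mk.injEq] at h
      exact Prod.ext ((φ σ).injective h.1) ((φ σ).injective h.2)
    have hfU : ∀ σ : K ≃ₐ[ℚ] K, σ (∏ q ∈ O, (x q.1 + x q.2) ^ (n - 1)) = ∏ q ∈ O, (x q.1 + x q.2) ^ (n - 1) := by
      intro σ
      rw [map_prod, ← prod_invariant O (fun q => (x q.1 + x q.2) ^ (n - 1)) _ (hinj2 σ) (hinv σ)]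
      exact Finset.prod_congr rfl fun i _ => by simp [hφ]
    have hfV : ∀ σ : K ≃ₐ[ℚ] K, σ (∏ q ∈ O, hs k (x q.1) (x q.2)) = ∏ q ∈ O, hs k (x q.1) (x q.2) := by
      intro σ
      rw [map_prod, ← prod_invariant O (fun q => hs k (x q.1) (x q.2)) _ (hinj2 σ) (hinv σ)]
      refine Finset.prod_congr rfl fun i _ => ?_
      have := hs_map (σ : K →+* K) k (x i.1) (x i.2)
      simp only [hφ]
      exact this
    obtain ⟨U, hU⟩ := int_of_fixed (∏ q ∈ O, (x q.1 + x q.2) ^ (n - 1)) (IsIntegral.prod _ fun q _ => ((hint q.1).add (hint q.2)).pow (n - 1)) hfU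
    obtain ⟨V, hV⟩ := int_of_fixed (∏ q ∈ O, hs k (x q.1) (x q.2)) (IsIntegral.prod _ fun q _ => (by
      unfold hs
      exact IsIntegral.sum _ fun l _ => ((hint q.1).pow _).mul ((hint q.2).pow _) : IsIntegral ℤ (hs k (x q.1) (x q.2)))) hfV
    have hU0 : U ≠ 0 := by
      have : (U : K) ≠ 0 := by
        rw [← hU]
        refine Finset.prod_ne_zero_iff.2 fun q _ => pow_ne_zero _ fun h => ?_
        have h1 := hx.root_int q.1
        have h2 := hx.root_int q.2
        rw [show x q.1 = - x q.2 by linear_combination h, hne.neg_pow, hko.neg_pow] at h1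
        have h3 : (2 * (a : K)) * x q.2 ^ k = 0 := by linear_combination h2 - h1
        exact mul_ne_zero (mul_ne_zero two_ne_zero haK) (pow_ne_zero _ (hx.ne_zero hk (by omega) hbK _)) h3
      exact_mod_cast this
    have hroot : ∀ i, x i ^ k * (x i ^ r + a) = - b := by
      intro i
      have := hx.root_int i
      have h6 : x i ^ n = x i ^ k * x i ^ r := by rw [hkr, pow_add]
      rw [h6] at this
      linear_combination this
    have hV0 : V ≠ 0 := by
      have : (V : K) ≠ 0 := by
        rw [← hV]
        refine Finset.prod_ne_zero_iff.2 fun q _ => hs_ne_zero (hx.ne_zero hk (by omega) hbK _) hc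
          (by exact_mod_cast hk.ne') fun h => ?_
        have h1 := hroot q.1
        have h2 := hroot q.2
        rw [h] at h1
        have := mul_left_cancel₀ (pow_ne_zero _ (hx.ne_zero hk (by omega) hbK _)) (h1.trans h2.symm)
        linear_combination this
      exact_mod_cast this
    refine ⟨U, V, hU0, hV0, ?_, ?_, ?_⟩
    · rw [← map_intCast ι, ← hU, map_prod]; simp
    · rw [← map_intCast ι, ← hV, map_prod]
      exact Finset.prod_congr rfl fun q _ => hs_map ι _ _ _
    · intro p hp hpn
      obtain ⟨A, hA⟩ := exists_val (K := K) p hp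
      have h2 := val_coprime A p hp hA 2 fun h => hpn (((h.mul_right _).mul_right _).mul_right _)
      have hkv := val_coprime A p hp hA k fun h => hpn (((h.mul_left _).mul_right _).mul_right _)
      have hrv := val_coprime A p hp hA r fun h => hpn ((h.mul_left _).mul_right _)
      have hav := val_coprime A p hp hA a fun h => hpn (h.mul_left _)
      have hUV : A.valuation (U : K) = A.valuation (V : K) := by
        rw [← hU, ← hV, map_prod, map_prod]
        refine Finset.prod_congr rfl fun q hq => ?_
        exact local_unit A hk hr hkr hko hro hc a b hb (by exact_mod_cast h2) (by exact_mod_cast hkv)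
          (by exact_mod_cast hrv) hav _ _ (fun h => hO.1 q hq (hinj h)) (hx.root_int _) (hx.root_int _)
      exact le_antisymm (fact_le_of_val_le A p hp hA V U hV0 hU0 hUV.ge)
        (fact_le_of_val_le A p hp hA U V hU0 hV0 hUV.le)
  · left
    intro p hp hpn
    by_contra hodd
    obtain ⟨σ, hσ⟩ := swap_of_odd hx hk hr hkr hko hro hc hb hD φ hφ hφi p hp hpn hodd
    exact hsw σ hσ

lemma bad_aux {n k r : ℕ} {a b : ℤ} (hk : 0 < k) (hr : 0 < r) (hkr : n = k + r)
    (hko : Odd k) (hro : Odd r) (hc : Nat.Coprime k r) (ha : a ≠ 0) (hb : b ≠ 0)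
    (K : Type*) [Field K] [inst : Algebra ℚ K] [hS : IsSplittingField ℚ K (tri n k (a : ℚ) (b : ℚ))]
    (hbad : ¬ Nonempty ((K ≃ₐ[ℚ] K) ≃* Equiv.Perm (Fin n))) :
    BadData n k r a b := by
  by_cases hD : dd k r a b = 0
  · left; intro p _ _; rw [hD]; simp
  have hz : CharZero K := algebraRat.charZero K
  have hi : inst = DivisionRing.toRatAlgebra := Subsingleton.elim _ _
  subst hi
  set f : ℚ[X] := tri n k (a : ℚ) (b : ℚ) with hf
  have hfd : FiniteDimensional ℚ K := IsSplittingField.finiteDimensional K f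
  have : NumberField K := { to_charZero := hz, to_finiteDimensional := hfd }
  have : Normal ℚ K := Normal.of_isSplittingField f
  have hG : IsGalois ℚ K := {}
  have hsp : (tri n k (((a : ℚ) : ℚ) : K) (((b : ℚ) : ℚ) : K)).Splits := by
    have := IsSplittingField.splits K f
    rw [hf, tri_map] at this
    simpa using this
  obtain ⟨x, hx⟩ := exists_isRoots' (K := K) n k (by omega) (a : ℚ) (b : ℚ) hsp
  have hinj := hx.inj hk hr hkr hko hro hb hD
  obtain ⟨φ, hφ⟩ := hx.exists_perm hinj
  have hφi : Function.Injective φ := by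
    rw [injective_iff_map_eq_one]
    intro σ hσ
    have hfix : ∀ i, σ (x i) = x i := by intro i; rw [← hφ, hσ]; rfl
    have : (σ : K →ₐ[ℚ] K) = AlgHom.id ℚ K := by
      apply AlgHom.ext_of_adjoin_eq_top (IsSplittingField.adjoin_rootSet K f)
      intro z hz
      rw [mem_rootSet] at hz
      have h1 := hz.2
      rw [hf, tri] at h1
      obtain ⟨i, rfl⟩ := hx.mem_range (z := z) (by simpa using h1)
      exact hfix i
    ext z
    exact DFunLike.congr_fun this z
  refine bad_core hx hk hr hkr hko hro hc ha hb hD φ hφ hφi fun hs => hbad ⟨?_⟩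
  exact MulEquiv.ofBijective φ ⟨hφi, hs⟩

lemma bad_data {n k r : ℕ} {a b : ℤ} (hk : 0 < k) (hr : 0 < r) (hkr : n = k + r)
    (hko : Odd k) (hro : Odd r) (hc : Nat.Coprime k r) (ha : a ≠ 0) (hb : b ≠ 0)
    (hbad : ¬ Nonempty ((X ^ n + C (a : ℚ) * X ^ k + C (b : ℚ) : ℚ[X]).Gal ≃* Equiv.Perm (Fin n))) :
    BadData n k r a b :=
  bad_aux hk hr hkr hko hro hc ha hb (tri n k (a : ℚ) (b : ℚ)).SplittingField
    (inst := _)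
    (hS := IsSplittingField.splittingField _) hbad

end CTri

namespace CTri

/-- integer divisors -/
def intDiv (N : ℤ) : Finset ℤ :=
  N.natAbs.divisors.image (fun d : ℕ => (d : ℤ)) ∪ N.natAbs.divisors.image (fun d : ℕ => -(d : ℤ))

lemma mem_intDiv {N c : ℤ} (hN : N ≠ 0) (h : c ∣ N) : c ∈ intDiv N := by
  unfold intDiv
  have h1 : c.natAbs ∈ N.natAbs.divisors := by
    rw [Nat.mem_divisors]; exact ⟨Int.natAbs_dvd_natAbs.2 h, by simpa using hN⟩
  rw [Finset.mem_union, Finset.mem_image, Finset.mem_image]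
  rcases Int.natAbs_eq c with h2 | h2
  · left; exact ⟨_, h1, h2.symm⟩
  · right; exact ⟨_, h1, h2.symm⟩

lemma intDiv_card (N : ℤ) : (intDiv N).card ≤ 2 * N.natAbs.divisors.card := by
  unfold intDiv
  refine (Finset.card_union_le _ _).trans ?_
  have h1 := Finset.card_image_le (s := N.natAbs.divisors) (f := fun d : ℕ => (d : ℤ))
  have h2 := Finset.card_image_le (s := N.natAbs.divisors) (f := fun d : ℕ => -(d : ℤ))
  omega

lemma dvd_of_mem_intDiv {N c : ℤ} (h : c ∈ intDiv N) : c ∣ N := by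
  unfold intDiv at h
  rw [Finset.mem_union, Finset.mem_image, Finset.mem_image] at h
  rcases h with ⟨d, hd, rfl⟩ | ⟨d, hd, rfl⟩
  · rw [Int.natCast_dvd]; exact Nat.dvd_of_mem_divisors hd
  · rw [neg_dvd, Int.natCast_dvd]; exact Nat.dvd_of_mem_divisors hd

open Classical in
/-- resolvent for intransitive groups -/
noncomputable def P1 (n : ℕ) : MvPolynomial (Fin n) ℚ[X] :=
  ∏ S ∈ Finset.univ.filter (fun S : Finset (Fin n) => S.Nonempty ∧ S ≠ Finset.univ),
    (MvPolynomial.C (X : ℚ[X]) - ∏ i ∈ S, MvPolynomial.X i)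

lemma P1_symm (n : ℕ) : (P1 n).IsSymmetric := by
  classical
  intro σ
  unfold P1
  rw [map_prod, ← prod_invariant _ (fun S : Finset (Fin n) => (MvPolynomial.C (X : ℚ[X]) - ∏ i ∈ S, MvPolynomial.X i)) 
    (fun S => S.map σ.toEmbedding) (Finset.map_injective _)]
  · apply Finset.prod_congr rfl
    intro S _
    rw [map_sub, MvPolynomial.rename_C, map_prod, Finset.prod_map]
    simp
  · intro S hS
    simp only [Finset.mem_filter, Finset.mem_univ, true_and] at hS ⊢
    refine ⟨hS.1.map, fun h => hS.2 ?_⟩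
    rw [← Finset.card_eq_iff_eq_univ] at h ⊢
    simpa using h

lemma P1_ev {n : ℕ} (e : ℚ) (x : Fin n → ℂ) : evR (P1 n) e x = 0 ↔
    ∃ S : Finset (Fin n), S.Nonempty ∧ S ≠ Finset.univ ∧ (e : ℂ) = ∏ i ∈ S, x i := by
  classical
  unfold evR P1
  rw [MvPolynomial.eval₂_prod, Finset.prod_eq_zero_iff]
  constructor
  · rintro ⟨S, hS, h⟩
    simp only [Finset.mem_filter, Finset.mem_univ, true_and] at hS
    refine ⟨S, hS.1, hS.2, ?_⟩
    rw [MvPolynomial.eval₂_sub, MvPolynomial.eval₂_prod, sub_eq_zero] at h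
    simpa using h
  · rintro ⟨S, h1, h2, h⟩
    refine ⟨S, by simp [h1, h2], ?_⟩
    rw [MvPolynomial.eval₂_sub, MvPolynomial.eval₂_prod, sub_eq_zero]
    simpa using h

lemma r1_count {n k r : ℕ} (hk : 0 < k) (hr : 0 < r) (hkr : n = k + r) (hne : Even n)
    (hc : Nat.Coprime k r) (ε : ℝ) (hε : 0 < ε) : ∃ C : ℝ, 0 ≤ C ∧ ∀ (b : ℤ) (H : ℝ), b ≠ 0 → 1 ≤ H →
      (|b| : ℝ) ≤ H → ∀ T : Finset ℤ, (∀ a ∈ T, ∃ x : Fin n → ℂ, IsRoots n k (a : ℚ) (b : ℚ) x ∧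
        ∃ S : Finset (Fin n), S.Nonempty ∧ S ≠ Finset.univ ∧ ∃ c : ℤ, c ∣ b ∧ (c : ℂ) = ∏ i ∈ S, x i) →
      (T.card : ℝ) ≤ C * H ^ ε := by
  classical
  obtain ⟨D, hD⟩ := resolvent_count k hk (by omega) (P1 n) (P1_symm n)
  obtain ⟨C0, hC0, hdiv⟩ := divisors_card_le ε hε
  refine ⟨D * (2 * C0), by positivity, ?_⟩
  intro b H hb hH hbH T hT
  choose! x hx S hS1 hS2 c hcb hcS using hT
  have h1 : T.card ≤ D * (intDiv b).card := by
    apply Finset.card_le_mul_card_image_of_maps_to (f := c) (fun a ha => mem_intDiv hb (hcb a ha))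
    intro c0 hc0
    have hc0b := dvd_of_mem_intDiv hc0
    have hc00 : c0 ≠ 0 := by rintro rfl; exact hb (zero_dvd_iff.1 hc0b)
    apply hD (c0 : ℚ) X (Polynomial.C (b : ℚ)) (by simp) (by rw [natDegree_C]; omega)
    · obtain ⟨y0, hy0⟩ := r1_nonvanish hk hr hkr hne hc b c0 hb hc00
      refine ⟨y0, fun x hx h0 => ?_⟩
      obtain ⟨S, q1, q2, q3⟩ := (P1_ev _ _).1 h0
      rw [eval_X, eval_C] at hx
      exact hy0 x hx S q1 q2 (by simpa using q3)
    · intro a ha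
      rw [Finset.mem_filter] at ha
      refine ⟨x a, ?_, (P1_ev _ _).2 ⟨S a, hS1 a ha.1, hS2 a ha.1, ?_⟩⟩
      · rw [eval_X, eval_C]; exact hx a ha.1
      · rw [← hcS a ha.1, ha.2]; simp
  have h2 := intDiv_card b
  have h3 := hdiv b.natAbs (Int.natAbs_pos.2 hb)
  have h4 : ((b.natAbs : ℕ) : ℝ) ≤ H := by rw [Nat.cast_natAbs]; push_cast; exact hbH
  have h5 : ((b.natAbs : ℕ) : ℝ) ^ ε ≤ H ^ ε := Real.rpow_le_rpow (by positivity) h4 hε.le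
  have h6 : (T.card : ℝ) ≤ D * (2 * (b.natAbs.divisors.card : ℝ)) := by
    exact_mod_cast h1.trans (Nat.mul_le_mul_left _ h2)
  refine h6.trans ?_
  rw [mul_assoc, mul_assoc]
  gcongr
  exact h3.trans (by gcongr)

open Classical in
/-- resolvent for transitive but not doubly transitive groups -/
noncomputable def P3 (n k : ℕ) : MvPolynomial (Fin n) ℚ[X] :=
  ∏ O ∈ Finset.univ.filter (fun O : Finset (Fin n × Fin n) => OutReg n O),
    ((∏ q ∈ O, (MvPolynomial.X q.1 + MvPolynomial.X q.2) ^ (n - 1)) -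
      MvPolynomial.C (X : ℚ[X]) * ∏ q ∈ O, hs k (MvPolynomial.X q.1) (MvPolynomial.X q.2))

lemma OutReg.map {n : ℕ} {O : Finset (Fin n × Fin n)} (h : OutReg n O) (σ : Equiv.Perm (Fin n)) :
    OutReg n (O.map (Equiv.prodCongr σ σ).toEmbedding) := by
  obtain ⟨h1, δ, h2, h3, h4⟩ := h
  refine ⟨?_, δ, h2, h3, ?_⟩
  · intro q hq
    rw [Finset.mem_map] at hq
    obtain ⟨q', hq', rfl⟩ := hq
    simpa using h1 q' hq'
  · intro i
    rw [← h4 (σ.symm i), Finset.filter_map, Finset.card_map]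
    congr 1
    ext q
    simp only [Finset.mem_filter, Function.comp, Equiv.coe_toEmbedding, Equiv.prodCongr_apply, Prod.map_fst,
      Equiv.eq_symm_apply]

lemma P3_symm (n k : ℕ) : (P3 n k).IsSymmetric := by
  classical
  intro σ
  unfold P3
  rw [map_prod, ← prod_invariant _ (fun O : Finset (Fin n × Fin n) => ((∏ q ∈ O, (MvPolynomial.X q.1 + MvPolynomial.X q.2) ^ (n - 1)) -
      MvPolynomial.C (X : ℚ[X]) * ∏ q ∈ O, hs k (MvPolynomial.X q.1) (MvPolynomial.X q.2)))
    (fun O => O.map (Equiv.prodCongr σ σ).toEmbedding) (Finset.map_injective _)]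
  · apply Finset.prod_congr rfl
    intro O _
    rw [map_sub, map_mul, MvPolynomial.rename_C, map_prod, map_prod, Finset.prod_map, Finset.prod_map]
    have := fun u v : MvPolynomial (Fin n) ℚ[X] => hs_map ((MvPolynomial.rename σ : MvPolynomial (Fin n) ℚ[X] →ₐ[ℚ[X]] _) : MvPolynomial (Fin n) ℚ[X] →+* MvPolynomial (Fin n) ℚ[X]) k u v
    simp only [RingHom.coe_coe] at this
    simp [this]
  · intro O hO
    simp only [Finset.mem_filter, Finset.mem_univ, true_and] at hO ⊢
    exact hO.map σ

lemma P3_ev {n k : ℕ} (e : ℚ) (x : Fin n → ℂ) : evR (P3 n k) e x = 0 ↔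
    ∃ O : Finset (Fin n × Fin n), OutReg n O ∧
      ∏ q ∈ O, (x q.1 + x q.2) ^ (n - 1) = (e : ℂ) * ∏ q ∈ O, hs k (x q.1) (x q.2) := by
  classical
  unfold evR P3
  rw [MvPolynomial.eval₂_prod, Finset.prod_eq_zero_iff]
  have key : ∀ O : Finset (Fin n × Fin n), MvPolynomial.eval₂ ((algebraMap ℚ ℂ).comp (evalRingHom e)) x
      ((∏ q ∈ O, (MvPolynomial.X q.1 + MvPolynomial.X q.2) ^ (n - 1)) -
      MvPolynomial.C (X : ℚ[X]) * ∏ q ∈ O, hs k (MvPolynomial.X q.1) (MvPolynomial.X q.2)) = 0 ↔ 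
      ∏ q ∈ O, (x q.1 + x q.2) ^ (n - 1) = (e : ℂ) * ∏ q ∈ O, hs k (x q.1) (x q.2) := by
    intro O
    have := hs_map (MvPolynomial.eval₂Hom ((algebraMap ℚ ℂ).comp (evalRingHom e)) x) k
    simp only [MvPolynomial.coe_eval₂Hom] at this
    rw [MvPolynomial.eval₂_sub, MvPolynomial.eval₂_mul, MvPolynomial.eval₂_prod, MvPolynomial.eval₂_prod, sub_eq_zero]
    simp [this, MvPolynomial.eval₂_pow]
  constructor
  · rintro ⟨O, hO, h⟩
    simp only [Finset.mem_filter, Finset.mem_univ, true_and] at hO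
    exact ⟨O, hO, (key O).1 h⟩
  · rintro ⟨O, h1, h⟩
    exact ⟨O, by simp [h1], (key O).2 h⟩

lemma pow_bound (c : ℝ) (hc : 1 ≤ c) (m : ℕ) (hm : 0 < m) (ε : ℝ) (hε : 0 < ε) :
    ∃ δ : ℝ, 0 < δ ∧ ∀ H : ℝ, 1 ≤ H → ((c * H) ^ m) ^ (4 * δ) = c ^ ε * H ^ ε := by
  have hm' : (0 : ℝ) < m := by exact_mod_cast hm
  refine ⟨ε / (4 * m), by positivity, fun H hH => ?_⟩
  rw [← Real.rpow_natCast, ← Real.rpow_mul (by positivity), ← Real.mul_rpow (by positivity) (by positivity)]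
  congr 1
  field_simp

end CTri

namespace CTri

lemma root_bound {n k : ℕ} (hk : 0 < k) (hkn : k < n) (a b : ℤ) (x : ℂ) (h : x ^ n + (a : ℂ) * x ^ k + b = 0)
    (H : ℝ) (hH : 1 ≤ H) (ha : (|a| : ℝ) ≤ H) (hb : (|b| : ℝ) ≤ H) : ‖x‖ ≤ 3 * H := by
  by_cases h1 : ‖x‖ ≤ 1
  · linarith
  push Not at h1
  have h2 : x ^ n = -((a : ℂ) * x ^ k + b) := by linear_combination h
  have h3 : ‖x‖ ^ n ≤ |(a : ℝ)| * ‖x‖ ^ k + |(b : ℝ)| := by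
    rw [← norm_pow, h2, norm_neg]
    refine (norm_add_le _ _).trans ?_
    rw [norm_mul, norm_pow, Complex.norm_intCast, Complex.norm_intCast]
  have h4 : ‖x‖ ^ k ≤ ‖x‖ ^ (n - 1) := pow_le_pow_right₀ h1.le (by omega)
  have h5 : 1 ≤ ‖x‖ ^ (n - 1) := one_le_pow₀ h1.le
  have h6 : ‖x‖ ^ n = ‖x‖ * ‖x‖ ^ (n - 1) := by rw [← pow_succ']; congr 1; omega
  have h7 : ‖x‖ * ‖x‖ ^ (n - 1) ≤ (2 * H) * ‖x‖ ^ (n - 1) := by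
    rw [← h6]
    refine h3.trans ?_
    have : |(a : ℝ)| * ‖x‖ ^ k ≤ H * ‖x‖ ^ (n - 1) := by gcongr
    nlinarith
  have := le_of_mul_le_mul_right h7 (by linarith)
  linarith

lemma prod_bound {n : ℕ} (hn : 1 ≤ n) (O : Finset (Fin n × Fin n)) (f : Fin n × Fin n → ℂ) (B : ℝ) (hB : 1 ≤ B)
    (h : ∀ q, ‖f q‖ ≤ B ^ n) : ‖∏ q ∈ O, f q‖ ≤ B ^ (n ^ 3) := by
  rw [norm_prod]
  calc ∏ q ∈ O, ‖f q‖ ≤ ∏ _q ∈ O, B ^ n := Finset.prod_le_prod (fun _ _ => norm_nonneg _) (fun q _ => h q)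
    _ = B ^ (n * O.card) := by rw [Finset.prod_const, ← pow_mul]
    _ ≤ B ^ (n ^ 3) := by
      apply pow_le_pow_right₀ hB
      have : O.card ≤ n * n := by
        have := Finset.card_le_univ O
        simpa using this
      calc n * O.card ≤ n * (n * n) := Nat.mul_le_mul_left _ this
        _ = n ^ 3 := by ring

lemma factor_bounds {n k : ℕ} (hkn : k < n) (x y : ℂ) (H : ℝ) (hH : 1 ≤ H) (hx : ‖x‖ ≤ 3 * H)
    (hy : ‖y‖ ≤ 3 * H) : ‖(x + y) ^ (n - 1)‖ ≤ (6 * n * H) ^ n ∧ ‖hs k x y‖ ≤ (6 * n * H) ^ n := by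
  have hn1 : (1 : ℝ) ≤ n := by exact_mod_cast (show 1 ≤ n by omega)
  have h0 : 6 * H ≤ 6 * n * H := by nlinarith
  have h00 : 3 * H ≤ 6 * n * H := by nlinarith
  have h1 : (1 : ℝ) ≤ 6 * n * H := by nlinarith
  constructor
  · rw [norm_pow]
    calc ‖x + y‖ ^ (n - 1) ≤ (6 * n * H) ^ (n - 1) := by
          gcongr
          exact (norm_add_le _ _).trans (by linarith)
      _ ≤ _ := pow_le_pow_right₀ h1 (by omega)
  · unfold hs
    refine (norm_sum_le _ _).trans ?_
    calc ∑ l ∈ Finset.range k, ‖x ^ l * y ^ (k - 1 - l)‖ ≤ ∑ l ∈ Finset.range k, (6 * n * H) ^ (n - 1) / n := by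
          apply Finset.sum_le_sum
          intro l hl
          rw [Finset.mem_range] at hl
          rw [norm_mul, norm_pow, norm_pow, le_div_iff₀ (by linarith)]
          have e1 : ‖x‖ ^ l * ‖y‖ ^ (k - 1 - l) ≤ (3 * H) ^ (k - 1) := by
            calc ‖x‖ ^ l * ‖y‖ ^ (k - 1 - l) ≤ (3 * H) ^ l * (3 * H) ^ (k - 1 - l) := by gcongr
              _ = (3 * H) ^ (k - 1) := by rw [← pow_add]; congr 1; omega
          calc ‖x‖ ^ l * ‖y‖ ^ (k - 1 - l) * n ≤ (3 * H) ^ (k - 1) * n := by gcongr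
            _ ≤ (6 * n * H) ^ (k - 1) * (6 * n * H) := by gcongr; nlinarith
            _ = (6 * n * H) ^ k := by rw [← pow_succ]; congr 1; omega
            _ ≤ _ := pow_le_pow_right₀ h1 (by omega)
      _ = k * ((6 * n * H) ^ (n - 1) / n) := by simp
      _ ≤ n * ((6 * n * H) ^ (n - 1) / n) := by gcongr
      _ = (6 * n * H) ^ (n - 1) := by field_simp
      _ ≤ _ := pow_le_pow_right₀ h1 (by omega)

/-- rationals with smooth numerator and denominator -/
noncomputable def ratSet (N Z : ℕ) : Finset ℚ :=
  (smoothSet N Z ×ˢ smoothSet N Z).image (fun m => (m.1 : ℚ) / m.2) ∪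
    (smoothSet N Z ×ˢ smoothSet N Z).image (fun m => -((m.1 : ℚ) / m.2))

lemma ratSet_card (N Z : ℕ) : (ratSet N Z).card ≤ 2 * (smoothSet N Z).card ^ 2 := by
  unfold ratSet
  refine (Finset.card_union_le _ _).trans ?_
  have h1 := Finset.card_image_le (s := smoothSet N Z ×ˢ smoothSet N Z) (f := fun m => (m.1 : ℚ) / m.2)
  have h2 := Finset.card_image_le (s := smoothSet N Z ×ˢ smoothSet N Z) (f := fun m => -((m.1 : ℚ) / m.2))
  rw [Finset.card_product] at h1 h2
  nlinarith

lemma mem_ratSet (N Z : ℕ) (hN : N ≠ 0) (U V : ℤ) (hU : U ≠ 0) (hV : V ≠ 0) (hUZ : U.natAbs ≤ Z) (hVZ : V.natAbs ≤ Z)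
    (h : ∀ p : ℕ, p.Prime → ¬ p ∣ N → U.natAbs.factorization p = V.natAbs.factorization p) :
    (U : ℚ) / V ∈ ratSet N Z := by
  set e : ℚ := (U : ℚ) / V with he
  have hV' : (V : ℚ) ≠ 0 := by exact_mod_cast hV
  have he0 : e ≠ 0 := div_ne_zero (by exact_mod_cast hU) hV'
  have hnum0 : e.num ≠ 0 := Rat.num_ne_zero.2 he0
  have heq : e.num * V = U * e.den := by
    have h1 : (e.num : ℚ) / e.den = U / V := by rw [Rat.num_div_den, he]
    rw [div_eq_div_iff (by exact_mod_cast e.den_ne_zero) hV'] at h1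
    exact_mod_cast h1
  have heqN : e.num.natAbs * V.natAbs = U.natAbs * e.den := by
    have := congrArg Int.natAbs heq
    simpa [Int.natAbs_mul] using this
  have hcop := e.reduced
  have hnU : e.num.natAbs ∣ U.natAbs := hcop.dvd_of_dvd_mul_right ⟨_, heqN.symm⟩
  have hdV : e.den ∣ V.natAbs := hcop.symm.dvd_of_dvd_mul_left ⟨U.natAbs, by rw [heqN, mul_comm]⟩
  have hUN : U.natAbs ≠ 0 := by simpa
  have hVN : V.natAbs ≠ 0 := by simpa
  have hnN : e.num.natAbs ≠ 0 := by simpa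
  have hfact : ∀ p : ℕ, p.Prime → ¬ p ∣ N → e.num.natAbs.factorization p = e.den.factorization p := by
    intro p hp hpN
    have h1 := congrArg (fun m => m.factorization p) heqN
    simp only [Nat.factorization_mul hnN hVN, Nat.factorization_mul hUN e.den_ne_zero, Finsupp.add_apply] at h1
    have := h p hp hpN
    omega
  have hboth : ∀ p : ℕ, p.Prime → p ∣ e.num.natAbs → p ∣ e.den → False := fun p hp h1 h2 =>
    hp.one_lt.ne' (Nat.dvd_one.1 (hcop.gcd_eq_one ▸ Nat.dvd_gcd h1 h2))
  have hm1 : e.num.natAbs ∈ smoothSet N Z := by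
    unfold smoothSet
    rw [Finset.mem_filter, Finset.mem_Icc]
    refine ⟨⟨Nat.pos_of_ne_zero hnN, (Nat.le_of_dvd (Nat.pos_of_ne_zero hUN) hnU).trans hUZ⟩, ?_⟩
    intro p hp
    have hpp := Nat.prime_of_mem_primeFactors hp
    have hpd := Nat.dvd_of_mem_primeFactors hp
    refine Nat.mem_primeFactors.2 ⟨hpp, ?_, hN⟩
    by_contra hpN
    refine hboth p hpp hpd ?_
    have := hpp.factorization_pos_of_dvd hnN hpd
    rw [hfact p hpp hpN] at this
    exact Nat.dvd_of_factorization_pos this.ne'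
  have hm2 : e.den ∈ smoothSet N Z := by
    unfold smoothSet
    rw [Finset.mem_filter, Finset.mem_Icc]
    refine ⟨⟨e.den_pos, (Nat.le_of_dvd (Nat.pos_of_ne_zero hVN) hdV).trans hVZ⟩, ?_⟩
    intro p hp
    have hpp := Nat.prime_of_mem_primeFactors hp
    have hpd := Nat.dvd_of_mem_primeFactors hp
    refine Nat.mem_primeFactors.2 ⟨hpp, ?_, hN⟩
    by_contra hpN
    refine hboth p hpp ?_ hpd
    have := hpp.factorization_pos_of_dvd e.den_ne_zero hpd
    rw [← hfact p hpp hpN] at this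
    exact Nat.dvd_of_factorization_pos this.ne'
  unfold ratSet
  rw [Finset.mem_union, Finset.mem_image, Finset.mem_image]
  rcases Int.natAbs_eq e.num with h2 | h2
  · left
    refine ⟨(e.num.natAbs, e.den), Finset.mem_product.2 ⟨hm1, hm2⟩, ?_⟩
    have : ((e.num.natAbs : ℕ) : ℚ) = e.num := by
      have := congrArg (Int.cast : ℤ → ℚ) h2
      rw [this, Int.cast_natCast]
    simp only [this, Rat.num_div_den]
  · right
    refine ⟨(e.num.natAbs, e.den), Finset.mem_product.2 ⟨hm1, hm2⟩, ?_⟩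
    have : ((e.num.natAbs : ℕ) : ℚ) = - e.num := by
      have : ((e.num.natAbs : ℕ) : ℤ) = - e.num := by omega
      have := congrArg (Int.cast : ℤ → ℚ) this
      rwa [Int.cast_natCast, Int.cast_neg] at this
    simp only [this, neg_div, Rat.num_div_den, neg_neg]

lemma r3_count {n k r : ℕ} (hk : 0 < k) (hr : 0 < r) (hkr : n = k + r) (hne : Even n)
    (hc : Nat.Coprime k r) (ε : ℝ) (hε : 0 < ε) : ∃ C : ℝ, 0 ≤ C ∧ ∀ (a : ℤ) (H : ℝ), a ≠ 0 → 1 ≤ H →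
      (|a| : ℝ) ≤ H → ∀ T : Finset ℤ, (∀ b ∈ T, (|b| : ℝ) ≤ H ∧
      ∃ x : Fin n → ℂ, IsRoots n k (a : ℚ) (b : ℚ) x ∧ ∃ O : Finset (Fin n × Fin n), OutReg n O ∧
    ∃ U V : ℤ, U ≠ 0 ∧ V ≠ 0 ∧ (U : ℂ) = ∏ q ∈ O, (x q.1 + x q.2) ^ (n - 1) ∧
      (V : ℂ) = ∏ q ∈ O, hs k (x q.1) (x q.2) ∧
      ∀ p : ℕ, p.Prime → ¬ (p : ℤ) ∣ 2 * k * r * a → U.natAbs.factorization p = V.natAbs.factorization p) →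
      (T.card : ℝ) ≤ C * H ^ ε := by
  classical
  have hkn : k < n := by omega
  have hn1 : (1 : ℝ) ≤ n := by exact_mod_cast (show 1 ≤ n by omega)
  obtain ⟨D, hD⟩ := resolvent_count k hk (by omega) (P3 n k) (P3_symm n k)
  obtain ⟨δ, hδ, hpow⟩ := pow_bound (6 * n) (by linarith) (n ^ 3) (pow_pos (by omega) 3) ε hε
  obtain ⟨C0, hC0, hsm⟩ := smooth_card_le δ hδ
  refine ⟨D * (2 * (C0 ^ 2 * (6 * n) ^ ε)), by positivity, ?_⟩
  intro a H ha hH haH T hT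
  choose! hbH x hx O hO U V hU hV hUe hVe hUV using hT
  set B : ℝ := (6 * n * H) ^ (n ^ 3) with hB
  have hB0 : (1 : ℝ) ≤ 6 * n * H := by nlinarith
  have hB1 : 1 ≤ B := one_le_pow₀ hB0
  set Z : ℕ := ⌊B⌋₊ with hZ
  set N : ℕ := (2 * k * r * a).natAbs with hN
  have hNa : (2 * k * r * a : ℤ) ≠ 0 := by
    refine mul_ne_zero (mul_ne_zero (mul_ne_zero two_ne_zero ?_) ?_) ha
    · exact_mod_cast hk.ne'
    · exact_mod_cast hr.ne'
  have hN0 : N ≠ 0 := by simpa [hN] using hNa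
  have hint : ∀ z : ℤ, ‖(z : ℂ)‖ ≤ B → z.natAbs ≤ Z := by
    intro z hz
    apply Nat.le_floor
    rw [Complex.norm_intCast] at hz
    rw [Nat.cast_natAbs]; push_cast; exact hz
  have hxb : ∀ b ∈ T, ∀ i, ‖x b i‖ ≤ 3 * H := fun b hb i =>
    root_bound hk hkn a b _ ((hx b hb).root_int i) H hH haH (hbH b hb)
  have hmem : ∀ b ∈ T, (U b : ℚ) / V b ∈ ratSet N Z := by
    intro b hb
    apply mem_ratSet N Z hN0 _ _ (hU b hb) (hV b hb)
    · apply hint; rw [hUe b hb]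
      exact prod_bound (by omega) _ (fun q => (x b q.1 + x b q.2) ^ (n - 1)) _ hB0 fun q =>
        (factor_bounds hkn _ _ H hH (hxb b hb _) (hxb b hb _)).1
    · apply hint; rw [hVe b hb]
      exact prod_bound (by omega) _ (fun q => hs k (x b q.1) (x b q.2)) _ hB0 fun q =>
        (factor_bounds hkn _ _ H hH (hxb b hb _) (hxb b hb _)).2
    · intro p hp hpN
      exact hUV b hb p hp fun h => hpN (Int.natCast_dvd.1 h)
  have h1 : T.card ≤ D * (ratSet N Z).card := by
    apply Finset.card_le_mul_card_image_of_maps_to (f := fun b => (U b : ℚ) / V b) hmem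
    intro e he
    apply hD e (Polynomial.C (a : ℚ)) X (by rw [natDegree_C]; omega) (by simp)
    · obtain ⟨y0, hy0⟩ := r3_nonvanish hk hr hkr hne hc a ha e
      refine ⟨y0, fun x hx h0 => ?_⟩
      obtain ⟨O, q1, q2⟩ := (P3_ev _ _).1 h0
      rw [eval_X, eval_C] at hx
      exact hy0 x hx O q1 q2
    · intro b hb
      rw [Finset.mem_filter] at hb
      refine ⟨x b, ?_, (P3_ev _ _).2 ⟨O b, hO b hb.1, ?_⟩⟩
      · rw [eval_X, eval_C]; exact hx b hb.1
      · rw [← hUe b hb.1, ← hVe b hb.1, ← hb.2]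
        have : (V b : ℂ) ≠ 0 := by exact_mod_cast hV b hb.1
        push_cast
        field_simp
  have h2 := ratSet_card N Z
  have h3 := hsm N Z (Nat.pos_of_ne_zero hN0)
  have hNB : (N : ℝ) ≤ B := by
    have e1 : (N : ℝ) = 2 * k * r * |(a : ℝ)| := by
      rw [hN, Nat.cast_natAbs]; push_cast; rw [abs_mul, abs_of_nonneg (by positivity)]
    have hkr' : (k : ℝ) ≤ n := by exact_mod_cast hkn.le
    have hrr' : (r : ℝ) ≤ n := by exact_mod_cast (show r ≤ n by omega)
    have e2 : (N : ℝ) ≤ (6 * n * H) ^ 2 := by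
      rw [e1]
      calc 2 * k * r * |(a : ℝ)| ≤ 2 * n * n * H := by gcongr
        _ ≤ (6 * n * H) ^ 2 := by
          have : 0 ≤ (n : ℝ) * n * H := by positivity
          nlinarith
    refine e2.trans (pow_le_pow_right₀ hB0 ?_)
    calc 2 ≤ 2 ^ 3 := by norm_num
      _ ≤ n ^ 3 := Nat.pow_le_pow_left (by omega) 3
  have hZB : (Z : ℝ) ≤ B := Nat.floor_le (by linarith)
  have h4 : ((smoothSet N Z).card : ℝ) ≤ C0 * (B ^ (2 * δ)) := by
    refine h3.trans ?_
    rw [two_mul, Real.rpow_add (by linarith), ← mul_assoc]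
    gcongr
  have h5 : ((smoothSet N Z).card : ℝ) ^ 2 ≤ C0 ^ 2 * (6 * n) ^ ε * H ^ ε := by
    calc ((smoothSet N Z).card : ℝ) ^ 2 ≤ (C0 * (B ^ (2 * δ))) ^ 2 := by gcongr
      _ = C0 ^ 2 * B ^ (4 * δ) := by
        rw [mul_pow, ← Real.rpow_natCast (B ^ (2 * δ)), ← Real.rpow_mul (by linarith)]
        congr 2; push_cast; ring
      _ = _ := by rw [hB, hpow H hH]; ring
  have h6 : (T.card : ℝ) ≤ D * (2 * ((smoothSet N Z).card : ℝ) ^ 2) := by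
    exact_mod_cast h1.trans (Nat.mul_le_mul_left _ h2)
  refine h6.trans ?_
  rw [mul_assoc, mul_assoc]
  gcongr

end CTri

namespace CTri

lemma sqf_part (D M : ℤ) (hM : M ≠ 0)
    (h : ∀ p : ℕ, p.Prime → ¬ (p : ℤ) ∣ M → Even (D.natAbs.factorization p)) :
    ∃ u y : ℤ, u ∣ M ∧ D = u * y ^ 2 := by
  by_cases hD : D = 0
  · exact ⟨1, 0, one_dvd _, by simp [hD]⟩
  obtain ⟨s, t, hst, hs⟩ := Nat.sq_mul_squarefree D.natAbs
  have hD' : D.natAbs ≠ 0 := by simpa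
  have ht : t ≠ 0 := by rintro rfl; apply hD'; rw [← hst]; simp
  have hsM : s ∣ M.natAbs := by
    rw [← Nat.prod_primeFactors_of_squarefree hs]
    apply Finset.prod_primes_dvd
    · intro p hp; exact (Nat.prime_of_mem_primeFactors hp).prime
    · intro p hp
      have hpp := Nat.prime_of_mem_primeFactors hp
      have hpd := Nat.dvd_of_mem_primeFactors hp
      by_contra hpM
      have h1 := h p hpp fun h' => hpM (Int.natCast_dvd.1 h')
      have h2 : s.factorization p = 1 := by
        have h3 := (Nat.squarefree_iff_factorization_le_one hs.ne_zero).1 hs p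
        have h4 := hpp.factorization_pos_of_dvd hs.ne_zero hpd
        omega
      rw [← hst, Nat.factorization_mul (pow_ne_zero _ ht) hs.ne_zero, Nat.factorization_pow, Finsupp.add_apply, h2,
        Finsupp.smul_apply, smul_eq_mul] at h1
      obtain ⟨m, hm⟩ := h1
      omega
  have hst' : (t : ℤ) ^ 2 * s = (D.natAbs : ℤ) := by exact_mod_cast hst
  rcases Int.natAbs_eq D with h2 | h2
  · refine ⟨s, t, Int.natCast_dvd.2 hsM, ?_⟩
    rw [h2, ← hst']; ring
  · refine ⟨-s, t, (neg_dvd).2 (Int.natCast_dvd.2 hsM), ?_⟩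
    rw [h2, ← hst']; ring

lemma log_bound (δ : ℝ) (hδ : 0 < δ) (B : ℝ) (hB : 1 ≤ B) :
    ((4 * (Nat.log 2 ⌊B⌋₊ + 1) + 16 : ℕ) : ℝ) ≤ (4 / (δ * Real.log 2) + 20) * B ^ δ := by
  have hl2 : 0 < Real.log 2 := Real.log_pos (by norm_num)
  have hfl : ⌊B⌋₊ ≠ 0 := by
    have : 1 ≤ ⌊B⌋₊ := Nat.le_floor (by simpa using hB)
    omega
  have h1 : (2 : ℝ) ^ (Nat.log 2 ⌊B⌋₊) ≤ B := by
    have h := Nat.pow_log_le_self 2 hfl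
    have h' : ((2 ^ (Nat.log 2 ⌊B⌋₊) : ℕ) : ℝ) ≤ ⌊B⌋₊ := by exact_mod_cast h
    push_cast at h'
    exact h'.trans (Nat.floor_le (by linarith))
  have h2 : (Nat.log 2 ⌊B⌋₊ : ℝ) * Real.log 2 ≤ Real.log B := by
    rw [← Real.log_pow]
    exact Real.log_le_log (by positivity) h1
  have h3 := Real.log_le_rpow_div (show 0 ≤ B by linarith) hδ
  have h4 : (Nat.log 2 ⌊B⌋₊ : ℝ) ≤ 1 / (δ * Real.log 2) * B ^ δ := by
    rw [← mul_le_mul_iff_left₀ hl2]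
    refine (h2.trans h3).trans (le_of_eq ?_)
    field_simp
  have h5 : 1 ≤ B ^ δ := Real.one_le_rpow hB hδ.le
  push_cast
  have : (4 / (δ * Real.log 2) + 20) * B ^ δ = 4 * (1 / (δ * Real.log 2) * B ^ δ) + 20 * B ^ δ := by ring
  rw [this]
  linarith

lemma r2_fiber {n k r : ℕ} (hk : 0 < k) (hr : 0 < r) (hkr : n = k + r) (hne : Even n) (b u : ℤ) (hb : b ≠ 0)
    (hu : u ≠ 0) (L : ℕ) (T : Finset ℤ)
    (hL : ∀ a ∈ T, ∀ q1 q2 : ℤ, q2 = a ^ (n / 2) →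
      q1 ^ 2 - (-(u * (r : ℤ) ^ r * (k : ℤ) ^ k)) * q2 ^ 2 = u * (n : ℤ) ^ n * b ^ r →
      |q1| + (|-(u * (r : ℤ) ^ r * (k : ℤ) ^ k)| + 1) * |q2| ≤ 2 ^ L)
    (hT : ∀ a ∈ T, ∃ y : ℤ, dd k r a b = u * y ^ 2) :
    T.card ≤ 2 * ((4 * L + 16) * (u * (n : ℤ) ^ n * b ^ r).natAbs.divisors.card ^ 2) := by
  classical
  choose! y hy using hT
  set f : ℤ → ℤ × ℤ := fun a => (u * y a, a ^ (n / 2)) with hf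
  have hN : -(u * (r : ℤ) ^ r * (k : ℤ) ^ k) ≠ 0 := by
    rw [neg_ne_zero]
    refine mul_ne_zero (mul_ne_zero hu (pow_ne_zero _ ?_)) (pow_ne_zero _ ?_)
    · exact_mod_cast hr.ne'
    · exact_mod_cast hk.ne'
  have hM : u * (n : ℤ) ^ n * b ^ r ≠ 0 := by
    refine mul_ne_zero (mul_ne_zero hu (pow_ne_zero _ ?_)) (pow_ne_zero _ hb)
    exact_mod_cast (show n ≠ 0 by omega)
  have hhalf : ∀ a : ℤ, (a ^ (n / 2)) ^ 2 = a ^ n := by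
    intro a; rw [← pow_mul, Nat.div_mul_cancel hne.two_dvd]
  have hpell := pell_count _ _ hN hM L (T.image f) (by
    intro q hq
    obtain ⟨a, ha, rfl⟩ := Finset.mem_image.1 hq
    have h1 : (u * y a) ^ 2 - (-(u * (r : ℤ) ^ r * (k : ℤ) ^ k)) * (a ^ (n / 2)) ^ 2 = u * (n : ℤ) ^ n * b ^ r := by
      have := hy a ha
      unfold dd at this
      rw [← hkr] at this
      rw [hhalf]
      linear_combination (-u) * this
    exact ⟨h1, hL a ha _ _ rfl h1⟩)
  refine le_trans ?_ (Nat.mul_le_mul_left 2 hpell)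
  apply Finset.card_le_mul_card_image
  intro q hq
  obtain ⟨a0, ha0, rfl⟩ := Finset.mem_image.1 hq
  have : T.filter (fun a => f a = f a0) ⊆ {a0, -a0} := by
    intro a ha
    rw [Finset.mem_filter] at ha
    have h1 : a ^ (n / 2) = a0 ^ (n / 2) := congrArg Prod.snd ha.2
    have h2 : |a| = |a0| := by
      have h3 := congrArg abs h1
      rw [abs_pow, abs_pow] at h3
      exact (pow_left_inj₀ (abs_nonneg _) (abs_nonneg _) (by omega)).1 h3
    rw [Finset.mem_insert, Finset.mem_singleton]
    exact abs_eq_abs.1 h2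
  exact (Finset.card_le_card this).trans Finset.card_le_two

lemma r2_count {n k r : ℕ} (hk : 0 < k) (hr : 0 < r) (hkr : n = k + r) (hne : Even n)
    (ε : ℝ) (hε : 0 < ε) : ∃ C : ℝ, 0 ≤ C ∧ ∀ (b : ℤ) (H : ℝ), b ≠ 0 → 1 ≤ H →
      (|b| : ℝ) ≤ H → ∀ T : Finset ℤ, (∀ a ∈ T, (|a| : ℝ) ≤ H ∧
        (∀ p : ℕ, p.Prime → ¬ (p : ℤ) ∣ n * k * r * b → Even ((dd k r a b).natAbs.factorization p))) →
      (T.card : ℝ) ≤ C * H ^ ε := by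
  classical
  have hn1 : (1 : ℝ) ≤ n := by exact_mod_cast (show 1 ≤ n by omega)
  obtain ⟨δ, hδ, hpow⟩ := pow_bound (4 * n) (by linarith) (2 * n + 3) (by positivity) ε hε
  obtain ⟨C0, hC0, hdiv⟩ := divisors_card_le δ hδ
  have hl2 : 0 < Real.log 2 := Real.log_pos (by norm_num)
  set C1 : ℝ := 4 / (δ * Real.log 2) + 20 with hC1
  have hC1p : 0 < C1 := by positivity
  refine ⟨4 * C1 * C0 ^ 3 * (4 * n) ^ ε, by positivity, ?_⟩
  intro b H hb hH hbH T hT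
  set B : ℝ := (4 * n * H) ^ (2 * n + 3) with hB
  have hB0 : (1 : ℝ) ≤ 4 * n * H := by nlinarith
  have hB1 : 1 ≤ B := one_le_pow₀ hB0
  set L : ℕ := Nat.log 2 ⌊B⌋₊ + 1 with hL
  set M0 : ℤ := n * k * r * b with hM0
  have hM00 : M0 ≠ 0 := by
    refine mul_ne_zero (mul_ne_zero (mul_ne_zero ?_ ?_) ?_) hb
    · exact_mod_cast (show n ≠ 0 by omega)
    · exact_mod_cast hk.ne'
    · exact_mod_cast hr.ne'
  have hkn' : (k : ℝ) ≤ n := by exact_mod_cast (show k ≤ n by omega)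
  have hrn' : (r : ℝ) ≤ n := by exact_mod_cast (show r ≤ n by omega)
  set Y : ℝ := n * H with hY
  have hY1 : 1 ≤ Y := by nlinarith
  have hHY : H ≤ Y := by nlinarith
  have hnY : (n : ℝ) ≤ Y := by nlinarith
  have hYB : 4 * Y ^ (2 * n + 3) ≤ B := by
    have e : B = 4 ^ (2 * n + 3) * Y ^ (2 * n + 3) := by rw [hB, hY, ← mul_pow]; ring
    rw [e]
    gcongr
    calc (4 : ℝ) = 4 ^ 1 := by norm_num
      _ ≤ 4 ^ (2 * n + 3) := pow_le_pow_right₀ (by norm_num) (by omega)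
  have hYle : ∀ m, m ≤ 2 * n + 3 → Y ^ m ≤ Y ^ (2 * n + 3) := fun m hm => pow_le_pow_right₀ hY1 hm
  have hM0Y : |(M0 : ℝ)| ≤ n ^ 3 * H := by
    rw [hM0]; push_cast
    rw [abs_mul, abs_of_nonneg (by positivity)]
    calc (n : ℝ) * k * r * |(b : ℝ)| ≤ n * n * n * H := by gcongr
      _ = n ^ 3 * H := by ring
  have huY : ∀ u : ℤ, u ∣ M0 → |(u : ℝ)| ≤ n ^ 3 * H := by
    intro u hu
    refine le_trans ?_ hM0Y
    have h1 := Int.le_of_dvd (abs_pos.2 hM00) ((abs_dvd_abs u M0).2 hu)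
    exact_mod_cast h1
  have hMb : ∀ u : ℤ, u ∣ M0 → |((u * (n : ℤ) ^ n * b ^ r : ℤ) : ℝ)| ≤ Y ^ (n + 3) := by
    intro u hu
    push_cast
    rw [abs_mul, abs_mul, abs_pow, abs_pow, abs_of_nonneg (show (0 : ℝ) ≤ n by positivity)]
    calc |(u : ℝ)| * n ^ n * |(b : ℝ)| ^ r ≤ (n ^ 3 * H) * n ^ n * H ^ r := by
          gcongr; exact huY u hu
      _ = n ^ (n + 3) * H ^ (r + 1) := by ring
      _ ≤ n ^ (n + 3) * H ^ (n + 3) := by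
          exact mul_le_mul_of_nonneg_left (pow_le_pow_right₀ hH (by omega)) (by positivity)
      _ = Y ^ (n + 3) := by rw [hY, mul_pow]
  have hNb : ∀ u : ℤ, u ∣ M0 → |((-(u * (r : ℤ) ^ r * (k : ℤ) ^ k) : ℤ) : ℝ)| ≤ Y ^ (n + 3) := by
    intro u hu
    push_cast
    rw [abs_neg, abs_mul, abs_mul, abs_pow, abs_pow, abs_of_nonneg (show (0 : ℝ) ≤ r by positivity),
      abs_of_nonneg (show (0 : ℝ) ≤ k by positivity)]
    calc |(u : ℝ)| * r ^ r * (k : ℝ) ^ k ≤ (n ^ 3 * H) * n ^ r * n ^ k := by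
          gcongr; exact huY u hu
      _ = n ^ (n + 3) * H ^ 1 := by rw [hkr]; ring
      _ ≤ n ^ (n + 3) * H ^ (n + 3) := by
          exact mul_le_mul_of_nonneg_left (pow_le_pow_right₀ hH (by omega)) (by positivity)
      _ = Y ^ (n + 3) := by rw [hY, mul_pow]
  have hT2 : ∀ a ∈ T, ∃ u y : ℤ, u ∣ M0 ∧ dd k r a b = u * y ^ 2 := fun a ha => sqf_part _ _ hM00 (hT a ha).2
  choose! u y hu hy using hT2
  have hd : ∀ z : ℤ, z ≠ 0 → |(z : ℝ)| ≤ B → (z.natAbs.divisors.card : ℝ) ≤ C0 * B ^ δ := by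
    intro z hz hzB
    refine (hdiv z.natAbs (Int.natAbs_pos.2 hz)).trans ?_
    gcongr
    rw [Nat.cast_natAbs]; push_cast; exact hzB
  have hB3 : Y ^ (n + 3) ≤ B := by
    have := hYle (n + 3) (by omega)
    have : 0 ≤ Y ^ (2 * n + 3) := by positivity
    linarith
  have hfib : ∀ u0 ∈ intDiv M0, (((T.filter (fun a => u a = u0)).card : ℕ) : ℝ) ≤ 2 * ((C1 * B ^ δ) * (C0 * B ^ δ) ^ 2) := by
    intro u0 hu0
    have hu0d := dvd_of_mem_intDiv hu0
    have hu00 : u0 ≠ 0 := by rintro rfl; exact hM00 (zero_dvd_iff.1 hu0d)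
    have hf := r2_fiber hk hr hkr hne b u0 hb hu00 L (T.filter (fun a => u a = u0)) (by
      intro a ha q1 q2 hq2 hq
      rw [Finset.mem_filter] at ha
      have haH := (hT a ha.1).1
      set N : ℤ := -(u0 * (r : ℤ) ^ r * (k : ℤ) ^ k) with hN
      set M : ℤ := u0 * (n : ℤ) ^ n * b ^ r with hM
      have e1 := hNb u0 hu0d
      have e2 := hMb u0 hu0d
      rw [← hN] at e1
      rw [← hM] at e2
      have e3 : ((q2 : ℝ)) ^ 2 ≤ Y ^ n := by
        rw [hq2]; push_cast
        rw [← pow_mul, Nat.div_mul_cancel hne.two_dvd]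
        calc (a : ℝ) ^ n ≤ |(a : ℝ) ^ n| := le_abs_self _
          _ = |(a : ℝ)| ^ n := abs_pow _ _
          _ ≤ Y ^ n := by gcongr; linarith
      have abs_le_sq : ∀ z : ℤ, |(z : ℝ)| ≤ (z : ℝ) ^ 2 := by
        intro z
        have : |z| ≤ z ^ 2 := by
          rw [← sq_abs]
          have := abs_nonneg z
          nlinarith [Int.le_self_sq |z|]
        exact_mod_cast this
      have e4 : (q1 : ℝ) ^ 2 ≤ Y ^ (n + 3) + Y ^ (n + 3) * Y ^ n := by
        have h1 : (q1 : ℝ) ^ 2 = M + N * q2 ^ 2 := by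
          have : q1 ^ 2 = M + N * q2 ^ 2 := by linarith
          exact_mod_cast this
        rw [h1]
        have h2 : (N : ℝ) * q2 ^ 2 ≤ Y ^ (n + 3) * Y ^ n :=
          mul_le_mul ((le_abs_self _).trans e1) e3 (by positivity) (by positivity)
        linarith [le_abs_self (M : ℝ)]
      have e5 := abs_le_sq q1
      have e6 := abs_le_sq q2
      have e7 : (|(N : ℝ)| + 1) * |(q2 : ℝ)| ≤ (Y ^ (n + 3) + 1) * Y ^ n := by
        gcongr; linarith
      have e8 : Y ^ (n + 3) * Y ^ n = Y ^ (2 * n + 3) := by rw [← pow_add]; congr 1; ring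
      have e9 := hYle (n + 3) (by omega)
      have e10 := hYle n (by omega)
      have e11 : |(q1 : ℝ)| + (|(N : ℝ)| + 1) * |(q2 : ℝ)| ≤ B := by nlinarith
      have e12 : ((|q1| + (|N| + 1) * |q2|).toNat : ℝ) ≤ B := by
        have h0 : 0 ≤ |q1| + (|N| + 1) * |q2| := by positivity
        have : (((|q1| + (|N| + 1) * |q2|).toNat : ℤ) : ℝ) = ((|q1| + (|N| + 1) * |q2| : ℤ) : ℝ) := by
          rw [Int.toNat_of_nonneg h0]
        rw [← Int.cast_natCast, this]; push_cast; exact e11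
      have e13 := Nat.le_floor e12
      have e14 := Nat.lt_pow_succ_log_self (b := 2) (by norm_num) ⌊B⌋₊
      have e15 : (|q1| + (|N| + 1) * |q2|).toNat ≤ 2 ^ L := e13.trans e14.le
      have e16 := Int.self_le_toNat (|q1| + (|N| + 1) * |q2|)
      calc _ ≤ _ := e16
        _ ≤ _ := by exact_mod_cast e15)
      (by
        intro a ha
        rw [Finset.mem_filter] at ha
        exact ⟨y a, by rw [← ha.2]; exact hy a ha.1⟩)
    have hMz : u0 * (n : ℤ) ^ n * b ^ r ≠ 0 := by
      refine mul_ne_zero (mul_ne_zero hu00 (pow_ne_zero _ ?_)) (pow_ne_zero _ hb)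
      exact_mod_cast (show n ≠ 0 by omega)
    have h1 := hd _ hMz ((hMb u0 hu0d).trans hB3)
    have h2 := log_bound δ hδ B hB1
    rw [← hL, ← hC1] at h2
    calc (((T.filter (fun a => u a = u0)).card : ℕ) : ℝ) ≤ 2 * (((4 * L + 16 : ℕ) : ℝ) * ((u0 * (n : ℤ) ^ n * b ^ r).natAbs.divisors.card : ℝ) ^ 2) := by
          exact_mod_cast hf
      _ ≤ _ := by gcongr
  have h1 : (T.card : ℝ) ≤ (2 * ((C1 * B ^ δ) * (C0 * B ^ δ) ^ 2)) * (intDiv M0).card := by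
    rw [Finset.card_eq_sum_card_fiberwise (f := u) (t := intDiv M0) (fun a ha => mem_intDiv hM00 (hu a ha))]
    push_cast
    refine (Finset.sum_le_sum hfib).trans ?_
    rw [Finset.sum_const, nsmul_eq_mul, mul_comm]
  have h2 : ((intDiv M0).card : ℝ) ≤ 2 * (C0 * B ^ δ) := by
    have h3 : ((intDiv M0).card : ℝ) ≤ 2 * (M0.natAbs.divisors.card : ℝ) := by exact_mod_cast intDiv_card M0
    have h4 := hd M0 hM00 (by
      refine hM0Y.trans (le_trans ?_ hB3)
      rw [hY, mul_pow]
      exact mul_le_mul (pow_le_pow_right₀ hn1 (by omega)) (le_self_pow₀ hH (by omega)) (by linarith) (by positivity))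
    linarith
  have hBp : 0 < B ^ δ := Real.rpow_pos_of_pos (by linarith) _
  calc (T.card : ℝ) ≤ (2 * ((C1 * B ^ δ) * (C0 * B ^ δ) ^ 2)) * (2 * (C0 * B ^ δ)) := h1.trans (by gcongr)
    _ = 4 * C1 * C0 ^ 3 * (B ^ δ) ^ 4 := by ring
    _ = 4 * C1 * C0 ^ 3 * B ^ (4 * δ) := by
        rw [← Real.rpow_natCast (B ^ δ), ← Real.rpow_mul (by linarith)]
        congr 2; push_cast; ring
    _ = _ := by rw [hB, hpow H hH]; ring

end CTri

namespace CTri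

/-- The integers of absolute value at most `H`. -/
noncomputable def box (H : ℝ) : Finset ℤ := Finset.Icc (-⌊H⌋) ⌊H⌋

lemma mem_box {H : ℝ} {z : ℤ} : z ∈ box H ↔ (|z| : ℝ) ≤ H := by
  rw [box, Finset.mem_Icc, ← abs_le, Int.le_floor]
  push_cast
  rfl

lemma box_card {H : ℝ} (hH : 1 ≤ H) : ((box H).card : ℝ) ≤ 3 * H := by
  rw [box, Int.card_Icc]
  have h0 : 0 ≤ ⌊H⌋ := Int.floor_nonneg.2 (by linarith)
  have h1 : (((⌊H⌋ + 1 - -⌊H⌋).toNat : ℤ)) = 2 * ⌊H⌋ + 1 := by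
    rw [Int.toNat_of_nonneg (by omega)]; ring
  have h2 : (((⌊H⌋ + 1 - -⌊H⌋).toNat : ℕ) : ℝ) = 2 * (⌊H⌋ : ℝ) + 1 := by exact_mod_cast h1
  rw [h2]
  have := Int.floor_le H
  linarith

lemma fib {H : ℝ} (hH : 1 ≤ H) (P : Finset (ℤ × ℤ)) (f g : ℤ × ℤ → ℤ)
    (hfg : ∀ p q, f p = f q → g p = g q → p = q)
    (hf : ∀ p ∈ P, f p ∈ box H) (M : ℝ) (hM : 0 ≤ M)
    (h : ∀ b : ℤ, ∀ T : Finset ℤ, (∀ z ∈ T, ∃ p ∈ P, f p = b ∧ g p = z) → (T.card : ℝ) ≤ M) :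
    (P.card : ℝ) ≤ 3 * H * M := by
  classical
  rw [Finset.card_eq_sum_card_fiberwise (f := f) (t := box H) hf]
  push_cast
  calc ∑ b ∈ box H, ((P.filter (fun p => f p = b)).card : ℝ) ≤ ∑ b ∈ box H, M := by
        refine Finset.sum_le_sum fun b _ => ?_
        rw [← Finset.card_image_of_injOn (f := g) (s := P.filter (fun p => f p = b))]
        · apply h b
          intro z hz
          obtain ⟨p, hp, rfl⟩ := Finset.mem_image.1 hz
          exact ⟨p, (Finset.mem_filter.1 hp).1, (Finset.mem_filter.1 hp).2, rfl⟩
        · intro p hp q hq hpq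
          have hp2 := (Finset.mem_filter.1 (Finset.mem_coe.1 hp)).2
          have hq2 := (Finset.mem_filter.1 (Finset.mem_coe.1 hq)).2
          exact hfg p q (hp2.trans hq2.symm) hpq
    _ = (box H).card * M := by rw [Finset.sum_const, nsmul_eq_mul]
    _ ≤ 3 * H * M := mul_le_mul_of_nonneg_right (box_card hH) hM

theorem final (n r : ℕ) (hr : 0 < r) (hrn : r < n)
    (hco : Nat.Coprime n r) (hne : Even n) (ε : ℝ) (hε : 0 < ε) :
    ∃ C : ℝ, ∀ H : ℝ, 1 ≤ H →
      (Set.ncard {p : ℤ × ℤ |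
          (|p.1| : ℝ) ≤ H ∧ (|p.2| : ℝ) ≤ H ∧
          ¬ Nonempty ((X ^ n + Polynomial.C ((p.1 : ℚ)) * X ^ (n - r) +
              Polynomial.C ((p.2 : ℚ)) : Polynomial ℚ).Gal ≃* Equiv.Perm (Fin n))} : ℝ)
        ≤ C * H ^ (1 + 1 / (n : ℝ) + ε) := by
  classical
  obtain ⟨k, hkdef⟩ : ∃ k, k = n - r := ⟨_, rfl⟩
  rw [← hkdef]
  have hk : 0 < k := by omega
  have hkr : n = k + r := by omega
  have hc : Nat.Coprime k r := by
    rw [hkr] at hco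
    simpa using hco
  have hro : Odd r := by
    rw [← Nat.not_even_iff_odd]
    intro h
    have := Nat.dvd_gcd hne.two_dvd h.two_dvd
    rw [hco] at this
    omega
  have hko : Odd k := by
    rw [← Nat.not_even_iff_odd]
    intro h
    have h2 := h.add_odd hro
    rw [← hkr] at h2
    exact (Nat.not_even_iff_odd.2 h2) hne
  obtain ⟨C1, hC1, h1⟩ := r1_count hk hr hkr hne hc ε hε
  obtain ⟨C2, hC2, h2⟩ := r2_count hk hr hkr hne ε hε
  obtain ⟨C3, hC3, h3⟩ := r3_count hk hr hkr hne hc ε hε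
  refine ⟨6 + 3 * C1 + 3 * C2 + 3 * C3, fun H hH => ?_⟩
  set B : Set (ℤ × ℤ) := {p : ℤ × ℤ | (|p.1| : ℝ) ≤ H ∧ (|p.2| : ℝ) ≤ H ∧
          ¬ Nonempty ((X ^ n + Polynomial.C ((p.1 : ℚ)) * X ^ k +
              Polynomial.C ((p.2 : ℚ)) : Polynomial ℚ).Gal ≃* Equiv.Perm (Fin n))} with hB
  let Q : Finset (ℤ × ℤ) := box H ×ˢ box H
  have hQ : ∀ p ∈ Q, (|p.1| : ℝ) ≤ H ∧ (|p.2| : ℝ) ≤ H := by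
    intro p hp
    have := Finset.mem_product.1 hp
    exact ⟨mem_box.1 this.1, mem_box.1 this.2⟩
  let Pa := Q.filter (fun p => p.1 = 0)
  let Pb := Q.filter (fun p => p.2 = 0)
  let P1 := Q.filter (fun p => p.2 ≠ 0 ∧ ∃ x : Fin n → ℂ, IsRoots n k (p.1 : ℚ) (p.2 : ℚ) x ∧
        ∃ S : Finset (Fin n), S.Nonempty ∧ S ≠ Finset.univ ∧ ∃ c : ℤ, c ∣ p.2 ∧ (c : ℂ) = ∏ i ∈ S, x i)
  let P2 := Q.filter (fun p => p.2 ≠ 0 ∧ ∀ q : ℕ, q.Prime → ¬ (q : ℤ) ∣ n * k * r * p.2 →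
        Even ((dd k r p.1 p.2).natAbs.factorization q))
  let P3 := Q.filter (fun p => p.1 ≠ 0 ∧
    ∃ x : Fin n → ℂ, IsRoots n k (p.1 : ℚ) (p.2 : ℚ) x ∧ ∃ O : Finset (Fin n × Fin n), OutReg n O ∧
    ∃ U V : ℤ, U ≠ 0 ∧ V ≠ 0 ∧ (U : ℂ) = ∏ q ∈ O, (x q.1 + x q.2) ^ (n - 1) ∧
      (V : ℂ) = ∏ q ∈ O, hs k (x q.1) (x q.2) ∧
      ∀ q : ℕ, q.Prime → ¬ (q : ℤ) ∣ 2 * k * r * p.1 → U.natAbs.factorization q = V.natAbs.factorization q)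
  have hsub : B ⊆ ((Pa ∪ Pb ∪ P1 ∪ P2 ∪ P3 : Finset (ℤ × ℤ)) : Set (ℤ × ℤ)) := by
    rintro p ⟨hp1, hp2, hp3⟩
    have hpQ : p ∈ Q := Finset.mem_product.2 ⟨mem_box.2 hp1, mem_box.2 hp2⟩
    rw [Finset.mem_coe]
    simp only [Finset.mem_union]
    by_cases ha : p.1 = 0
    · exact Or.inl (Or.inl (Or.inl (Or.inl (Finset.mem_filter.2 ⟨hpQ, ha⟩))))
    by_cases hb : p.2 = 0
    · exact Or.inl (Or.inl (Or.inl (Or.inr (Finset.mem_filter.2 ⟨hpQ, hb⟩))))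
    rcases bad_data hk hr hkr hko hro hc ha hb hp3 with h | h | h
    · exact Or.inl (Or.inr (Finset.mem_filter.2 ⟨hpQ, hb, h⟩))
    · exact Or.inl (Or.inl (Or.inr (Finset.mem_filter.2 ⟨hpQ, hb, h⟩)))
    · exact Or.inr (Finset.mem_filter.2 ⟨hpQ, ha, h⟩)
  have hcard : (B.ncard : ℝ) ≤ Pa.card + Pb.card + P1.card + P2.card + P3.card := by
    have e1 := Set.ncard_le_ncard hsub (Finset.finite_toSet _)
    rw [Set.ncard_coe_finset] at e1
    have e2 := Finset.card_union_le (Pa ∪ Pb ∪ P1 ∪ P2) P3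
    have e3 := Finset.card_union_le (Pa ∪ Pb ∪ P1) P2
    have e4 := Finset.card_union_le (Pa ∪ Pb) P1
    have e5 := Finset.card_union_le Pa Pb
    exact_mod_cast (show B.ncard ≤ Pa.card + Pb.card + P1.card + P2.card + P3.card by omega)
  have hfst : ∀ p q : ℤ × ℤ, p.1 = q.1 → p.2 = q.2 → p = q := fun p q h h' => Prod.ext h h'
  have hsnd : ∀ p q : ℤ × ℤ, p.2 = q.2 → p.1 = q.1 → p = q := fun p q h h' => Prod.ext h' h
  have hle1 : ∀ (T : Finset ℤ) (w : ℤ), (∀ z ∈ T, z = w) → (T.card : ℝ) ≤ 1 := by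
    intro T w hT
    exact_mod_cast Finset.card_le_one.2 (fun x hx y hy => (hT x hx).trans (hT y hy).symm)
  have hm1 : ∀ p ∈ Q, p.1 ∈ box H := fun p hp => (Finset.mem_product.1 hp).1
  have hm2 : ∀ p ∈ Q, p.2 ∈ box H := fun p hp => (Finset.mem_product.1 hp).2
  have hHe : 0 < H ^ ε := Real.rpow_pos_of_pos (by linarith) _
  have bPa : (Pa.card : ℝ) ≤ 3 * H * 1 := by
    refine fib hH Pa Prod.snd Prod.fst hsnd (fun p hp => hm2 p (Finset.mem_filter.1 hp).1) 1 zero_le_one ?_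
    intro b T hT
    refine hle1 T 0 fun z hz => ?_
    obtain ⟨p, hp, -, rfl⟩ := hT z hz
    exact (Finset.mem_filter.1 hp).2
  have bPb : (Pb.card : ℝ) ≤ 3 * H * 1 := by
    refine fib hH Pb Prod.fst Prod.snd hfst (fun p hp => hm1 p (Finset.mem_filter.1 hp).1) 1 zero_le_one ?_
    intro b T hT
    refine hle1 T 0 fun z hz => ?_
    obtain ⟨p, hp, -, rfl⟩ := hT z hz
    exact (Finset.mem_filter.1 hp).2
  have bP1 : (P1.card : ℝ) ≤ 3 * H * (C1 * H ^ ε) := by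
    refine fib hH P1 Prod.snd Prod.fst hsnd (fun p hp => hm2 p (Finset.mem_filter.1 hp).1) _ (by positivity) ?_
    intro b T hT
    rcases T.eq_empty_or_nonempty with rfl | ⟨z0, hz0⟩
    · simp; positivity
    obtain ⟨p0, hp0, hb0, -⟩ := hT z0 hz0
    obtain ⟨hpQ, hbn, -⟩ := Finset.mem_filter.1 hp0
    refine h1 b H (hb0 ▸ hbn) hH (hb0 ▸ (hQ p0 hpQ).2) T ?_
    intro z hz
    obtain ⟨p, hp, rfl, rfl⟩ := hT z hz
    exact (Finset.mem_filter.1 hp).2.2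
  have bP2 : (P2.card : ℝ) ≤ 3 * H * (C2 * H ^ ε) := by
    refine fib hH P2 Prod.snd Prod.fst hsnd (fun p hp => hm2 p (Finset.mem_filter.1 hp).1) _ (by positivity) ?_
    intro b T hT
    rcases T.eq_empty_or_nonempty with rfl | ⟨z0, hz0⟩
    · simp; positivity
    obtain ⟨p0, hp0, hb0, -⟩ := hT z0 hz0
    obtain ⟨hpQ, hbn, -⟩ := Finset.mem_filter.1 hp0
    refine h2 b H (hb0 ▸ hbn) hH (hb0 ▸ (hQ p0 hpQ).2) T ?_
    intro z hz
    obtain ⟨p, hp, rfl, rfl⟩ := hT z hz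
    exact ⟨(hQ p (Finset.mem_filter.1 hp).1).1, (Finset.mem_filter.1 hp).2.2⟩
  have bP3 : (P3.card : ℝ) ≤ 3 * H * (C3 * H ^ ε) := by
    refine fib hH P3 Prod.fst Prod.snd hfst (fun p hp => hm1 p (Finset.mem_filter.1 hp).1) _ (by positivity) ?_
    intro b T hT
    rcases T.eq_empty_or_nonempty with rfl | ⟨z0, hz0⟩
    · simp; positivity
    obtain ⟨p0, hp0, hb0, -⟩ := hT z0 hz0
    obtain ⟨hpQ, hbn, -⟩ := Finset.mem_filter.1 hp0
    refine h3 b H (hb0 ▸ hbn) hH (hb0 ▸ (hQ p0 hpQ).1) T ?_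
    intro z hz
    obtain ⟨p, hp, rfl, rfl⟩ := hT z hz
    exact ⟨(hQ p (Finset.mem_filter.1 hp).1).2, (Finset.mem_filter.1 hp).2.2⟩
  have hH1 : H ≤ H * H ^ ε := by
    have := Real.one_le_rpow hH hε.le
    nlinarith
  have hH2 : H * H ^ ε ≤ H ^ (1 + 1 / (n : ℝ) + ε) := by
    have e : H * H ^ ε = H ^ (1 + ε) := by rw [Real.rpow_add (by linarith), Real.rpow_one]
    rw [e]
    apply Real.rpow_le_rpow_of_exponent_le hH
    have : (0 : ℝ) ≤ 1 / n := by positivity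
    linarith
  calc (B.ncard : ℝ) ≤ 6 * H + (3 * C1 + 3 * C2 + 3 * C3) * (H * H ^ ε) := by nlinarith
    _ ≤ (6 + 3 * C1 + 3 * C2 + 3 * C3) * (H * H ^ ε) := by nlinarith
    _ ≤ _ := mul_le_mul_of_nonneg_left hH2 (by positivity)
end CTri

/-- Let `n` and `r` be coprime with `n > r`, `n ≥ 10` and `n` even. Then there are at most
`O_{n,ε}(H^(1+1/n+ε))` pairs `(a_r, a_n)` of integers of absolute value at most `H` such that
the splitting field of the trinomial `X^n + a_r X^(n-r) + a_n` over `ℚ` has Galois group not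
isomorphic to `Sₙ`. -/
theorem count_trinomials_not_symmetric (n r : ℕ) (hr : 0 < r) (hrn : r < n)
    (hco : Nat.Coprime n r) (hn : 10 ≤ n) (hne : Even n) (ε : ℝ) (hε : 0 < ε) :
    ∃ C : ℝ, ∀ H : ℝ, 1 ≤ H →
      (Set.ncard {p : ℤ × ℤ |
          (|p.1| : ℝ) ≤ H ∧ (|p.2| : ℝ) ≤ H ∧
          ¬ Nonempty ((X ^ n + Polynomial.C ((p.1 : ℚ)) * X ^ (n - r) +
              Polynomial.C ((p.2 : ℚ)) : Polynomial ℚ).Gal ≃* Equiv.Perm (Fin n))} : ℝ)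
        ≤ C * H ^ (1 + 1 / (n : ℝ) + ε) :=
  CTri.final n r hr hrn hco hne ε hε
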